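/- arXiv:1011.4492 — 3 statements merged into one kernel-verified Lean document; each statement's English description precedes it below -/
import Mathlib

section
/- Let p ≥ 10^7 be a prime, let χ be a non-principal Dirichlet character modulo p, and let u be a prime with u ≥ e²·log p. Then there exists a positive integer n with gcd(n,u) = 1, χ(n) ≠ 1, and n < 11.0421·p^{1/4}·log p. -/
section Helpers
open Polynomial

theorem kummer_indep {F Ω ι : Type*} [Field F] [Field Ω] [Algebra F Ω] [IsGalois F Ω]
    (k : ℕ) (u : ι → Ω) (hu : ∀ i, u i ≠ 0)
    (hk : ∀ i, ∃ b : F, u i ^ k = algebraMap F Ω b)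
    (hz : ∀ z : Ω, z ^ k = 1 → ∃ c : F, algebraMap F Ω c = z)
    (hne : ∀ i j, i ≠ j → ∀ c : F, u i ≠ algebraMap F Ω c * u j) :
    LinearIndependent F u := by
  have hfix : ∀ (i : ι) (σ : Gal(Ω/F)), ∃ c : F, algebraMap F Ω c = σ (u i) / u i := by
    intro i σ
    apply hz
    obtain ⟨b, hb⟩ := hk i
    rw [div_pow, ← map_pow, hb, AlgEquiv.commutes, ← hb]
    exact div_self (pow_ne_zero _ (hu i))
  let ch : ι → (Gal(Ω/F) →* Ω) := fun i =>
    { toFun := fun σ => σ (u i) / u i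
      map_one' := by simp [hu i]
      map_mul' := by
        intro σ τ
        obtain ⟨c, hc⟩ := hfix i τ
        have h1 : τ (u i) = algebraMap F Ω c * u i := by
          rw [hc]; field_simp [hu i]
        rw [AlgEquiv.mul_apply, ← hc, h1, map_mul, AlgEquiv.commutes]
        ring }
  have hinj : Function.Injective ch := by
    intro i j hij
    by_contra hne'
    have hfixed : ∀ σ : Gal(Ω/F), σ (u i / u j) = u i / u j := by
      intro σ
      have := congrArg (fun f : Gal(Ω/F) →* Ω => f σ) hij
      simp only [ch, MonoidHom.coe_mk, OneHom.coe_mk] at this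
      rw [map_div₀]
      have hj : σ (u j) ≠ 0 := by simpa using hu j
      rw [div_eq_div_iff (hu i) (hu j)] at this
      rw [div_eq_div_iff hj (hu j), this, mul_comm]
    obtain ⟨c, hc⟩ := (InfiniteGalois.mem_range_algebraMap_iff_fixed (k := F) (K := Ω) _).2 hfixed
    exact hne i j hne' c (by rw [hc]; field_simp [hu j])
  have hli := (linearIndependent_monoidHom Gal(Ω/F) Ω).comp ch hinj
  rw [linearIndependent_iff'] at hli ⊢
  intro s g hg i hi
  have := hli s (fun i => algebraMap F Ω (g i) * u i) (by
    funext σ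
    simp only [Finset.sum_apply, Pi.smul_apply, smul_eq_mul, Pi.zero_apply, Function.comp]
    have h2 := congrArg σ hg
    rw [map_sum, map_zero] at h2
    rw [← h2]
    refine Finset.sum_congr rfl fun i _ => ?_
    simp only [ch, MonoidHom.coe_mk, OneHom.coe_mk]
    rw [Algebra.smul_def, map_mul, AlgEquiv.commutes]
    field_simp [hu i]) i hi
  simpa [hu i] using this

theorem root_one_mem {p : ℕ} [Fact p.Prime] {Ω : Type*} [Field Ω] [Algebra (ZMod p) Ω]
    {k d : ℕ} (hkd : k * d = p - 1) (z : Ω) (hz : z ^ k = 1) :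
    ∃ c : ZMod p, algebraMap (ZMod p) Ω c = z := by
  have hp : p.Prime := Fact.out
  have hzp : z ^ p = z := by
    have : p = k * d + 1 := by have := hp.one_lt; omega
    rw [this, pow_succ, pow_mul, hz, one_pow, one_mul]
  have h1 := GaloisField.splits_zmod_X_pow_sub_X p
  have := Splits.mem_range_of_isRoot (f := (X ^ p - X : (ZMod p)[X])) h1
    (i := algebraMap (ZMod p) Ω) (FiniteField.X_pow_card_sub_X_ne_zero _ hp.one_lt) (x := z) (by simp [hzp])
  simpa using this

noncomputable def rp {K : Type*} [Field K] (σ : K) : K[X] := C σ⁻¹ * (X - C (-σ))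

theorem rp_ne {K : Type*} [Field K] {σ : K} (h : σ ≠ 0) : rp σ ≠ 0 := by
  unfold rp
  exact mul_ne_zero (by simpa using h) (X_sub_C_ne_zero _)

theorem rp_mult {K I : Type*} [Field K] [Fintype I] [DecidableEq I] {σ : I → K}
    (hσ : Function.Injective σ) (h0 : ∀ s, σ s ≠ 0) (e : I → ℕ) (s : I) :
    rootMultiplicity (-σ s) (∏ t, rp (σ t) ^ e t) = e s := by
  classical
  rw [← count_roots, roots_prod _ _ (Finset.prod_ne_zero_iff.2 fun t _ => pow_ne_zero _ (rp_ne (h0 t)))]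
  rw [Multiset.count_bind]
  have : ∀ t, (rp (σ t) ^ e t).roots = e t • {-σ t} := by
    intro t
    rw [roots_pow, rp, roots_C_mul _ (by simpa using h0 t), roots_X_sub_C]
  simp only [this, Multiset.count_nsmul, Multiset.count_singleton, neg_inj, hσ.eq_iff]
  rw [Finset.sum_map_val]
  simp

theorem rp_indep {p : ℕ} [Fact p.Prime] {I : Type*} [Fintype I] [DecidableEq I] {k d : ℕ}
    (hk : 0 < k) (hkd : k * d = p - 1)
    {σ : I → ZMod p} (hσ : Function.Injective σ) (h0 : ∀ s, σ s ≠ 0)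
    {Ω : Type*} [Field Ω] [Algebra (FractionRing (ZMod p)[X]) Ω] [IsGalois (FractionRing (ZMod p)[X]) Ω]
    (t : I → Ω) (ht : ∀ s, t s ^ k = algebraMap (FractionRing (ZMod p)[X]) Ω (algebraMap _ _ (rp (σ s)))) :
    LinearIndependent (FractionRing (ZMod p)[X]) (fun e : I → Fin k => ∏ s, t s ^ (e s : ℕ)) := by
  set F := FractionRing (ZMod p)[X]
  have ht0 : ∀ s, t s ≠ 0 := by
    intro s hs
    have h1 := ht s
    rw [hs, zero_pow hk.ne'] at h1
    have := h1.symm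
    rw [map_eq_zero_iff _ (algebraMap F Ω).injective,
      map_eq_zero_iff _ (IsFractionRing.injective (ZMod p)[X] F)] at this
    exact rp_ne (h0 s) this
  have hpow : ∀ e : I → Fin k, (∏ s, t s ^ (e s : ℕ)) ^ k
      = algebraMap F Ω (algebraMap (ZMod p)[X] F (∏ s, rp (σ s) ^ (e s : ℕ))) := by
    intro e
    rw [← Finset.prod_pow, map_prod, map_prod]
    refine Finset.prod_congr rfl fun s _ => ?_
    rw [← pow_mul, mul_comm, pow_mul, ht, map_pow, map_pow]
  apply kummer_indep k
  · intro e
    exact Finset.prod_ne_zero_iff.2 fun s _ => pow_ne_zero _ (ht0 s)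
  · intro e
    exact ⟨_, hpow e⟩
  · intro z hz
    let _ : Algebra (ZMod p) Ω := ((algebraMap F Ω).comp (algebraMap (ZMod p) F)).toAlgebra
    obtain ⟨c, hc⟩ := root_one_mem hkd z hz
    exact ⟨algebraMap (ZMod p) F c, hc⟩
  · intro e e' hee c hc
    apply hee
    obtain ⟨a, b, hb, rfl⟩ := IsFractionRing.div_surjective (A := (ZMod p)[X]) c
    have hb0 : b ≠ 0 := nonZeroDivisors.ne_zero hb
    have hbF : algebraMap (ZMod p)[X] F b ≠ 0 := by
      rwa [Ne, map_eq_zero_iff _ (IsFractionRing.injective (ZMod p)[X] F)]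
    have h1 := congrArg (· ^ k) hc
    simp only [mul_pow] at h1
    rw [hpow e, hpow e', ← map_pow, ← map_mul] at h1
    have h2 := (algebraMap F Ω).injective h1
    rw [div_pow, div_mul_eq_mul_div, eq_div_iff (pow_ne_zero _ hbF), ← map_pow, ← map_pow, ← map_mul, ← map_mul] at h2
    have h3 := IsFractionRing.injective (ZMod p)[X] F h2
    have hP : ∀ e : I → Fin k, (∏ s, rp (σ s) ^ (e s : ℕ)) ≠ 0 := fun e =>
      Finset.prod_ne_zero_iff.2 fun s _ => pow_ne_zero _ (rp_ne (h0 s))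
    have ha0 : a ^ k ≠ 0 := by
      intro h
      rw [h, zero_mul] at h3
      exact mul_ne_zero (hP e) (pow_ne_zero _ hb0) h3
    funext s
    have h4 := congrArg (rootMultiplicity (-σ s)) h3
    rw [rootMultiplicity_mul (mul_ne_zero (hP e) (pow_ne_zero _ hb0)),
      rootMultiplicity_mul (mul_ne_zero ha0 (hP e')),
      rp_mult hσ h0 (fun s => (e s : ℕ)), rp_mult hσ h0 (fun s => (e' s : ℕ)),
      ← count_roots, ← count_roots, roots_pow, roots_pow,
      Multiset.count_nsmul, Multiset.count_nsmul] at h4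
    have h5 := congrArg (· % k) h4
    simp only [Nat.add_mul_mod_self_left, Nat.mul_add_mod] at h5
    rw [Nat.mod_eq_of_lt (e s).2, Nat.mod_eq_of_lt (e' s).2] at h5
    exact Fin.ext h5

def mulMat {I R : Type*} [Fintype I] [CommRing R] {k : ℕ} [NeZero k] (r : I → R)
    (a : (I → Fin k) → R) : Matrix (I → Fin k) (I → Fin k) R :=
  fun f g => a (g - f) * ∏ s, (if k ≤ ((g - f) s : ℕ) + (f s : ℕ) then r s else 1)

theorem mulMat_mulVec {I R S : Type*} [Fintype I] [DecidableEq I] [CommRing R] [CommRing S] [Algebra R S]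
    {k : ℕ} [NeZero k] (r : I → R) (a : (I → Fin k) → R) (t : I → S)
    (ht : ∀ s, t s ^ k = algebraMap R S (r s)) (f : I → Fin k) :
    ∑ g, algebraMap R S (mulMat r a f g) * ∏ s, t s ^ (g s : ℕ)
      = (∑ e, algebraMap R S (a e) * ∏ s, t s ^ (e s : ℕ)) * ∏ s, t s ^ (f s : ℕ) := by
  rw [← Equiv.sum_comp (Equiv.addRight f), Finset.sum_mul]
  refine Finset.sum_congr rfl fun e _ => ?_
  simp only [Equiv.coe_addRight, mulMat, add_sub_cancel_right, map_mul, map_prod, Pi.add_apply]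
  rw [mul_assoc, mul_assoc, ← Finset.prod_mul_distrib, ← Finset.prod_mul_distrib]
  congr 1
  refine Finset.prod_congr rfl fun s _ => ?_
  rw [← pow_add, Fin.val_add_eq_ite]
  split_ifs with h
  · rw [← ht s, ← pow_add]
    congr 1
    omega
  · rw [map_one, one_mul]

theorem det_mul_of_mulVec {S ι : Type*} [CommRing S] [Fintype ι] [DecidableEq ι] (N : Matrix ι ι S)
    (x : ι → S) (h : N.mulVec x = 0) (i : ι) : N.det * x i = 0 := by
  have h5 := congrArg (fun v => N.adjugate.mulVec v) h
  simp only [Matrix.mulVec_mulVec, Matrix.adjugate_mul, Matrix.mulVec_zero] at h5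
  have h6 := congrFun h5 i
  rw [Matrix.smul_mulVec, Matrix.one_mulVec] at h6
  simpa using h6

theorem natDegree_det_le' {K ι : Type*} [Field K] [Fintype ι] [DecidableEq ι] (M : Matrix ι ι K[X])
    (B : ℕ) (h : ∀ i j, (M i j).natDegree ≤ B) : M.det.natDegree ≤ Fintype.card ι * B := by
  rw [Matrix.det_apply]
  refine natDegree_sum_le_of_forall_le _ _ fun σ _ => ?_
  refine (natDegree_smul_le _ _).trans ?_
  refine (natDegree_prod_le _ _).trans ?_
  refine (Finset.sum_le_card_nsmul _ _ B fun i _ => h _ _).trans ?_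
  simp

theorem rp_natDegree_le {K : Type*} [Field K] (σ : K) : (rp σ).natDegree ≤ 1 := by
  unfold rp
  exact (natDegree_C_mul_le _ _).trans (natDegree_X_sub_C_le _)

theorem mulMat_det_ne {p : ℕ} [Fact p.Prime] {I : Type*} [Fintype I] [DecidableEq I] {k d : ℕ} [NeZero k]
    (hkd : k * d = p - 1)
    {σ : I → ZMod p} (hσ : Function.Injective σ) (h0 : ∀ s, σ s ≠ 0)
    (a : (I → Fin k) → (ZMod p)[X]) (ha : a ≠ 0) :
    (mulMat (fun s => rp (σ s)) a).det ≠ 0 := by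
  have hp : p.Prime := Fact.out
  have hk : 0 < k := Nat.pos_of_ne_zero (NeZero.ne k)
  intro hdet
  obtain ⟨v, hv0, hv⟩ := Matrix.exists_vecMul_eq_zero_iff.2 hdet
  let F := FractionRing (ZMod p)[X]
  let Ω := SeparableClosure F
  have : CharP F p := charP_of_injective_algebraMap (IsFractionRing.injective (ZMod p)[X] F) p
  have : CharP Ω p := charP_of_injective_algebraMap (algebraMap F Ω).injective p
  have : NeZero ((k : ℕ) : Ω) := ⟨by
    rw [Ne, CharP.cast_eq_zero_iff Ω p]
    intro h
    have h1 : p ∣ p - 1 := h.trans ⟨d, hkd.symm⟩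
    have h2 := Nat.le_of_dvd (by have := hp.two_le; omega) h1
    have := hp.two_le
    omega⟩
  choose t ht using fun s => IsSepClosed.exists_pow_nat_eq
    (algebraMap F Ω (algebraMap (ZMod p)[X] F (rp (σ s)))) k
  have hli := rp_indep hk hkd hσ h0 t ht
  have hli' : ∀ b : (I → Fin k) → (ZMod p)[X],
      ∑ e, algebraMap (ZMod p)[X] Ω (b e) * ∏ s, t s ^ (e s : ℕ) = 0 → b = 0 := by
    intro b hb
    rw [Fintype.linearIndependent_iff] at hli
    have := hli (fun e => algebraMap (ZMod p)[X] F (b e)) (by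
      rw [← hb]
      refine Finset.sum_congr rfl fun e _ => ?_
      rw [Algebra.smul_def, ← IsScalarTower.algebraMap_apply])
    funext e
    have := this e
    rwa [map_eq_zero_iff _ (IsFractionRing.injective (ZMod p)[X] F)] at this
  have hmv := mulMat_mulVec (S := Ω) (fun s => rp (σ s)) a t (by
    intro s; rw [ht s, ← IsScalarTower.algebraMap_apply])
  have hprod : (∑ e, algebraMap (ZMod p)[X] Ω (a e) * ∏ s, t s ^ (e s : ℕ)) *
      (∑ f, algebraMap (ZMod p)[X] Ω (v f) * ∏ s, t s ^ (f s : ℕ)) = 0 := by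
    rw [Finset.mul_sum]
    have : ∀ f, (∑ e, algebraMap (ZMod p)[X] Ω (a e) * ∏ s, t s ^ (e s : ℕ)) *
      (algebraMap (ZMod p)[X] Ω (v f) * ∏ s, t s ^ (f s : ℕ)) =
      ∑ g, algebraMap (ZMod p)[X] Ω (v f * mulMat (fun s => rp (σ s)) a f g) * ∏ s, t s ^ (g s : ℕ) := by
      intro f
      rw [mul_left_comm, ← hmv f, Finset.mul_sum]
      refine Finset.sum_congr rfl fun g _ => ?_
      rw [map_mul, mul_assoc]
    rw [Finset.sum_congr rfl fun f _ => this f, Finset.sum_comm]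
    refine Finset.sum_eq_zero fun g _ => ?_
    rw [← Finset.sum_mul, ← map_sum]
    have := congrFun hv g
    simp only [Matrix.vecMul, dotProduct, Pi.zero_apply] at this
    rw [this, map_zero, zero_mul]
  rcases mul_eq_zero.1 hprod with h | h
  · exact ha (hli' a h)
  · exact hv0 (hli' v h)

theorem key_indep {p : ℕ} [Fact p.Prime] {I : Type*} [Fintype I] [DecidableEq I] {k d A : ℕ} [NeZero k]
    (hkd : k * d = p - 1)
    {σ : I → ZMod p} (hσ : Function.Injective σ) (h0 : ∀ s, σ s ≠ 0)
    (hsize : k ^ Fintype.card I * (A + Fintype.card I) < p)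
    (a : (I → Fin k) → (ZMod p)[X]) (ha : ∀ e, (a e).natDegree ≤ A)
    (hdvd : X ^ p ∣ ∑ e, a e * ∏ s, (X + C (σ s)) ^ (d * (e s : ℕ))) : a = 0 := by
  have hp : p.Prime := Fact.out
  have hk : 0 < k := Nat.pos_of_ne_zero (NeZero.ne k)
  by_contra hne
  let arev : (I → Fin k) → (ZMod p)[X] := fun e => a (fun s => Fin.rev (e s))
  have harev : arev ≠ 0 := by
    intro h
    apply hne
    funext e
    have := congrFun h (fun s => Fin.rev (e s))
    simpa [arev] using this
  have hdet := mulMat_det_ne hkd hσ h0 arev harev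
  set M := mulMat (fun s => rp (σ s)) arev with hM
  have hdeg : M.det.natDegree < p := by
    refine lt_of_le_of_lt (natDegree_det_le' M (A + Fintype.card I) ?_) (by simpa using hsize)
    intro f g
    refine natDegree_mul_le.trans (add_le_add (ha _) ?_)
    refine (natDegree_prod_le _ _).trans ?_
    refine (Finset.sum_le_card_nsmul _ _ 1 fun s _ => ?_).trans (by simp)
    split_ifs
    · exact rp_natDegree_le _
    · simp
  apply hdet
  let J : Ideal (ZMod p)[X] := Ideal.span {X ^ p}
  let S := (ZMod p)[X] ⧸ J
  have hS : ∀ q : (ZMod p)[X], algebraMap (ZMod p)[X] S q = 0 ↔ X ^ p ∣ q := by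
    intro q
    rw [Ideal.Quotient.algebraMap_eq, Ideal.Quotient.eq_zero_iff_mem, Ideal.mem_span_singleton]
  let π := algebraMap (ZMod p)[X] S
  let w : I → S := fun s => π ((X + C (σ s)) ^ d)
  have hrw : ∀ s, w s ^ k * π (rp (σ s)) = 1 := by
    intro s
    have h1 : (X + C (σ s)) ^ (k * d) * (X + C (σ s)) = X ^ p + C (σ s) := by
      rw [← pow_succ, hkd, Nat.sub_add_cancel hp.one_lt.le, add_pow_char, ← C_pow, ZMod.pow_card]
    have h2 : ((X + C (σ s)) ^ d) ^ k * rp (σ s) = C (σ s)⁻¹ * X ^ p + 1 := by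
      have : rp (σ s) = C (σ s)⁻¹ * (X + C (σ s)) := by simp [rp]
      rw [this, ← pow_mul, mul_comm d k, mul_left_comm, h1, mul_add, ← C_mul, inv_mul_cancel₀ (h0 s), C_1]
    have h3 := congrArg π h2
    rw [map_mul, map_pow, map_add, map_one] at h3
    rw [show w s = π ((X + C (σ s)) ^ d) from rfl, h3, (hS _).2 (Dvd.intro_left _ rfl), zero_add]
  let t : I → S := fun s => w s ^ (k - 1) * π (rp (σ s))
  have htw : ∀ s, t s * w s = 1 := by
    intro s
    rw [← hrw s, ← Nat.sub_add_cancel hk, pow_succ]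
    simp only [t]
    ring
  have ht : ∀ s, t s ^ k = π (rp (σ s)) := by
    intro s
    calc t s ^ k = t s ^ k * (w s ^ k * π (rp (σ s))) := by rw [hrw, mul_one]
      _ = (t s * w s) ^ k * π (rp (σ s)) := by ring
      _ = _ := by rw [htw, one_pow, one_mul]
  have hG : ∑ e, π (arev e) * ∏ s, t s ^ (e s : ℕ) = 0 := by
    have h1 := (hS _).2 hdvd
    rw [map_sum] at h1
    have h2 := congrArg (· * ∏ s, t s ^ (k - 1)) h1
    simp only [zero_mul] at h2
    rw [← h2, Finset.sum_mul]
    rw [← Equiv.sum_comp (Equiv.arrowCongr (Equiv.refl I) Fin.revPerm)]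
    refine Finset.sum_congr rfl fun e _ => ?_
    have he : arev ((Equiv.arrowCongr (Equiv.refl I) Fin.revPerm) e) = a e := by
      simp only [arev]
      congr 1
      funext s
      simp [Equiv.arrowCongr]
    rw [he, map_mul, map_prod, mul_assoc, ← Finset.prod_mul_distrib]
    congr 1
    refine Finset.prod_congr rfl fun s _ => ?_
    have h3 : k - 1 = (e s : ℕ) + (Fin.rev (e s) : ℕ) := by
      have := (e s).2
      rw [Fin.val_rev]; omega
    have h4 : (algebraMap (ZMod p)[X] S) ((X + C (σ s)) ^ (d * (e s : ℕ))) = w s ^ (e s : ℕ) := by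
      rw [pow_mul, map_pow]
    rw [h4, h3, pow_add, ← mul_assoc, ← mul_pow, mul_comm (w s), htw, one_pow, one_mul]
    simp [Equiv.arrowCongr]
  have hmv := mulMat_mulVec (S := S) (fun s => rp (σ s)) arev t ht
  have hvec : (M.map π).mulVec (fun g => ∏ s, t s ^ (g s : ℕ)) = 0 := by
    funext f
    simp only [Matrix.mulVec, dotProduct, Matrix.map_apply, Pi.zero_apply]
    rw [hmv f]
    erw [hG]
    rw [zero_mul]
  have h6 := det_mul_of_mulVec (M.map π) _ hvec 0
  simp only [Pi.zero_apply, Fin.val_zero, pow_zero, Finset.prod_const_one, mul_one] at h6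
  have h7 : π M.det = 0 := by
    rw [RingHom.map_det]
    exact h6
  exact eq_zero_of_dvd_of_natDegree_lt ((hS _).1 h7) (by rwa [natDegree_X_pow])

noncomputable def Wp {K I : Type*} [Field K] [Fintype I] (σ : I → K) : K[X] := ∏ s, (X + C (σ s))

noncomputable def wE {K I : Type*} [Field K] [Fintype I] {k : ℕ} (σ : I → K) (d : ℕ) (e : I → Fin k) : K[X] :=
  ∏ s, (X + C (σ s)) ^ (d * (e s : ℕ))

noncomputable def Vp {K I : Type*} [Field K] [Fintype I] [DecidableEq I] {k : ℕ} (σ : I → K) (d : ℕ)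
    (e : I → Fin k) : K[X] :=
  ∑ s, C ((d * (e s : ℕ) : ℕ) : K) * ∏ t ∈ Finset.univ.erase s, (X + C (σ t))

theorem Wp_natDegree {K I : Type*} [Field K] [Fintype I] (σ : I → K) :
    (Wp σ).natDegree ≤ Fintype.card I := by
  refine (natDegree_prod_le _ _).trans ?_
  simp

theorem Vp_natDegree {K I : Type*} [Field K] [Fintype I] [DecidableEq I] {k : ℕ} (σ : I → K) (d : ℕ)
    (e : I → Fin k) : (Vp σ d e).natDegree ≤ Fintype.card I := by
  refine natDegree_sum_le_of_forall_le _ _ fun s _ => ?_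
  refine (natDegree_C_mul_le _ _).trans ((natDegree_prod_le _ _).trans ?_)
  simp

theorem Wp_mul_deriv {K I : Type*} [Field K] [Fintype I] [DecidableEq I] {k : ℕ} (σ : I → K) (d : ℕ)
    (e : I → Fin k) : Wp σ * derivative (wE σ d e) = Vp σ d e * wE σ d e := by
  rw [wE, derivative_prod_finset, Vp, Finset.mul_sum, Finset.sum_mul]
  refine Finset.sum_congr rfl fun s _ => ?_
  rw [Wp, ← Finset.mul_prod_erase Finset.univ _ (Finset.mem_univ s),
    ← Finset.mul_prod_erase Finset.univ (fun s => (X + C (σ s)) ^ (d * (e s : ℕ))) (Finset.mem_univ s)]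
  rw [derivative_X_add_C_pow]
  rcases Nat.eq_zero_or_pos (d * (e s : ℕ)) with h | h
  · simp [h]
  · obtain ⟨n, hn⟩ := Nat.exists_eq_succ_of_ne_zero h.ne'
    rw [hn, Nat.succ_eq_add_one, Nat.add_sub_cancel, pow_succ]
    ring

noncomputable def dP {K I : Type*} [Field K] [Fintype I] [DecidableEq I] {k : ℕ} (σ : I → K) (d : ℕ)
    (e : I → Fin k) : ℕ → (K[X] →ₗ[K] K[X])
  | 0 => LinearMap.id
  | (l + 1) => (LinearMap.mulLeft K (Wp σ)) ∘ₗ derivative ∘ₗ (dP σ d e l) +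
      (LinearMap.mulLeft K (Vp σ d e - C (l : K) * derivative (Wp σ))) ∘ₗ (dP σ d e l)

theorem dP_succ {K I : Type*} [Field K] [Fintype I] [DecidableEq I] {k : ℕ} (σ : I → K) (d : ℕ)
    (e : I → Fin k) (l : ℕ) (a : K[X]) : dP σ d e (l + 1) a =
      Wp σ * derivative (dP σ d e l a) + (Vp σ d e - C (l : K) * derivative (Wp σ)) * dP σ d e l a := by
  simp [dP]

theorem dP_natDegree {K I : Type*} [Field K] [Fintype I] [DecidableEq I] {k : ℕ} (σ : I → K) (d : ℕ)
    (e : I → Fin k) (l : ℕ) (a : K[X]) :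
    (dP σ d e l a).natDegree ≤ a.natDegree + l * Fintype.card I := by
  induction l with
  | zero => simp [dP]
  | succ l ih =>
    rw [dP_succ]
    have h1 := Wp_natDegree σ
    have h2 := Vp_natDegree σ d e
    have h3 : (C (l : K) * derivative (Wp σ)).natDegree ≤ Fintype.card I :=
      (natDegree_C_mul_le _ _).trans ((natDegree_derivative_le _).trans (by omega))
    have h4 := natDegree_derivative_le (dP σ d e l a)
    refine (natDegree_add_le_of_degree_le (n := a.natDegree + (l + 1) * Fintype.card I) ?_ ?_)
    · refine natDegree_mul_le.trans ?_
      rw [add_mul, one_mul]; omega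
    · refine natDegree_mul_le.trans ?_
      have h5 := (natDegree_sub_le_of_le h2 h3)
      rw [max_self] at h5
      rw [add_mul, one_mul]; omega

theorem dP_spec {K I : Type*} [Field K] [Fintype I] [DecidableEq I] {k : ℕ} (σ : I → K) (d : ℕ)
    (e : I → Fin k) (l : ℕ) (a : K[X]) :
    derivative^[l] (a * wE σ d e) * Wp σ ^ l = wE σ d e * dP σ d e l a := by
  induction l with
  | zero => simp [dP, mul_comm]
  | succ l ih =>
    rw [dP_succ, Function.iterate_succ_apply']
    have h := congrArg derivative ih
    rw [derivative_mul, derivative_mul, derivative_pow] at h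
    have h2 := congrArg (· * Wp σ) h
    have h3 : (derivative^[l] (a * wE σ d e) * (C (l : K) * Wp σ ^ (l - 1) * derivative (Wp σ))) * Wp σ
        = C (l : K) * derivative (Wp σ) * (derivative^[l] (a * wE σ d e) * Wp σ ^ l) := by
      rcases l with _ | l
      · simp
      · rw [Nat.add_sub_cancel, pow_succ]; ring
    rw [add_mul, h3, ih] at h2
    have h4 := Wp_mul_deriv σ d e
    linear_combination h2 + dP σ d e l a * h4

theorem iter_derivative_Xp_mul {p : ℕ} [Fact p.Prime] (j l : ℕ) (f : (ZMod p)[X]) :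
    derivative^[l] ((X ^ p) ^ j * f) = (X ^ p) ^ j * derivative^[l] f := by
  induction l with
  | zero => rfl
  | succ l ih =>
    rw [Function.iterate_succ_apply', ih, Function.iterate_succ_apply', derivative_mul, ← pow_mul,
      derivative_X_pow]
    simp

theorem pow_sum_zero {R : Type*} [CommRing R] [IsDomain R] (y : R) (hy : y ≠ 0) (J : ℕ) (G : Fin J → R)
    (hG : ∀ j, y ∣ G j → G j = 0) (h : ∑ j : Fin J, y ^ (j : ℕ) * G j = 0) : ∀ j, G j = 0 := by
  induction J with
  | zero => exact fun j => j.elim0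
  | succ J ih =>
    rw [Fin.sum_univ_succ] at h
    simp only [Fin.val_zero, pow_zero, one_mul, Fin.val_succ, pow_succ'] at h
    simp only [mul_assoc, ← Finset.mul_sum] at h
    have h0 : G 0 = 0 := by
      apply hG
      rw [eq_neg_of_add_eq_zero_left h]
      exact (Dvd.intro _ rfl).neg_right
    rw [h0, zero_add] at h
    have h1 := (mul_eq_zero.1 h).resolve_left hy
    have := ih (fun j => G j.succ) (fun j => hG _) h1
    intro j
    refine Fin.cases h0 this j

theorem card_mul_le_natDegree {K : Type*} [Field K] [DecidableEq K] (f : K[X]) (S : Finset K) (M : ℕ)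
    (h : ∀ x ∈ S, M ≤ f.rootMultiplicity x) : S.card * M ≤ f.natDegree := by
  classical
  calc S.card * M = ∑ x ∈ S, M := by simp
    _ ≤ ∑ x ∈ S, f.roots.count x := Finset.sum_le_sum fun x hx => by rw [count_roots]; exact h x hx
    _ ≤ Multiset.card f.roots := by
      calc ∑ x ∈ S, f.roots.count x ≤ ∑ x ∈ S ∪ f.roots.toFinset, f.roots.count x :=
            Finset.sum_le_sum_of_subset Finset.subset_union_left
        _ = Multiset.card f.roots := Multiset.sum_count_eq_card (by
            intro a ha; simp [Multiset.mem_toFinset.2 ha])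
    _ ≤ f.natDegree := card_roots' f

noncomputable def plin (K : Type*) [Field K] (A : ℕ) : (Fin A → K) →ₗ[K] K[X] :=
  ∑ i : Fin A, (monomial (i : ℕ)) ∘ₗ (LinearMap.proj i)

theorem plin_coeff {K : Type*} [Field K] (A : ℕ) (c : Fin A → K) (i : Fin A) :
    (plin K A c).coeff (i : ℕ) = c i := by
  simp [plin, LinearMap.sum_apply, coeff_monomial, Fin.val_inj]

theorem plin_natDegree {K : Type*} [Field K] (A : ℕ) (c : Fin A → K) :
    (plin K A c).natDegree ≤ A := by
  simp only [plin, LinearMap.sum_apply]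
  refine natDegree_sum_le_of_forall_le _ _ fun i _ => ?_
  exact (natDegree_monomial_le _).trans i.2.le

theorem stepanov {p : ℕ} [Fact p.Prime] {I : Type*} [Fintype I] [DecidableEq I] {k d A J M : ℕ} [NeZero k]
    (hkd : k * d = p - 1) (hd : 0 < d)
    {σ : I → ZMod p} (hσ : Function.Injective σ) (h0 : ∀ s, σ s ≠ 0)
    (hsize : k ^ Fintype.card I * (A + Fintype.card I) < p)
    (hM : M ≤ p)
    (hcount : M * (A + J + M * Fintype.card I) < J * k ^ Fintype.card I * A)
    (S : Finset (ZMod p)) (hS : ∀ x ∈ S, ∀ s, (x + σ s) ^ d = 1) :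
    S.card * M ≤ p * J + A + p * Fintype.card I := by
  classical
  have hp : p.Prime := Fact.out
  set h := Fintype.card I with hh
  let B := A + J + M * h
  let K := ZMod p
  let pol : ((Fin J × (I → Fin k)) × Fin A → K) → Fin J → (I → Fin k) → K[X] :=
    fun c j e => plin K A (fun i => c ((j, e), i))
  have pol_add : ∀ c c' j e, pol (c + c') j e = pol c j e + pol c' j e := by
    intro c c' j e
    simp only [pol]
    rw [← map_add]; rfl
  have pol_smul : ∀ (r : K) c j e, pol (r • c) j e = r • pol c j e := by
    intro r c j e
    simp only [pol]
    rw [← map_smul]; rfl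
  let Psi : ((Fin J × (I → Fin k)) × Fin A → K) → ℕ → K[X] := fun c l =>
    ∑ j : Fin J, ∑ e : I → Fin k, X ^ (j : ℕ) * dP σ d e l (pol c j e)
  let T : ((Fin J × (I → Fin k)) × Fin A → K) →ₗ[K] (Fin M × Fin B → K) :=
    { toFun := fun c lb => (Psi c lb.1).coeff lb.2
      map_add' := by
        intro c c'
        funext lb
        simp only [Psi, pol_add, map_add, mul_add, Finset.sum_add_distrib, coeff_add, Pi.add_apply]
      map_smul' := by
        intro r c
        funext lb
        simp only [Psi, pol_smul, map_smul, mul_smul_comm, ← Finset.smul_sum, coeff_smul, Pi.smul_apply,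
          RingHom.id_apply] }
  have hker : LinearMap.ker T ≠ ⊥ := by
    apply LinearMap.ker_ne_bot_of_finrank_lt
    rw [Module.finrank_fintype_fun_eq_card, Module.finrank_fintype_fun_eq_card]
    simp only [Fintype.card_prod, Fintype.card_fin, Fintype.card_pi, Finset.prod_const, Finset.card_univ]
    exact hcount
  obtain ⟨c, hc, hc0⟩ := Submodule.exists_mem_ne_zero_of_ne_bot hker
  rw [LinearMap.mem_ker] at hc
  have hPsi : ∀ l < M, Psi c l = 0 := by
    intro l hl
    have hdeg : (Psi c l).natDegree < B := by
      refine lt_of_le_of_lt (b := A + (J - 1) + l * h) ?_ ?_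
      · refine natDegree_sum_le_of_forall_le _ _ fun j _ => ?_
        refine natDegree_sum_le_of_forall_le _ _ fun e _ => ?_
        refine natDegree_mul_le.trans ?_
        rw [natDegree_X_pow]
        have h1 := dP_natDegree σ d e l (pol c j e)
        have h2 := plin_natDegree A (fun i => c ((j, e), i))
        have h3 := j.2
        rw [← hh] at h1
        have h4 : (pol c j e).natDegree ≤ A := h2
        omega
      · have hJ : 0 < J := by
          rcases Nat.eq_zero_or_pos J with h | h
          · subst h; simp at hcount
          · exact h
        have : l * h ≤ M * h := Nat.mul_le_mul_right _ hl.le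
        simp only [B]; omega
    ext b
    rw [coeff_zero]
    by_cases hb : b < B
    · have := congrFun hc (⟨l, hl⟩, ⟨b, hb⟩)
      simpa [T] using this
    · exact coeff_eq_zero_of_natDegree_lt (by omega)
  let G : Fin J → K[X] := fun j => ∑ e, pol c j e * wE σ d e
  let Phi : K[X] := ∑ j : Fin J, (X ^ p) ^ (j : ℕ) * G j
  have hGz : ∀ j, X ^ p ∣ G j → (fun e => pol c j e) = 0 := by
    intro j hj
    exact key_indep hkd hσ h0 hsize (fun e => pol c j e) (fun e => plin_natDegree A _) hj
  have hPhi : Phi ≠ 0 := by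
    intro hz
    have h1 := pow_sum_zero (X ^ p : K[X]) (pow_ne_zero _ X_ne_zero) J G (by
      intro j hj
      have := hGz j hj
      simp only [G]
      refine Finset.sum_eq_zero fun e _ => ?_
      have h2 : pol c j e = 0 := congrFun this e
      rw [h2, zero_mul]) hz
    apply hc0
    funext x
    obtain ⟨⟨j, e⟩, i⟩ := x
    have h2 : pol c j e = 0 := congrFun (hGz j (by rw [h1 j]; exact dvd_zero _)) e
    rw [← plin_coeff A (fun i => c ((j, e), i)) i]
    change (pol c j e).coeff _ = _
    rw [h2]; rfl
  have hder : ∀ l, derivative^[l] Phi * Wp σ ^ l =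
      ∑ j : Fin J, ∑ e, (X ^ p) ^ (j : ℕ) * (wE σ d e * dP σ d e l (pol c j e)) := by
    intro l
    simp only [Phi, G]
    rw [iterate_derivative_sum, Finset.sum_mul]
    refine Finset.sum_congr rfl fun j _ => ?_
    rw [iter_derivative_Xp_mul, iterate_derivative_sum, Finset.mul_sum, Finset.sum_mul]
    refine Finset.sum_congr rfl fun e _ => ?_
    rw [mul_assoc, dP_spec]
  have hmult : ∀ x ∈ S, M ≤ Phi.rootMultiplicity x := by
    intro x hx
    rcases Nat.eq_zero_or_pos M with h | hMpos
    · rw [h]; exact Nat.zero_le _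
    have hroot : ∀ l < M, (derivative^[l] Phi).IsRoot x := by
      intro l hl
      have h1 := congrArg (eval x) (hder l)
      have h2 : eval x (Psi c l) = 0 := by rw [hPsi l hl, eval_zero]
      have hw : ∀ e : I → Fin k, eval x (wE σ d e) = 1 := by
        intro e
        rw [wE, eval_prod]
        refine Finset.prod_eq_one fun s _ => ?_
        rw [eval_pow, eval_add, eval_X, eval_C, pow_mul, hS x hx s, one_pow]
      have hW : eval x (Wp σ) ≠ 0 := by
        rw [Wp, eval_prod]
        refine Finset.prod_ne_zero_iff.2 fun s _ hs => ?_
        rw [eval_add, eval_X, eval_C] at hs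
        have := hS x hx s
        rw [hs, zero_pow hd.ne'] at this
        exact zero_ne_one this
      have h3 : eval x (∑ j : Fin J, ∑ e, (X ^ p) ^ (j : ℕ) * (wE σ d e * dP σ d e l (pol c j e)))
          = eval x (Psi c l) := by
        simp only [Psi, eval_finsetSum, eval_mul, hw, one_mul, eval_pow, eval_X]
        refine Finset.sum_congr rfl fun j _ => Finset.sum_congr rfl fun e _ => ?_
        rw [ZMod.pow_card]
      rw [h3, h2, eval_mul, eval_pow] at h1
      exact (mul_eq_zero.1 h1).resolve_right (pow_ne_zero _ hW)
    have h5 := lt_rootMultiplicity_of_isRoot_iterate_derivative_of_mem_nonZeroDivisors (n := M - 1) hPhi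
      (fun l hl => hroot l (by omega)) (by
        rw [mem_nonZeroDivisors_iff_ne_zero, Ne, ZMod.natCast_eq_zero_iff, hp.dvd_factorial]
        omega)
    omega
  refine (card_mul_le_natDegree Phi S M hmult).trans ?_
  refine natDegree_sum_le_of_forall_le _ _ fun j _ => ?_
  refine natDegree_mul_le.trans ?_
  rw [← pow_mul, natDegree_X_pow, add_assoc]
  refine add_le_add (Nat.mul_le_mul_left _ j.2.le) ?_
  refine natDegree_sum_le_of_forall_le _ _ fun e _ => ?_
  refine natDegree_mul_le.trans (add_le_add (plin_natDegree A _) ?_)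
  refine (natDegree_prod_le _ _).trans ?_
  refine (Finset.sum_le_card_nsmul _ _ p fun s _ => ?_).trans (by simp [mul_comm, hh])
  refine natDegree_pow_le.trans ?_
  rw [natDegree_X_add_C, mul_one]
  have h1 : d * (e s : ℕ) ≤ d * k := Nat.mul_le_mul_left _ (e s).2.le
  have h2 : d * k = p - 1 := by rw [mul_comm, hkd]
  omega

theorem succ_le_three_mul (h : ℕ) : h + 3 ≤ 3 * 2 ^ h := by
  induction h with
  | zero => norm_num
  | succ n ih => rw [pow_succ]; omega

theorem S_bound {p : ℕ} [Fact p.Prime] (hp7 : 10 ^ 7 ≤ p) {k d h M : ℕ} (hk : 2 ≤ k) (hkd : k * d = p - 1)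
    (hh : 1 ≤ h) (h1 : p ≤ 4 * k ^ (2 * h)) (h2 : 2 ≤ h → 4 * k ^ (2 * (h - 1)) < p)
    (hM : 4 * M ^ 2 ≤ p) (S : Finset (ZMod p))
    (hS : ∀ x ∈ S, ∀ s : Fin h, (x + ((s : ℕ) + 1 : ℕ)) ^ d = 1) :
    S.card * M ≤ 4 * h * p := by
  classical
  have hp : p.Prime := Fact.out
  have hd : 0 < d := by
    rcases Nat.eq_zero_or_pos d with h | h
    · subst h; omega
    · exact h
  have : NeZero k := ⟨by omega⟩
  rcases hh.eq_or_lt with rfl | hh2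
  · have hMk : M ≤ k := by
      have h3 : M ^ 2 ≤ k ^ 2 := by rw [mul_one] at h1; omega
      exact (Nat.pow_le_pow_iff_left two_ne_zero).1 h3
    have hcard : S.card ≤ d := by
      have h3 : (S.image (fun x => x + 1)).card ≤ d := by
        have h4 : S.image (fun x => x + 1) ⊆ (nthRoots d (1 : ZMod p)).toFinset := by
          intro y hy
          obtain ⟨x, hx, rfl⟩ := Finset.mem_image.1 hy
          rw [Multiset.mem_toFinset, mem_nthRoots hd]
          simpa using hS x hx 0
        exact (Finset.card_le_card h4).trans ((Multiset.toFinset_card_le _).trans (card_nthRoots _ _))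
      rwa [Finset.card_image_of_injective _ (add_left_injective 1)] at h3
    calc S.card * M ≤ d * k := Nat.mul_le_mul hcard hMk
      _ = p - 1 := by rw [mul_comm, hkd]
      _ ≤ 4 * 1 * p := by omega
  · have h2' := h2 hh2
    set E := k ^ h with hE
    have hEpos : 0 < E := pow_pos (by omega) _
    have hE2 : p ≤ 4 * E ^ 2 := by rw [hE, ← pow_mul, mul_comm h 2]; exact h1
    have hEh : 4 * ((h + 1) * E) < 3 * p := by
      have h3 : h + 1 ≤ 3 * k ^ (h - 2) := by
        have h4 := succ_le_three_mul (h - 2)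
        have h5 : 2 ^ (h - 2) ≤ k ^ (h - 2) := Nat.pow_le_pow_left hk _
        omega
      have h6 : k ^ (2 * (h - 1)) = k ^ (h - 2) * E := by
        rw [hE, ← pow_add]; congr 1; omega
      have h7 : (h + 1) * E ≤ 3 * k ^ (h - 2) * E := Nat.mul_le_mul_right _ h3
      rw [mul_assoc, ← h6] at h7
      omega
    have hdiv : h + 1 ≤ (p - 1) / E := by
      rw [Nat.le_div_iff_mul_le hEpos]; omega
    set A := (p - 1) / E - h with hA
    have hAh : A + h = (p - 1) / E := by omega
    have hsz : E * (A + h) < p := by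
      rw [hAh]
      have := Nat.mul_div_le (p - 1) E
      omega
    have hEA : p ≤ 4 * (E * A) := by
      have h3 : p - 1 < E * ((p - 1) / E + 1) := by
        have := Nat.lt_mul_div_succ (p - 1) hEpos
        exact this
      rw [← hAh] at h3
      have h4 : E * (A + h + 1) = E * A + (h + 1) * E := by ring
      rw [h4] at h3
      omega
    have hME : M ≤ E := by
      have h3 : M ^ 2 ≤ E ^ 2 := by omega
      exact (Nat.pow_le_pow_iff_left two_ne_zero).1 h3
    have hM16 : 16 * M < p := by
      by_contra hc
      push Not at hc
      nlinarith
    have hAp : A ≤ p := by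
      have : (p - 1) / E ≤ p - 1 := Nat.div_le_self _ _
      omega
    have hhp : h < p := by
      have : h + 1 ≤ p - 1 := hdiv.trans (Nat.div_le_self _ _)
      omega
    have hcount : M * (A + 2 * h + M * h) < 2 * h * E * A := by
      have e1 : M * A ≤ E * A := Nat.mul_le_mul_right _ hME
      have e2 : 4 * M ^ 2 * h ≤ p * h := Nat.mul_le_mul_right _ hM
      have e3 : 16 * M * h < p * h := Nat.mul_lt_mul_of_pos_right hM16 (by omega)
      have e4 : p * h ≤ 4 * (E * A) * h := Nat.mul_le_mul_right _ hEA
      have e5 : 2 * (E * A) ≤ h * (E * A) := Nat.mul_le_mul_right _ hh2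
      nlinarith
    have := stepanov (I := Fin h) (k := k) (d := d) (A := A) (J := 2 * h) (M := M) hkd hd
      (σ := fun s => (((s : ℕ) + 1 : ℕ) : ZMod p)) (by
        intro s t hst
        have h3 := (ZMod.natCast_eq_natCast_iff' _ _ _).1 hst
        rw [Nat.mod_eq_of_lt (by have := s.2; omega), Nat.mod_eq_of_lt (by have := t.2; omega)] at h3
        exact Fin.ext (by omega)) (by
        intro s hs
        rw [ZMod.natCast_eq_zero_iff] at hs
        have := Nat.le_of_dvd (by omega) hs
        have := s.2
        omega) (by simpa using hsz) (by omega) (by simpa using hcount) S hS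
    rw [Fintype.card_fin] at this
    refine this.trans ?_
    nlinarith
end Helpers

theorem sum_inv_sq_le (D : ℕ) : ∑ d ∈ Finset.Icc 2 D, (1:ℝ) / (d:ℝ)^2 ≤ 2/3 := by
  have key : ∀ D : ℕ, 1 ≤ D → ∑ d ∈ Finset.Icc 2 D, (1:ℝ) / (d:ℝ)^2 ≤ 2/3 - 1 / ((D:ℝ) + 1/2) := by
    intro D hD
    induction D, hD using Nat.le_induction with
    | base => norm_num
    | succ n hn ih =>
      rw [Finset.sum_Icc_succ_top (by omega)]
      have h1 : (1:ℝ) / ((n+1 : ℕ):ℝ)^2 ≤ 1 / ((n:ℝ) + 1/2) - 1 / (((n+1:ℕ):ℝ) + 1/2) := by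
        push_cast
        have hn0 : (0:ℝ) ≤ n := Nat.cast_nonneg n
        rw [div_sub_div _ _ (by positivity) (by positivity), div_le_div_iff₀ (by positivity) (by positivity)]
        nlinarith
      linarith
  rcases Nat.eq_zero_or_pos D with rfl | h
  · norm_num
  · have := key D h
    have h2 : (0:ℝ) ≤ 1 / ((D:ℝ) + 1/2) := by positivity
    linarith

theorem card_dvd_add_le (N m u : ℕ) (hu : 0 < u) :
    (((Finset.Icc 1 N).filter (fun n => u ∣ n + m)).card : ℝ) ≤ (N:ℝ) / u + 1 := by
  have h1 : ((Finset.Icc 1 N).filter (fun n => u ∣ n + m)).card ≤ N / u + 1 := by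
    have : ((Finset.Icc 1 N).filter (fun n => u ∣ n + m)).card ≤
        (Finset.Icc (m / u + 1) ((N + m) / u)).card := by
      apply Finset.card_le_card_of_injOn (fun n => (n + m) / u)
      · intro n hn
        simp only [Finset.coe_filter, Finset.mem_Icc, Set.mem_ofPred_eq] at hn
        obtain ⟨⟨ha, hb⟩, c, hc⟩ := hn
        simp only [Finset.coe_Icc, Set.mem_Icc]
        refine ⟨?_, Nat.div_le_div_right (by omega)⟩
        rw [hc, Nat.mul_div_cancel_left _ hu]
        apply Nat.div_lt_of_lt_mul
        omega
      · intro a ha b hb hab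
        simp only [Finset.coe_filter, Set.mem_ofPred_eq] at ha hb
        obtain ⟨_, c, hc⟩ := ha
        obtain ⟨_, e, he⟩ := hb
        simp only [hc, he, Nat.mul_div_cancel_left _ hu] at hab
        subst hab
        omega
    refine this.trans ?_
    rw [Nat.card_Icc]
    have h3 : (N + m) / u ≤ N / u + m / u + 1 := by
      rw [Nat.add_div hu]
      split_ifs <;> omega
    have h4 := Nat.zero_le (N / u)
    generalize (N + m) / u = a at *
    generalize N / u = b at *
    generalize m / u = c at *
    omega
  have h2 : ((N / u : ℕ) : ℝ) ≤ (N:ℝ) / u := Nat.cast_div_le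
  have h3 : (((Finset.Icc 1 N).filter (fun n => u ∣ n + m)).card : ℝ) ≤ ((N / u : ℕ) : ℝ) + 1 := by
    exact_mod_cast h1
  linarith

theorem card_dvd_le (N u : ℕ) :
    (((Finset.Icc 1 N).filter (fun n => u ∣ n)).card : ℝ) ≤ (N:ℝ) / u := by
  have : ((Finset.Icc 1 N).filter (fun n => u ∣ n)).card = N / u := Nat.Ioc_filter_dvd_card_eq_div N u
  rw [this]
  exact Nat.cast_div_le

def goodPairs (N Q h u : ℕ) : Finset (ℕ × ℕ) :=
  (Finset.Icc 1 N ×ˢ Finset.Icc 1 Q).filter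
    (fun x => Nat.Coprime x.1 x.2 ∧ ¬ u ∣ x.2 ∧ ∀ s ∈ Finset.Icc 1 h, ¬ u ∣ x.1 + s * x.2)

theorem card_goodPairs (N Q h u : ℕ) (hu : 0 < u) :
    (N:ℝ) * Q / 3 ≤ (goodPairs N Q h u).card + (N:ℝ) * Q / u + h * Q * ((N:ℝ) / u + 1) := by
  classical
  set B : Finset (ℕ × ℕ) := (Finset.Icc 2 Q).biUnion (fun d =>
    ((Finset.Icc 1 N).filter (fun n => d ∣ n)) ×ˢ ((Finset.Icc 1 Q).filter (fun n => d ∣ n))) with hB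
  set C : Finset (ℕ × ℕ) := (Finset.Icc 1 N) ×ˢ ((Finset.Icc 1 Q).filter (fun n => u ∣ n)) with hC
  set D : Finset (ℕ × ℕ) := (Finset.Icc 1 h).biUnion (fun s => (Finset.Icc 1 Q).biUnion (fun q =>
    ((Finset.Icc 1 N).filter (fun n => u ∣ n + s * q)) ×ˢ {q})) with hD
  have hsub : Finset.Icc 1 N ×ˢ Finset.Icc 1 Q ⊆ goodPairs N Q h u ∪ (B ∪ (C ∪ D)) := by
    rintro ⟨n, q⟩ hnq
    have hnq' := hnq
    rw [Finset.mem_product, Finset.mem_Icc, Finset.mem_Icc] at hnq'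
    obtain ⟨⟨a1, a2⟩, b1, b2⟩ := hnq'
    simp only at a1 a2 b1 b2
    by_cases h1 : Nat.Coprime n q
    · by_cases h2 : u ∣ q
      · apply Finset.mem_union_right; apply Finset.mem_union_right; apply Finset.mem_union_left
        simp [hC, a1, a2, b1, b2, h2]
      · by_cases h3 : ∀ s ∈ Finset.Icc 1 h, ¬ u ∣ n + s * q
        · apply Finset.mem_union_left
          exact Finset.mem_filter.2 ⟨hnq, h1, h2, h3⟩
        · push Not at h3
          obtain ⟨s, hs, hs2⟩ := h3
          apply Finset.mem_union_right; apply Finset.mem_union_right; apply Finset.mem_union_right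
          refine Finset.mem_biUnion.2 ⟨s, hs, Finset.mem_biUnion.2 ⟨q, Finset.mem_Icc.2 ⟨b1, b2⟩, ?_⟩⟩
          simp [a1, a2, hs2]
    · apply Finset.mem_union_right; apply Finset.mem_union_left
      have hg0 : 0 < Nat.gcd n q := Nat.gcd_pos_of_pos_left _ a1
      have hg1 : Nat.gcd n q ≠ 1 := h1
      have hgq : Nat.gcd n q ≤ q := Nat.gcd_le_right _ b1
      refine Finset.mem_biUnion.2 ⟨Nat.gcd n q, Finset.mem_Icc.2 ⟨by omega, by omega⟩, ?_⟩
      simp [a1, a2, b1, b2, Nat.gcd_dvd_left, Nat.gcd_dvd_right]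
  have hcard := Finset.card_le_card hsub
  have e1 : (Finset.Icc 1 N ×ˢ Finset.Icc 1 Q).card = N * Q := by simp
  rw [e1] at hcard
  have hBc : (B.card : ℝ) ≤ (N:ℝ) * Q * (2/3) := by
    have t1 : (B.card : ℝ) ≤ ∑ d ∈ Finset.Icc 2 Q, ((((Finset.Icc 1 N).filter (fun n => d ∣ n)) ×ˢ ((Finset.Icc 1 Q).filter (fun n => d ∣ n))).card : ℝ) := by
      exact_mod_cast Finset.card_biUnion_le
    refine t1.trans ?_
    have t2 : ∀ d ∈ Finset.Icc 2 Q, ((((Finset.Icc 1 N).filter (fun n => d ∣ n)) ×ˢ ((Finset.Icc 1 Q).filter (fun n => d ∣ n))).card : ℝ) ≤ (N:ℝ) * Q * (1 / (d:ℝ)^2) := by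
      intro d _
      rw [Finset.card_product]; push_cast
      have := mul_le_mul (card_dvd_le N d) (card_dvd_le Q d) (by positivity) (by positivity)
      refine this.trans (le_of_eq ?_)
      rw [div_mul_div_comm]; ring
    refine (Finset.sum_le_sum t2).trans ?_
    rw [← Finset.mul_sum]
    exact mul_le_mul_of_nonneg_left (sum_inv_sq_le Q) (by positivity)
  have hCc : (C.card : ℝ) ≤ (N:ℝ) * Q / u := by
    rw [hC, Finset.card_product]; push_cast
    rw [mul_div_assoc, Nat.card_Icc]
    exact mul_le_mul_of_nonneg_left (card_dvd_le Q u) (by positivity)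
  have hDc : (D.card : ℝ) ≤ h * Q * ((N:ℝ) / u + 1) := by
    have t1 : D.card ≤ ∑ s ∈ Finset.Icc 1 h, ∑ q ∈ Finset.Icc 1 Q, (((Finset.Icc 1 N).filter (fun n => u ∣ n + s * q)) ×ˢ ({q} : Finset ℕ)).card :=
      Finset.card_biUnion_le.trans (Finset.sum_le_sum fun s _ => Finset.card_biUnion_le)
    have t2 : (D.card : ℝ) ≤ ∑ s ∈ Finset.Icc 1 h, ∑ q ∈ Finset.Icc 1 Q, ((((Finset.Icc 1 N).filter (fun n => u ∣ n + s * q)) ×ˢ ({q} : Finset ℕ)).card : ℝ) := by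
      exact_mod_cast t1
    refine t2.trans ?_
    have t3 : ∀ s ∈ Finset.Icc 1 h, ∑ q ∈ Finset.Icc 1 Q, ((((Finset.Icc 1 N).filter (fun n => u ∣ n + s * q)) ×ˢ ({q} : Finset ℕ)).card : ℝ) ≤ ∑ q ∈ Finset.Icc 1 Q, ((N:ℝ) / u + 1) := by
      intro s _
      apply Finset.sum_le_sum
      intro q _
      rw [Finset.card_product, Finset.card_singleton, mul_one]
      exact card_dvd_add_le N _ u hu
    refine (Finset.sum_le_sum t3).trans (le_of_eq ?_)
    simp
    ring
  have hun : (goodPairs N Q h u ∪ (B ∪ (C ∪ D))).card ≤ (goodPairs N Q h u).card + (B.card + (C.card + D.card)) :=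
    (Finset.card_union_le _ _).trans (Nat.add_le_add_left ((Finset.card_union_le _ _).trans (Nat.add_le_add_left (Finset.card_union_le _ _) _)) _)
  have hfin : (N:ℝ) * Q ≤ (goodPairs N Q h u).card + (B.card + (C.card + D.card)) := by
    exact_mod_cast hcard.trans hun
  linarith

theorem exists_S {p : ℕ} [Fact p.Prime] {N Q h u d : ℕ} (hd : 0 < d) (hu : u.Prime) (hNQ : N * Q < p) (hh : 1 ≤ h)
    (H : ∀ n : ℕ, 0 < n → Nat.gcd n u = 1 → n ≤ N + h * Q → ((n : ℕ) : ZMod p) ^ d = 1) :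
    ∃ S : Finset (ZMod p), S.card = (goodPairs N Q h u).card ∧
      ∀ x ∈ S, ∀ s : Fin h, (x + ((s : ℕ) + 1 : ℕ)) ^ d = 1 := by
  classical
  have hmem : ∀ x ∈ goodPairs N Q h u, 1 ≤ x.1 ∧ x.1 ≤ N ∧ 1 ≤ x.2 ∧ x.2 ≤ Q ∧ Nat.Coprime x.1 x.2 ∧
      ((x.2 : ℕ) : ZMod p) ^ d = 1 ∧ ((x.2 : ℕ) : ZMod p) ≠ 0 ∧ ∀ s ∈ Finset.Icc 1 h, ¬ u ∣ x.1 + s * x.2 := by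
    intro x hx
    obtain ⟨hx1, h1, h2, h3⟩ := Finset.mem_filter.1 hx
    rw [Finset.mem_product, Finset.mem_Icc, Finset.mem_Icc] at hx1
    obtain ⟨⟨a1, a2⟩, b1, b2⟩ := hx1
    have hq : ((x.2 : ℕ) : ZMod p) ^ d = 1 := by
      apply H x.2 b1
      · exact Nat.Coprime.symm ((Nat.Prime.coprime_iff_not_dvd hu).2 h2)
      · nlinarith
    refine ⟨a1, a2, b1, b2, h1, hq, ?_, h3⟩
    intro h0
    rw [h0, zero_pow hd.ne'] at hq
    exact zero_ne_one hq
  refine ⟨(goodPairs N Q h u).image (fun x => ((x.1 : ℕ) : ZMod p) / ((x.2 : ℕ) : ZMod p)), ?_, ?_⟩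
  · apply Finset.card_image_of_injOn
    intro x hx y hy hxy
    obtain ⟨a1, a2, b1, b2, hc, -, hq, -⟩ := hmem x hx
    obtain ⟨a1', a2', b1', b2', hc', -, hq', -⟩ := hmem y hy
    simp only at hxy
    rw [div_eq_div_iff hq hq'] at hxy
    have h1 : ((x.1 * y.2 : ℕ) : ZMod p) = ((y.1 * x.2 : ℕ) : ZMod p) := by
      push_cast; exact hxy
    rw [ZMod.natCast_eq_natCast_iff] at h1
    have h2 : x.1 * y.2 = y.1 * x.2 := by
      apply Nat.ModEq.eq_of_lt_of_lt h1
      · exact (Nat.mul_le_mul a2 b2').trans_lt hNQ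
      · exact (Nat.mul_le_mul a2' b2).trans_lt hNQ
    have e1 : x.1 ∣ y.1 := hc.dvd_of_dvd_mul_right (Dvd.intro _ h2)
    have e2 : y.1 ∣ x.1 := hc'.dvd_of_dvd_mul_right (Dvd.intro _ h2.symm)
    have e3 : x.1 = y.1 := Nat.dvd_antisymm e1 e2
    have e4 : y.2 = x.2 := by
      rw [e3] at h2
      exact Nat.eq_of_mul_eq_mul_left (by omega) h2
    exact Prod.ext e3 e4.symm
  · intro z hz s
    obtain ⟨x, hx, rfl⟩ := Finset.mem_image.1 hz
    obtain ⟨a1, a2, b1, b2, hc, hqd, hq, h3⟩ := hmem x hx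
    have hs : (s : ℕ) + 1 ≤ h := s.2
    have h4 := h3 ((s : ℕ) + 1) (Finset.mem_Icc.2 ⟨by omega, hs⟩)
    have h5 := H (x.1 + ((s : ℕ) + 1) * x.2) (by omega)
      (Nat.Coprime.symm ((Nat.Prime.coprime_iff_not_dvd hu).2 h4))
      (Nat.add_le_add a2 (Nat.mul_le_mul hs b2))
    have h6 : ((x.1 : ℕ) : ZMod p) / ((x.2 : ℕ) : ZMod p) + (((s : ℕ) + 1 : ℕ) : ZMod p)
        = ((x.1 + ((s : ℕ) + 1) * x.2 : ℕ) : ZMod p) / ((x.2 : ℕ) : ZMod p) := by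
      push_cast
      field_simp
    rw [h6, div_pow, h5, hqd, div_one]

theorem char_kernel {p : ℕ} [Fact p.Prime] (χ : DirichletCharacter ℂ p) (hχ : χ ≠ 1) :
    ∃ k d : ℕ, 2 ≤ k ∧ 0 < d ∧ k * d = p - 1 ∧ ∀ x : ZMod p, χ x = 1 → x ^ d = 1 := by
  set f : (ZMod p)ˣ →* ℂˣ := χ.toUnitHom with hf
  have hker : f.ker ≠ ⊤ := by
    intro h
    apply hχ
    rw [MulChar.ext_iff]
    intro a
    have : a ∈ f.ker := by rw [h]; trivial
    rw [MonoidHom.mem_ker] at this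
    have h2 := congrArg Units.val this
    rw [hf, MulChar.coe_toUnitHom] at h2
    rw [h2, MulChar.one_apply_coe]; rfl
  refine ⟨f.ker.index, Nat.card f.ker, ?_, Nat.card_pos, ?_, ?_⟩
  · have h1 : f.ker.index ≠ 1 := fun h => hker (Subgroup.index_eq_one.1 h)
    have h0 : f.ker.index ≠ 0 := Subgroup.index_ne_zero_of_finite
    omega
  · rw [mul_comm, Subgroup.card_mul_index, Nat.card_eq_fintype_card, ZMod.card_units]
  · intro x hx
    have hu : IsUnit x := by
      by_contra h
      rw [MulChar.map_nonunit χ h] at hx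
      exact zero_ne_one hx
    obtain ⟨a, rfl⟩ := hu
    have ha : a ∈ f.ker := by
      rw [MonoidHom.mem_ker]
      apply Units.ext
      rw [hf, MulChar.coe_toUnitHom, hx]; rfl
    have h1 : (⟨a, ha⟩ : f.ker) ^ Nat.card f.ker = 1 := pow_card_eq_one'
    have h2 := congrArg (fun z : f.ker => ((z : (ZMod p)ˣ) : ZMod p)) h1
    simpa using h2

theorem numerics {P L h N Q u M G : ℝ} (hP : 56 ≤ P) (hL : 16 ≤ L) (hh : 1 ≤ h) (hhL : h ≤ 0.7214 * L)
    (hN : 11.0421 * P * L / 2 - 1 ≤ N) (hQ : 11.0421 * P * L / (2 * (h + 2)) - 1 ≤ Q)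
    (hu : 7.38 * L ≤ u) (hM : 0.49 * P ^ 2 ≤ M)
    (hG : N * Q / 3 ≤ G + N * Q / u + h * Q * (N / u + 1)) : 4 * h * P ^ 4 < G * M := by
  have hPL : 896 ≤ P * L := by nlinarith
  have hu0 : 0 < u := by linarith
  have hN1 : 5.5 * (P * L) ≤ N := by linarith
  have hQ1 : 5.4 * (P * L) ≤ Q * (h + 2) := by
    have h1 : 11.0421 * P * L / (2 * (h + 2)) * (h + 2) = 11.0421 * P * L / 2 := by
      field_simp
    have h2 := mul_le_mul_of_nonneg_right hQ (by linarith : (0:ℝ) ≤ h + 2)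
    rw [sub_mul, h1] at h2
    nlinarith
  have hQ0 : 0 < Q := by
    by_contra hc
    push Not at hc
    nlinarith
  have hN0 : 0 < N := by linarith
  have hG1 : N * Q * 0.22 ≤ G := by
    have hi : (h + 1) / u ≤ 0.1063 := by
      rw [div_le_iff₀ hu0]; linarith
    have hj : h ≤ 0.0025 * N := by nlinarith
    have e1 : N * Q / u + h * Q * (N / u + 1) = N * Q * ((h + 1) / u) + Q * h := by ring
    have e2 : N * Q * ((h + 1) / u) ≤ N * Q * 0.1063 := by gcongr
    have e3 : Q * h ≤ Q * (0.0025 * N) := by gcongr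
    have e4 : 0 < N * Q := mul_pos hN0 hQ0
    linarith
  have hNQ : 29.7 * (P * L) ^ 2 ≤ N * Q * (h + 2) := by
    have := mul_le_mul hN1 hQ1 (by positivity) hN0.le
    nlinarith
  have hGM : N * Q * 0.22 * (0.49 * P ^ 2) ≤ G * M :=
    mul_le_mul hG1 hM (by positivity) (le_trans (by positivity) hG1)
  have hhh : h * (h + 2) ≤ 0.62 * L ^ 2 := by nlinarith
  have h2 : 4 * h * P ^ 4 * (h + 2) < N * Q * 0.22 * (0.49 * P ^ 2) * (h + 2) := by
    have a1 : 4 * h * P ^ 4 * (h + 2) ≤ 2.48 * L ^ 2 * P ^ 4 := by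
      have := mul_le_mul_of_nonneg_right hhh (by positivity : 0 ≤ 4 * P ^ 4)
      linarith
    have a2 : 29.7 * (P * L) ^ 2 * (0.22 * 0.49 * P ^ 2) ≤ N * Q * (h + 2) * (0.22 * 0.49 * P ^ 2) := by
      gcongr
    have a3 : 0 < L ^ 2 * P ^ 4 := by positivity
    nlinarith
  have h3 := lt_of_mul_lt_mul_right h2 (by linarith)
  linarith

theorem second_smallest_nonresidue_10_7 (p : ℕ) [Fact p.Prime] (hp : (10:ℕ)^7 ≤ p)
    (χ : DirichletCharacter ℂ p) (hχ : χ ≠ 1)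
    (u : ℕ) (hu : u.Prime) (hu2 : Real.exp 2 * Real.log p ≤ u) :
    ∃ n : ℕ, 0 < n ∧ Nat.gcd n u = 1 ∧ χ (n : ZMod p) ≠ 1 ∧
      (n : ℝ) < 11.0421 * (p : ℝ) ^ ((1:ℝ)/4) * Real.log p := by
  by_contra hcon
  push Not at hcon
  have hpR : (10:ℝ)^7 ≤ p := by exact_mod_cast hp
  have hp0 : (0:ℝ) < p := by linarith
  set L := Real.log p with hLdef
  set P := (p : ℝ) ^ ((1:ℝ)/4) with hPdef
  have hP0 : 0 < P := Real.rpow_pos_of_pos hp0 _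
  have hP4 : P ^ 4 = p := by
    rw [hPdef, ← Real.rpow_natCast, ← Real.rpow_mul hp0.le]; norm_num
  have hP56 : 56 ≤ P := by
    by_contra hc
    push Not at hc
    have : P ^ 4 < 56 ^ 4 := by gcongr
    rw [hP4] at this
    norm_num at this
    linarith
  have hL16 : 16 ≤ L := by
    rw [hLdef, Real.le_log_iff_exp_le hp0]
    have h1 : Real.exp 16 = Real.exp 1 ^ 16 := by rw [← Real.exp_nat_mul]; norm_num
    have h2 : Real.exp 1 ^ 16 ≤ 2.7182818286 ^ 16 := by
      gcongr
      exact Real.exp_one_lt_d9.le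
    rw [h1]
    refine h2.trans (le_trans ?_ hpR)
    norm_num
  have hLP : L ≤ 0.29 * P := by
    have h1 : L = 4 * Real.log P := by rw [hLdef, ← hP4, Real.log_pow]; norm_num
    have h4 : Real.exp 4 = Real.exp 1 ^ 4 := by rw [← Real.exp_nat_mul]; norm_num
    have h5 : (54.59:ℝ) ≤ Real.exp 4 := by
      rw [h4]
      have : (2.7182818283:ℝ) ^ 4 ≤ Real.exp 1 ^ 4 := by
        gcongr
        exact Real.exp_one_gt_d9.le
      refine le_trans ?_ this
      norm_num
    have h2 := Real.log_le_sub_one_of_pos (div_pos hP0 (Real.exp_pos 4))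
    rw [Real.log_div hP0.ne' (Real.exp_pos 4).ne', Real.log_exp] at h2
    have h6 : P / Real.exp 4 ≤ P / 54.59 := by gcongr
    have h7 : P / 54.59 ≤ 0.01832 * P := by
      rw [div_le_iff₀ (by norm_num)]; linarith
    linarith
  have huL : 7.38 * L ≤ u := by
    have h1 : Real.exp 2 = Real.exp 1 ^ 2 := by rw [← Real.exp_nat_mul]; norm_num
    have h2 : (7.38:ℝ) ≤ Real.exp 2 := by
      rw [h1]
      nlinarith [Real.exp_one_gt_d9]
    exact le_trans (mul_le_mul_of_nonneg_right h2 (by linarith)) hu2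
  obtain ⟨k, d, hk, hd, hkd, hker⟩ := char_kernel χ hχ
  have hex : ∃ h : ℕ, p ≤ 4 * k ^ (2 * h) := by
    refine ⟨p, ?_⟩
    have h1 : p < k ^ p := Nat.lt_pow_self (by omega)
    have h2 : k ^ p ≤ k ^ (2 * p) := Nat.pow_le_pow_right (by omega) (by omega)
    omega
  classical
  obtain ⟨h, hh1, hh2⟩ : ∃ h : ℕ, p ≤ 4 * k ^ (2 * h) ∧ ∀ m < h, ¬ p ≤ 4 * k ^ (2 * m) :=
    ⟨Nat.find hex, Nat.find_spec hex, fun m hm => Nat.find_min hex hm⟩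
  have hh : 1 ≤ h := by
    by_contra hc
    have : h = 0 := by omega
    subst this
    norm_num at hh1
    omega
  have hlow : 4 * k ^ (2 * (h - 1)) < p := by
    have := hh2 (h - 1) (by omega)
    omega
  have h2h : (2:ℕ) ^ (2 * h) < p := by
    have e1 : 2 * h = 2 * (h - 1) + 2 := by omega
    have e2 : (2:ℕ) ^ (2 * (h - 1)) ≤ k ^ (2 * (h - 1)) := Nat.pow_le_pow_left hk _
    rw [e1, pow_add]
    omega
  have hhL : (h:ℝ) ≤ 0.7214 * L := by
    have e1 : ((2:ℝ)) ^ (2 * h) < p := by exact_mod_cast h2h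
    have e2 := Real.log_lt_log (by positivity) e1
    rw [Real.log_pow] at e2
    push_cast at e2
    have e3 := Real.log_two_gt_d9
    have e4 : (1:ℝ) ≤ h := by exact_mod_cast hh
    nlinarith
  have hhR : (1:ℝ) ≤ h := by exact_mod_cast hh
  set H : ℝ := 11.0421 * P * L with hH
  have hH0 : 0 < H := by positivity
  obtain ⟨N, hN1, hN2⟩ : ∃ N : ℕ, (N:ℝ) < H / 2 ∧ H / 2 - 1 ≤ N := by
    refine ⟨⌈H / 2⌉₊ - 1, ?_, ?_⟩
    · have e1 : 0 < ⌈H / 2⌉₊ := Nat.ceil_pos.2 (by positivity)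
      exact Nat.lt_ceil.1 (by omega)
    · have e1 : 0 < ⌈H / 2⌉₊ := Nat.ceil_pos.2 (by positivity)
      have e2 := Nat.le_ceil (H / 2)
      rw [Nat.cast_sub (by omega)]
      push_cast
      linarith
  obtain ⟨Q, hQ1, hQ2⟩ : ∃ Q : ℕ, (Q:ℝ) ≤ H / (2 * (h + 2)) ∧ H / (2 * ((h:ℝ) + 2)) - 1 ≤ Q := by
    refine ⟨⌊H / (2 * ((h:ℝ) + 2))⌋₊, Nat.floor_le (by positivity), ?_⟩
    have := Nat.lt_floor_add_one (H / (2 * ((h:ℝ) + 2)))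
    linarith
  have hQh : (h:ℝ) * Q ≤ H / 2 := by
    rw [le_div_iff₀ (by positivity)] at hQ1
    nlinarith [(Nat.cast_nonneg Q : (0:ℝ) ≤ Q)]
  have hQ6 : (Q:ℝ) ≤ H / 6 := by
    rw [le_div_iff₀ (by positivity)] at hQ1
    rw [le_div_iff₀ (by positivity)]
    nlinarith [(Nat.cast_nonneg Q : (0:ℝ) ≤ Q)]
  have hNQ : N * Q < p := by
    have e1 : (N:ℝ) * Q ≤ H / 2 * (H / 6) := by gcongr
    have e2 : H / 2 * (H / 6) < p := by
      rw [← hP4]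
      have e3 : H ≤ 11.0421 * P * (0.29 * P) := by rw [hH]; gcongr
      have e4 : H ^ 2 ≤ (11.0421 * P * (0.29 * P)) ^ 2 := by gcongr
      have e5 : 0 < P ^ 4 := by positivity
      nlinarith
    exact_mod_cast e1.trans_lt e2
  have hpow : ∀ n : ℕ, 0 < n → Nat.gcd n u = 1 → n ≤ N + h * Q → ((n : ℕ) : ZMod p) ^ d = 1 := by
    intro n hn hg hle
    apply hker
    by_contra hne
    have e1 := hcon n hn hg hne
    have e2 : (n:ℝ) ≤ N + h * Q := by exact_mod_cast hle
    linarith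
  obtain ⟨S, hS1, hS2⟩ := exists_S hd hu hNQ hh hpow
  obtain ⟨M, hM1, hM2⟩ : ∃ M : ℕ, 4 * M ^ 2 ≤ p ∧ 0.49 * P ^ 2 ≤ (M:ℝ) := by
    refine ⟨Nat.sqrt p / 2, ?_, ?_⟩
    · have e1 := Nat.sqrt_le' p
      have e2 : 2 * (Nat.sqrt p / 2) ≤ Nat.sqrt p := Nat.mul_div_le _ _
      have e3 := Nat.pow_le_pow_left e2 2
      rw [mul_pow] at e3
      omega
    · have e1 := Nat.lt_succ_sqrt' p
      have e2 : Nat.sqrt p + 1 ≤ 2 * (Nat.sqrt p / 2) + 2 := by omega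
      have e3 : (p:ℝ) < (2 * ((Nat.sqrt p / 2 : ℕ) : ℝ) + 2) ^ 2 := by
        exact_mod_cast e1.trans_le (Nat.pow_le_pow_left e2 2)
      rw [← hP4] at e3
      have e4 : (P ^ 2) ^ 2 < (2 * ((Nat.sqrt p / 2 : ℕ) : ℝ) + 2) ^ 2 := by
        rw [← pow_mul]; exact e3
      have e5 := lt_of_pow_lt_pow_left₀ 2 (by positivity) e4
      nlinarith
  have hb := S_bound hp hk hkd hh hh1 (fun _ => hlow) hM1 S hS2
  rw [hS1] at hb
  have hb2 : ((goodPairs N Q h u).card : ℝ) * M ≤ 4 * h * P ^ 4 := by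
    rw [hP4]; exact_mod_cast hb
  have hfin := numerics hP56 hL16 hhR hhL hN2 hQ2 huL hM2 (card_goodPairs N Q h u hu.pos)
  linarith
end

section
/- Let p ≥ 10^{20} be a prime, let χ be a non-principal Dirichlet character modulo p, and let u be a prime with u ≥ e²·log p. Then there exists a positive integer n with gcd(n,u) = 1, χ(n) ≠ 1, and n < 6.1374·p^{1/4}·log p. -/
namespace Step
open Polynomial

theorem kummer_indep {K L I : Type*} [Field K] [Field L] [Algebra K L] [IsGalois K L]
    (l : ℕ) [NeZero l] (ζ : K) (hζ : IsPrimitiveRoot ζ l) (v : I → L) (hv0 : ∀ i, v i ≠ 0)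
    (hv : ∀ i, ∃ a : K, v i ^ l = algebraMap K L a)
    (hne : ∀ i j, i ≠ j → ∀ c : K, v i ≠ algebraMap K L c * v j) (s : Finset I) :
    ∀ c : I → K, ∑ i ∈ s, algebraMap K L (c i) * v i = 0 → ∀ i ∈ s, c i = 0 := by
  classical
  have hζL : IsPrimitiveRoot (algebraMap K L ζ) l :=
    hζ.map_of_injective (algebraMap K L).injective
  have heig : ∀ (σ : L ≃ₐ[K] L) (i : I), ∃ w : K, σ (v i) = algebraMap K L w * v i := by
    intro σ i
    obtain ⟨a, ha⟩ := hv i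
    have h1 : (σ (v i) / v i) ^ l = 1 := by
      rw [div_pow, ← map_pow, ha, AlgEquiv.commutes, ← ha, div_self (pow_ne_zero _ (hv0 i))]
    obtain ⟨n, -, hn⟩ := hζL.eq_pow_of_pow_eq_one h1
    refine ⟨ζ ^ n, ?_⟩
    rw [map_pow, hn, div_mul_cancel₀ _ (hv0 i)]
  choose w hw using heig
  induction s using Finset.induction_on with
  | empty => simp
  | insert i0 s hi0 ih =>
    intro c hc
    have key : ∀ i ∈ s, c i = 0 := by
      intro i hi
      have hii : i ≠ i0 := fun h => hi0 (h ▸ hi)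
      obtain ⟨σ, hσ⟩ : ∃ σ : L ≃ₐ[K] L, σ (v i / v i0) ≠ v i / v i0 := by
        by_contra hcon
        push Not at hcon
        have := (InfiniteGalois.mem_bot_iff_fixed (k := K) (v i / v i0)).2 hcon
        rw [IntermediateField.mem_bot] at this
        obtain ⟨c, hc⟩ := this
        exact hne i i0 hii c (by rw [hc, div_mul_cancel₀ _ (hv0 i0)])
      have hww : w σ i ≠ w σ i0 := by
        intro h
        apply hσ
        have hσ0 : σ (v i0) ≠ 0 := by simpa using hv0 i0
        rw [map_div₀, div_eq_div_iff hσ0 (hv0 i0), hw, hw, h]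
        ring
      have h2 := congrArg σ hc
      rw [map_sum, map_zero] at h2
      have h3 : ∑ j ∈ insert i0 s, algebraMap K L (c j * (w σ j - w σ i0)) * v j = 0 := by
        have : ∀ j ∈ insert i0 s, algebraMap K L (c j * (w σ j - w σ i0)) * v j
            = σ (algebraMap K L (c j) * v j) - algebraMap K L (w σ i0) * (algebraMap K L (c j) * v j) := by
          intro j _
          rw [map_mul σ, AlgEquiv.commutes, hw, map_mul, map_sub]
          ring
        rw [Finset.sum_congr rfl this, Finset.sum_sub_distrib, h2, ← Finset.mul_sum, hc]
        simp
      rw [Finset.sum_insert hi0] at h3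
      simp only [sub_self, mul_zero, map_zero, zero_mul, zero_add] at h3
      have := ih _ h3 i hi
      rcases mul_eq_zero.1 this with h | h
      · exact h
      · exact absurd (sub_eq_zero.1 h) hww
    intro i hi
    rcases Finset.mem_insert.1 hi with rfl | hi
    · rw [Finset.sum_insert hi0, Finset.sum_eq_zero (fun j hj => by rw [key j hj]; simp), add_zero] at hc
      rcases mul_eq_zero.1 hc with h | h
      · simpa using h
      · exact absurd h (hv0 i)
    · exact key i hi

/-- In `F[y][x]`, the primes `y + b`. -/
theorem mult_lemma {F ι : Type*} [Field F] [Fintype ι] [DecidableEq ι] (b : ι → F)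
    (hb : Function.Injective b) (l : ℕ) (s t : F[X][X]) (hs : s ≠ 0) (ht : t ≠ 0)
    (e e' : ι → ℕ) (he : ∀ m, e m < l) (he' : ∀ m, e' m < l)
    (h : s ^ l * ∏ m, ((X + C (C (b m))) ^ e m * (C (X + C (b m))) ^ e' m)
      = t ^ l * ∏ m, ((X + C (C (b m))) ^ e' m * (C (X + C (b m))) ^ e m)) : e = e' := by
  funext m0
  have hprime : Prime (C (X + C (b m0)) : F[X][X]) := by
    rw [Polynomial.prime_C_iff]
    have := Polynomial.prime_X_sub_C (-(b m0))
    simpa using this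
  have hx : ∀ m, ¬ (C (X + C (b m0)) : F[X][X]) ∣ X + C (C (b m)) := by
    intro m hd
    rw [Polynomial.C_dvd_iff_dvd_coeff] at hd
    have := hd 1
    simp [coeff_X] at this
    have h2 := hprime.not_isUnit
    rw [Polynomial.isUnit_C] at h2
    exact h2 (isUnit_of_dvd_one this)
  have hy : ∀ m, m ≠ m0 → ¬ (C (X + C (b m0)) : F[X][X]) ∣ C (X + C (b m)) := by
    intro m hm hd
    rw [Polynomial.C_dvd_iff_dvd_coeff] at hd
    have := hd 0
    simp only [coeff_C_zero] at this
    have h3 : (X - C (-(b m0))) ∣ X + C (b m) := by simpa using this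
    rw [Polynomial.dvd_iff_isRoot] at h3
    simp [IsRoot] at h3
    exact hm (hb (by linear_combination h3))
  have e1 := congrArg (emultiplicity (C (X + C (b m0)) : F[X][X])) h
  have hval : ∀ f f' : ι → ℕ, emultiplicity (C (X + C (b m0)) : F[X][X])
      (∏ m, ((X + C (C (b m))) ^ f m * (C (X + C (b m))) ^ f' m)) = f' m0 := by
    intro f f'
    rw [Finset.emultiplicity_prod hprime, Finset.sum_eq_single m0]
    · rw [emultiplicity_mul hprime, emultiplicity_pow hprime, emultiplicity_pow hprime,
        emultiplicity_eq_zero.2 (hx m0), (FiniteMultiplicity.of_prime_left hprime hprime.ne_zero).emultiplicity_self]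
      simp
    · intro m _ hm
      rw [emultiplicity_mul hprime, emultiplicity_pow hprime, emultiplicity_pow hprime,
        emultiplicity_eq_zero.2 (hx m), emultiplicity_eq_zero.2 (hy m hm)]
      simp
    · simp
  rw [emultiplicity_mul hprime, emultiplicity_mul hprime, hval, hval,
    emultiplicity_pow hprime, emultiplicity_pow hprime,
    (FiniteMultiplicity.of_prime_left hprime hs).emultiplicity_eq_multiplicity,
    (FiniteMultiplicity.of_prime_left hprime ht).emultiplicity_eq_multiplicity] at e1
  have e2 : l * multiplicity (C (X + C (b m0)) : F[X][X]) s + e' m0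
    = l * multiplicity (C (X + C (b m0)) : F[X][X]) t + e m0 := by exact_mod_cast e1
  have e3 := congrArg (· % l) e2
  simp only [Nat.mul_add_mod, Nat.mod_eq_of_lt (he m0), Nat.mod_eq_of_lt (he' m0)] at e3
  exact e3.symm


theorem carry_one {R : Type*} [CommRing R] (l : ℕ) [NeZero l] (x y z : R) (h : z ^ l * x = y)
    (d e : Fin l) :
    x * (z ^ d.val * z ^ e.val) = (if (d + e).val < d.val then y else x) * z ^ (d + e).val := by
  have hd := d.isLt
  have he := e.isLt
  rw [Fin.val_add]
  by_cases hlt : d.val + e.val < l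
  · rw [Nat.mod_eq_of_lt hlt, if_neg (by omega), pow_add]
  · have h1 : (d.val + e.val) % l = d.val + e.val - l := by
      rw [Nat.mod_eq_sub_mod (by omega), Nat.mod_eq_of_lt (by omega)]
    rw [h1, if_pos (by omega), ← h, ← pow_add]
    have h2 : d.val + e.val = l + (d.val + e.val - l) := by omega
    conv_lhs => rw [h2, pow_add]
    ring

theorem carry_prod {R ι : Type*} [CommRing R] [Fintype ι] (l : ℕ) [NeZero l] (x y z : ι → R)
    (h : ∀ m, z m ^ l * x m = y m) (d e : ι → Fin l) :
    (∏ m, x m) * ((∏ m, z m ^ (d m).val) * ∏ m, z m ^ (e m).val)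
      = (∏ m, if ((d + e) m).val < (d m).val then y m else x m) * ∏ m, z m ^ ((d + e) m).val := by
  rw [← Finset.prod_mul_distrib, ← Finset.prod_mul_distrib, ← Finset.prod_mul_distrib]
  exact Finset.prod_congr rfl fun m _ => carry_one l (x m) (y m) (z m) (h m) (d m) (e m)

theorem carry_sum {R ι : Type*} [CommRing R] [Fintype ι] [DecidableEq ι] (l : ℕ) [NeZero l]
    (x y z : ι → R) (h : ∀ m, z m ^ l * x m = y m) (P : (ι → Fin l) → R) (d : ι → Fin l) :
    ∑ e', (P (e' - d) * ∏ m, if (e' m).val < (d m).val then y m else x m) * ∏ m, z m ^ (e' m).val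
      = (∏ m, x m) * ((∏ m, z m ^ (d m).val) * ∑ e, P e * ∏ m, z m ^ (e m).val) := by
  rw [← Equiv.sum_comp (Equiv.addLeft d), Finset.mul_sum, Finset.mul_sum]
  refine Finset.sum_congr rfl fun e _ => ?_
  have := carry_prod l x y z h d e
  simp only [Equiv.coe_addLeft, add_sub_cancel_left]
  refine (mul_assoc _ _ _).trans ((congrArg (P e * ·) this.symm).trans ?_)
  ring

/-- substitution `x ↦ X`, `y ↦ X ^ p`. -/
noncomputable def phi (p : ℕ) [Fact p.Prime] : (ZMod p)[X][X] →+* (ZMod p)[X] :=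
  eval₂RingHom ((expand (ZMod p) p : (ZMod p)[X] →ₐ[ZMod p] (ZMod p)[X]) : (ZMod p)[X] →+* (ZMod p)[X]) X

theorem phi_inj (p : ℕ) [Fact p.Prime] (Q : (ZMod p)[X][X]) (hQ : Q.natDegree < p)
    (h : phi p Q = 0) : Q = 0 := by
  have hp0 : 0 < p := (Fact.out : p.Prime).pos
  ext j i
  by_cases hj : j < p
  · have h1 : (phi p Q).coeff (p * i + j) = (Q.coeff j).coeff i := by
      unfold phi
      rw [coe_eval₂RingHom, eval₂_eq_sum_range' _ hQ, finsetSum_coeff, Finset.sum_eq_single j]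
      · rw [coeff_mul_X_pow]
        simp [coeff_expand_mul' hp0]
      · intro j' hj' hne
        rw [Finset.mem_range] at hj'
        rw [coeff_mul_X_pow']
        split_ifs with hle
        · simp only [RingHom.coe_coe]
          rw [coeff_expand hp0, if_neg]
          intro hd
          apply hne
          have h2 : (p * i + j) ≡ j' [MOD p] := ((Nat.modEq_iff_dvd' hle).2 hd).symm
          have h3 : p * i + j ≡ j [MOD p] := by simp [Nat.ModEq]
          exact (Nat.ModEq.eq_of_lt_of_lt (h2.symm.trans h3) hj' hj)
        · rfl
      · intro hn
        exact absurd (Finset.mem_range.2 hj) hn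
    rw [← h1, h]
    simp
  · rw [coeff_eq_zero_of_natDegree_lt (p := Q) (by omega)]
    simp

theorem indep (p : ℕ) [Fact p.Prime] (l k : ℕ) (hl : l.Prime) (hlk : l * k = p - 1)
    {ι : Type} [Fintype ι] [DecidableEq ι] (b : ι → ZMod p) (hb : Function.Injective b)
    (B : ℕ) (hB : l ^ Fintype.card ι * (B + Fintype.card ι) ≤ p)
    (P : (ι → Fin l) → (ZMod p)[X][X]) (hP : ∀ e, (P e).natDegree < B)
    (h : ∑ e : ι → Fin l, phi p (P e) * ∏ m, ((X + C (b m)) ^ k) ^ (e m).val = 0) :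
    ∀ e, P e = 0 := by
  have hpp : p.Prime := Fact.out
  have : NeZero l := ⟨hl.ne_zero⟩
  have hlp : l ∣ p - 1 := ⟨k, hlk.symm⟩
  have hB1 : 1 ≤ B := by
    have := hP 0
    omega
  -- the multiplication matrix
  let M : Matrix (ι → Fin l) (ι → Fin l) (ZMod p)[X][X] := fun d e' =>
    P (e' - d) * ∏ m, if (e' m).val < (d m).val then C (X + C (b m)) else X + C (C (b m))
  have hMdeg : ∀ d e', (M d e').natDegree ≤ B - 1 + Fintype.card ι := by
    intro d e'
    refine natDegree_mul_le.trans (Nat.add_le_add (by have := hP (e' - d); omega) ?_)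
    refine (natDegree_prod_le _ _).trans ?_
    calc _ ≤ ∑ m : ι, 1 := by
          refine Finset.sum_le_sum fun m _ => ?_
          split_ifs
          · rw [natDegree_C]; omega
          · exact (natDegree_X_add_C _).le
      _ = _ := by simp
  have hdetdeg : M.det.natDegree < p := by
    have h1 : M.det.natDegree ≤ l ^ Fintype.card ι * (B - 1 + Fintype.card ι) := by
      rw [Matrix.det_apply]
      refine natDegree_sum_le_of_forall_le _ _ fun σ _ => ?_
      refine (natDegree_smul_le _ _).trans ?_
      refine (natDegree_prod_le _ _).trans ?_
      calc _ ≤ ∑ i : (ι → Fin l), (B - 1 + Fintype.card ι) := Finset.sum_le_sum fun i _ => hMdeg _ _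
        _ = _ := by simp
    have h2 : 0 < l ^ Fintype.card ι := pow_pos hl.pos _
    have h3 : l ^ Fintype.card ι * (B - 1 + Fintype.card ι) < l ^ Fintype.card ι * (B + Fintype.card ι) :=
      Nat.mul_lt_mul_of_pos_left (by omega) h2
    omega
  have hphix : ∀ m, phi p (X + C (C (b m))) = X + C (b m) := by
    intro m; simp [phi]
  have hphiy : ∀ m, phi p (C (X + C (b m))) = (X + C (b m)) ^ p := by
    intro m
    rw [← ZMod.expand_card]
    simp [phi]
  have hdet0 : M.det = 0 := by
    apply phi_inj p _ hdetdeg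
    rw [RingHom.map_det]
    apply Matrix.exists_mulVec_eq_zero_iff.1
    refine ⟨fun e' => ∏ m, ((X + C (b m)) ^ k) ^ (e' m).val, ?_, ?_⟩
    · intro h0
      have := congrFun h0 0
      simp only [Pi.zero_apply, Finset.prod_eq_zero_iff] at this
      obtain ⟨m, -, hm⟩ := this
      exact (pow_ne_zero _ (pow_ne_zero _ (X_add_C_ne_zero (b m)))) hm
    · funext d
      have hz : ∀ m, ((X + C (b m)) ^ k) ^ l * (X + C (b m)) = (X + C (b m)) ^ p := by
        intro m
        rw [← pow_mul, ← pow_succ, mul_comm k l, hlk, Nat.sub_add_cancel hpp.one_lt.le]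
      have := carry_sum l (fun m => X + C (b m)) (fun m => (X + C (b m)) ^ p)
        (fun m => (X + C (b m)) ^ k) hz (fun e => phi p (P e)) d
      rw [h, mul_zero, mul_zero] at this
      rw [Matrix.mulVec, dotProduct, Pi.zero_apply, ← this]
      refine Finset.sum_congr rfl fun e' _ => ?_
      refine congrArg (· * _) ?_
      change phi p (M d e') = _
      simp only [M, map_mul, map_prod]
      refine congrArg (phi p (P (e' - d)) * ·) ?_
      refine Finset.prod_congr rfl fun m _ => ?_
      split_ifs
      · exact hphiy m
      · exact hphix m
  obtain ⟨c, hc0, hc⟩ := Matrix.exists_vecMul_eq_zero_iff.2 hdet0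
  -- the field
  let K := FractionRing (ZMod p)[X][X]
  let L := SeparableClosure K
  let j : (ZMod p)[X][X] →+* K := algebraMap _ _
  have hj : Function.Injective j := IsFractionRing.injective _ _
  have hjL : Function.Injective (algebraMap K L) := (algebraMap K L).injective
  have : CharP K p := by
    exact charP_of_injective_ringHom (R := (ZMod p)[X][X]) hj p
  have : CharP L p := charP_of_injective_ringHom hjL p
  have hlL : (l : L) ≠ 0 := by
    intro h0
    rw [CharP.cast_eq_zero_iff L p] at h0
    have h1 := Nat.le_of_dvd hl.pos h0
    have h2 := Nat.le_of_dvd (by have := hpp.two_le; omega) hlp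
    have := hpp.two_le
    omega
  have : NeZero (l : L) := ⟨hlL⟩
  obtain ⟨ζ, hζ⟩ : ∃ ζ : K, IsPrimitiveRoot ζ l := by
    obtain ⟨g, hg⟩ := IsCyclic.exists_generator (α := (ZMod p)ˣ)
    have hord : orderOf g = p - 1 := by
      rw [orderOf_eq_card_of_forall_mem_zpowers hg, Nat.card_eq_fintype_card, ZMod.card_units]
    have hgp : IsPrimitiveRoot g (p - 1) := hord ▸ IsPrimitiveRoot.orderOf g
    have h1 := hgp.pow (by have := hpp.two_le; omega) (by rw [← hlk, mul_comm] : p - 1 = k * l)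
    have h2 := h1.map_of_injective (f := Units.coeHom (ZMod p)) Units.val_injective
    exact ⟨_, h2.map_of_injective (f := (j.comp (C.comp C))) (hj.comp (C_injective.comp C_injective))⟩
  have hxne : ∀ m, j (X + C (C (b m))) ≠ 0 := fun m => by
    rw [map_ne_zero_iff j hj]; exact X_add_C_ne_zero _
  have hyne : ∀ m, j (C (X + C (b m))) ≠ 0 := fun m => by
    rw [map_ne_zero_iff j hj, Ne, C_eq_zero]; exact X_add_C_ne_zero _
  have hzex : ∀ m, ∃ z : L, z ^ l = algebraMap K L (j (C (X + C (b m))) / j (X + C (C (b m)))) :=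
    fun m => IsSepClosed.exists_pow_nat_eq _ l
  choose z hz using hzex
  have hz0 : ∀ m, z m ≠ 0 := by
    intro m h0
    have := hz m
    rw [h0, zero_pow hl.ne_zero] at this
    exact (div_ne_zero (hyne m) (hxne m)) ((map_eq_zero _).1 this.symm)
  have hzc : ∀ m, z m ^ l * algebraMap K L (j (X + C (C (b m)))) = algebraMap K L (j (C (X + C (b m)))) := by
    intro m
    rw [hz, ← map_mul, div_mul_cancel₀ _ (hxne m)]
  have hlin := kummer_indep (K := K) (L := L) l ζ hζ (fun e : ι → Fin l => ∏ m, z m ^ (e m).val)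
    (fun e => Finset.prod_ne_zero_iff.2 fun m _ => pow_ne_zero _ (hz0 m))
    (fun e => ⟨∏ m, (j (C (X + C (b m))) / j (X + C (C (b m)))) ^ (e m).val, by
      rw [map_prod, ← Finset.prod_pow]
      refine Finset.prod_congr rfl fun m _ => ?_
      rw [← pow_mul, mul_comm, pow_mul, hz, map_pow]⟩)
    (by
      intro e e' hee c hce
      apply hee
      have hcne : c ≠ 0 := by
        rintro rfl
        rw [map_zero, zero_mul] at hce
        exact (Finset.prod_ne_zero_iff.2 fun m _ => pow_ne_zero _ (hz0 m)) hce
      obtain ⟨s, t, ht, rfl⟩ := IsFractionRing.div_surjective (A := (ZMod p)[X][X]) c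
      have ht0 : t ≠ 0 := nonZeroDivisors.ne_zero ht
      have hs0 : s ≠ 0 := by
        rintro rfl
        simp at hcne
      have ht0' : j t ≠ 0 := by rwa [map_ne_zero_iff j hj]
      have key := mult_lemma b hb l s t hs0 ht0 (fun m => (e m).val) (fun m => (e' m).val)
        (fun m => (e m).isLt) (fun m => (e' m).isLt) (by
          apply hj
          apply hjL
          have h1 := congrArg (· ^ l) hce
          simp only [mul_pow, ← Finset.prod_pow] at h1
          have h2 : ∀ f : ι → Fin l, ∏ m, (z m ^ (f m).val) ^ l =
            (∏ m, algebraMap K L (j (C (X + C (b m)))) ^ (f m).val) / ∏ m, algebraMap K L (j (X + C (C (b m)))) ^ (f m).val := by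
            intro f
            rw [← Finset.prod_div_distrib]
            refine Finset.prod_congr rfl fun m _ => ?_
            rw [← pow_mul, mul_comm, pow_mul, hz, map_div₀, div_pow]
          rw [h2, h2, map_div₀, div_pow] at h1
          have hX : ∀ f : ι → Fin l, ∏ m, algebraMap K L (j (X + C (C (b m)))) ^ (f m).val ≠ 0 := by
            intro f
            refine Finset.prod_ne_zero_iff.2 fun m _ => pow_ne_zero _ ?_
            rw [map_ne_zero_iff _ hjL]
            exact hxne m
          have hT : algebraMap K L (j t) ^ l ≠ 0 := by
            refine pow_ne_zero _ ?_
            rwa [map_ne_zero_iff _ hjL]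
          simp only [map_mul, map_prod, map_pow, Finset.prod_mul_distrib]
          change _ = (algebraMap K L (j s)) ^ l / (algebraMap K L (j t)) ^ l * _ at h1
          rw [div_mul_div_comm, div_eq_div_iff (hX e) (mul_ne_zero hT (hX e'))] at h1
          linear_combination -h1)
      funext m
      exact Fin.ext (congrFun key m))
    Finset.univ
  let J : (ZMod p)[X][X] →+* L := (algebraMap K L).comp j
  have hJ : Function.Injective J := hjL.comp hj
  have hprod : (∑ d, J (c d) * ∏ m, z m ^ (d m).val) * (∑ e, J (P e) * ∏ m, z m ^ (e m).val) = 0 := by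
    have hXne : (∏ m, J (X + C (C (b m)))) ≠ 0 :=
      Finset.prod_ne_zero_iff.2 fun m _ => (map_ne_zero_iff _ hJ).2 (X_add_C_ne_zero _)
    apply (mul_eq_zero.1 (?_ : (∏ m, J (X + C (C (b m)))) * _ = 0)).resolve_left hXne
    rw [Finset.sum_mul, Finset.mul_sum]
    have h1 : ∀ d, (∏ m, J (X + C (C (b m)))) * (J (c d) * (∏ m, z m ^ (d m).val) *
        ∑ e, J (P e) * ∏ m, z m ^ (e m).val) = ∑ e', J (c d * M d e') * ∏ m, z m ^ (e' m).val := by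
      intro d
      have := carry_sum l (fun m => J (X + C (C (b m)))) (fun m => J (C (X + C (b m)))) z hzc
        (fun e => J (P e)) d
      calc _ = J (c d) * ((∏ m, J (X + C (C (b m)))) * ((∏ m, z m ^ (d m).val) *
        ∑ e, J (P e) * ∏ m, z m ^ (e m).val)) := by ring
        _ = _ := by
          rw [← this, Finset.mul_sum]
          refine Finset.sum_congr rfl fun e' _ => ?_
          rw [map_mul, mul_assoc (J (c d))]
          congr 2
          simp only [M, map_mul, map_prod]
          congr 1
          refine Finset.prod_congr rfl fun m _ => ?_
          split_ifs <;> rfl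
    rw [Finset.sum_congr rfl fun d _ => h1 d, Finset.sum_comm]
    refine Finset.sum_eq_zero fun e' _ => ?_
    rw [← Finset.sum_mul, ← map_sum]
    have := congrFun hc e'
    simp only [Matrix.vecMul, dotProduct, Pi.zero_apply] at this
    rw [this, map_zero, zero_mul]
  rcases mul_eq_zero.1 hprod with h0 | h0
  · exfalso
    apply hc0
    funext d
    have := hlin (fun d => j (c d)) h0 d (Finset.mem_univ _)
    exact (map_eq_zero_iff j hj).1 this
  · intro e
    have := hlin (fun d => j (P d)) h0 e (Finset.mem_univ _)
    exact (map_eq_zero_iff j hj).1 this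


theorem order_aux {p : ℕ} [Fact p.Prime] (W : (ZMod p)[X]) (a : ZMod p) (hW : W.eval a ≠ 0) (n : ℕ) :
    n < p → ∀ g : (ZMod p)[X], g.eval a ≠ 0 →
      ((fun G => W * derivative G)^[n] ((X - C a) ^ n * g)).eval a ≠ 0 := by
  induction n with
  | zero => intro _ g hg; simpa using hg
  | succ n ih =>
    intro hn g hg
    rw [Function.iterate_succ_apply]
    have h1 : W * derivative ((X - C a) ^ (n + 1) * g)
        = (X - C a) ^ n * (C ((n + 1 : ℕ) : ZMod p) * W * g + (X - C a) * W * derivative g) := by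
      rw [derivative_mul, derivative_X_sub_C_pow, Nat.add_sub_cancel]
      ring
    rw [h1]
    apply ih (by omega)
    simp only [eval_add, eval_mul, eval_C, eval_sub, eval_X, sub_self, zero_mul, add_zero]
    refine mul_ne_zero (mul_ne_zero ?_ hW) hg
    rw [Ne, ZMod.natCast_eq_zero_iff]
    intro hd
    have := Nat.le_of_dvd (by omega) hd
    omega

theorem order_ge {p : ℕ} [Fact p.Prime] (W G : (ZMod p)[X]) (hG : G ≠ 0) (a : ZMod p)
    (hW : W.eval a ≠ 0) (M : ℕ) (hM : M ≤ p)
    (h : ∀ s < M, ((fun G => W * derivative G)^[s] G).eval a = 0) : M ≤ rootMultiplicity a G := by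
  by_contra hlt
  push Not at hlt
  obtain ⟨g, hg, hnd⟩ := exists_eq_pow_rootMultiplicity_mul_and_not_dvd G hG a
  have h1 := h _ hlt
  refine order_aux W a hW (rootMultiplicity a G) (by omega) g ?_ ?_
  · intro h0
    exact hnd (dvd_iff_isRoot.2 h0)
  · rw [← hg]; exact h1

theorem logder {p : ℕ} [Fact p.Prime] {ι : Type} [DecidableEq ι] (b : ι → ZMod p) (f : ι → ℕ)
    (s : Finset ι) : ∃ Q : (ZMod p)[X], Q.natDegree ≤ s.card ∧
      (∏ m ∈ s, (X + C (b m))) * derivative (∏ m ∈ s, (X + C (b m)) ^ f m)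
        = Q * ∏ m ∈ s, (X + C (b m)) ^ f m := by
  induction s using Finset.induction_on with
  | empty => exact ⟨0, by simp⟩
  | insert m s hm ih =>
    obtain ⟨Q, hQ, hQe⟩ := ih
    refine ⟨C (f m : ZMod p) * (∏ m ∈ s, (X + C (b m))) + (X + C (b m)) * Q, ?_, ?_⟩
    · rw [Finset.card_insert_of_notMem hm]
      refine natDegree_add_le_of_degree_le ?_ ?_
      · refine natDegree_mul_le.trans ?_
        rw [natDegree_C, zero_add]
        refine (natDegree_prod_le _ _).trans ?_
        simp
      · refine natDegree_mul_le.trans ?_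
        rw [natDegree_X_add_C]
        omega
    · rw [Finset.prod_insert hm, Finset.prod_insert hm, derivative_mul]
      have h1 : (X + C (b m)) * derivative ((X + C (b m)) ^ f m) = C (f m : ZMod p) * (X + C (b m)) ^ f m := by
        rcases Nat.eq_zero_or_pos (f m) with h0 | h0
        · simp [h0]
        · rw [derivative_X_add_C_pow]
          obtain ⟨n, hn⟩ := Nat.exists_eq_succ_of_ne_zero h0.ne'
          rw [hn]
          simp only [Nat.succ_eq_add_one, Nat.add_sub_cancel, C_eq_natCast, pow_succ]
          ring
      linear_combination (∏ m ∈ s, (X + C (b m))) * (∏ m ∈ s, (X + C (b m)) ^ f m) * h1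
        + (X + C (b m)) * (X + C (b m)) ^ f m * hQe

theorem stepanov (p : ℕ) [Fact p.Prime] (l k : ℕ) (hl : l.Prime) (hlk : l * k = p - 1)
    {ι : Type} [Fintype ι] [DecidableEq ι] (b : ι → ZMod p) (hb : Function.Injective b)
    (A B M : ℕ) (hB : l ^ Fintype.card ι * (B + Fintype.card ι) ≤ p) (hM : M ≤ p)
    (hB1 : 1 ≤ B)
    (hdim : M * (A + B + M * Fintype.card ι) < l ^ Fintype.card ι * A * B)
    (S : Finset (ZMod p)) (hS : ∀ a ∈ S, ∀ m, (a + b m) ^ k = 1) :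
    S.card * M ≤ B + p * A + Fintype.card ι * p := by
  have hpp : p.Prime := Fact.out
  have hp2 := hpp.two_le
  have hk0 : k ≠ 0 := by
    rintro rfl
    rw [mul_zero] at hlk
    omega
  set h := Fintype.card ι with hh
  let W : (ZMod p)[X] := ∏ m, (X + C (b m))
  have hWdeg : W.natDegree ≤ h := by
    refine (natDegree_prod_le _ _).trans ?_
    simp [hh]
  let f : (ι → Fin l) → (ZMod p)[X] := fun e => ∏ m, ((X + C (b m)) ^ k) ^ (e m).val
  have hQ : ∀ e, ∃ Q : (ZMod p)[X], Q.natDegree ≤ h ∧ W * derivative (f e) = Q * f e := by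
    intro e
    obtain ⟨Q, h1, h2⟩ := logder b (fun m => k * (e m).val) Finset.univ
    refine ⟨Q, h1, ?_⟩
    simp only [f, ← pow_mul]
    exact h2
  choose Q hQdeg hQe using hQ
  let T : (ι → Fin l) → Module.End (ZMod p) (ZMod p)[X] := fun e =>
    (LinearMap.mulLeft (ZMod p) W).comp derivative + LinearMap.mulLeft (ZMod p) (Q e)
  have hT : ∀ e P, T e P = W * derivative P + Q e * P := fun e P => rfl
  have hTdeg : ∀ e (s : ℕ) P, ((T e ^ s) P).natDegree ≤ P.natDegree + s * h := by
    intro e s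
    induction s with
    | zero => intro P; simp
    | succ s ih =>
      intro P
      rw [pow_succ', Module.End.mul_apply, hT]
      have h1 := ih P
      refine natDegree_add_le_of_degree_le ?_ ?_
      · refine natDegree_mul_le.trans ?_
        have := natDegree_derivative_le ((T e ^ s) P)
        rw [add_mul]
        omega
      · refine natDegree_mul_le.trans ?_
        have := hQdeg e
        rw [add_mul]
        omega
  let N := A + B + M * h
  let Ψ : ℕ → (((ι → Fin l) × Fin A) → degreeLT (ZMod p) B) →ₗ[ZMod p] (ZMod p)[X] := fun s =>
    ∑ ei : (ι → Fin l) × Fin A, (LinearMap.mulLeft (ZMod p) (X ^ ei.2.val)).comp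
      ((T ei.1 ^ s).comp ((degreeLT (ZMod p) B).subtype.comp (LinearMap.proj ei)))
  have hΨ : ∀ s c, Ψ s c = ∑ ei : (ι → Fin l) × Fin A, X ^ ei.2.val * (T ei.1 ^ s) (c ei : (ZMod p)[X]) := by
    intro s c
    simp [Ψ]
  let Φ : (((ι → Fin l) × Fin A) → degreeLT (ZMod p) B) →ₗ[ZMod p] (Fin M × Fin N → ZMod p) :=
    LinearMap.pi fun st => (lcoeff (ZMod p) st.2.val).comp (Ψ st.1.val)
  have hfin : Module.finrank (ZMod p) (Fin M × Fin N → ZMod p)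
      < Module.finrank (ZMod p) (((ι → Fin l) × Fin A) → degreeLT (ZMod p) B) := by
    rw [Module.finrank_pi, Module.finrank_pi_fintype]
    simp only [(degreeLTEquiv (ZMod p) B).finrank_eq, Module.finrank_pi, Fintype.card_fin,
      Fintype.card_prod, Finset.sum_const, Finset.card_univ, Fintype.card_fun, smul_eq_mul]
    exact hdim
  have : Module.Finite (ZMod p) (degreeLT (ZMod p) B) :=
    Module.Finite.equiv (degreeLTEquiv (ZMod p) B).symm
  have hker := LinearMap.ker_ne_bot_of_finrank_lt (f := Φ) hfin
  obtain ⟨c, hcker, hc0⟩ := (Submodule.ne_bot_iff _).1 hker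
  have hcdeg : ∀ ei, (c ei : (ZMod p)[X]).natDegree < B := by
    intro ei
    have := (c ei).2
    rw [mem_degreeLT] at this
    by_cases h0 : (c ei : (ZMod p)[X]) = 0
    · rw [h0, natDegree_zero]; omega
    · rwa [natDegree_lt_iff_degree_lt h0]
  have hΨ0 : ∀ s < M, Ψ s c = 0 := by
    intro s hs
    ext t
    by_cases ht : t < N
    · have := congrFun (LinearMap.mem_ker.1 hcker) (⟨s, hs⟩, ⟨t, ht⟩)
      simpa [Φ] using this
    · rw [coeff_zero]
      apply coeff_eq_zero_of_natDegree_lt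
      refine lt_of_lt_of_le (b := N) ?_ (by omega)
      rw [hΨ]
      have h2 : s * h ≤ M * h := Nat.mul_le_mul_right _ hs.le
      refine lt_of_le_of_lt (natDegree_sum_le_of_forall_le (n := A + (B - 1) + M * h) _ _ ?_) (by omega)
      intro ei _
      refine natDegree_mul_le.trans ?_
      rw [natDegree_X_pow]
      have h1 := hTdeg ei.1 s (c ei : (ZMod p)[X])
      have h3 := hcdeg ei
      have h4 := ei.2.isLt
      omega
  let G : (ZMod p)[X] := ∑ ei : (ι → Fin l) × Fin A, (c ei : (ZMod p)[X]) * ((X ^ p) ^ ei.2.val * f ei.1)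
  have hG0 : G ≠ 0 := by
    intro hG
    apply hc0
    let P : (ι → Fin l) → (ZMod p)[X][X] := fun e =>
      ∑ i : Fin A, ((c (e, i) : (ZMod p)[X]).map C) * C (X ^ i.val)
    have hP := indep p l k hl hlk b hb B hB P (by
      intro e
      refine lt_of_le_of_lt (natDegree_sum_le_of_forall_le (n := B - 1) _ _ ?_) (by omega)
      intro i _
      refine natDegree_mul_le.trans ?_
      rw [natDegree_C, add_zero]
      have h1 := natDegree_map_le (f := (C : ZMod p →+* (ZMod p)[X])) (p := (c (e, i) : (ZMod p)[X]))
      have h2 := hcdeg (e, i)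
      omega) (by
      rw [← hG]
      simp only [G, Fintype.sum_prod_type, P, map_sum, map_mul, Finset.sum_mul]
      refine Finset.sum_congr rfl fun e _ => Finset.sum_congr rfl fun i _ => ?_
      have h1 : phi p ((c (e, i) : (ZMod p)[X]).map C) = c (e, i) := by
        simp only [phi, coe_eval₂RingHom, eval₂_map]
        have : (((expand (ZMod p) p : (ZMod p)[X] →ₐ[ZMod p] (ZMod p)[X]) : (ZMod p)[X] →+* (ZMod p)[X]).comp C) = C := by
          ext; simp
        rw [this, eval₂_C_X]
      have h2 : phi p (C (X ^ i.val)) = (X ^ p) ^ i.val := by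
        rw [map_pow, map_pow]
        congr 1
        simp [phi]
      rw [h1, h2, mul_assoc])
    funext ei
    apply Subtype.ext
    obtain ⟨e, i⟩ := ei
    ext j
    have h1 := congrArg (fun q => (coeff q j).coeff i.val) (hP e)
    simp only [P, finsetSum_coeff, coeff_mul_C, coeff_map, coeff_zero, coeff_C_mul_X_pow] at h1
    rw [Finset.sum_eq_single i] at h1
    · simpa using h1
    · intro i' _ hi'
      rw [if_neg]
      intro h2
      exact hi' (Fin.ext h2.symm)
    · simp
  have hθ : ∀ s : ℕ, (fun G => W * derivative G)^[s] G
      = ∑ ei : (ι → Fin l) × Fin A, ((T ei.1 ^ s) (c ei : (ZMod p)[X])) * ((X ^ p) ^ ei.2.val * f ei.1) := by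
    intro s
    induction s with
    | zero => simp [G]
    | succ s ih =>
      rw [Function.iterate_succ_apply', ih]
      simp only [derivative_sum, Finset.mul_sum]
      refine Finset.sum_congr rfl fun ei _ => ?_
      rw [pow_succ', Module.End.mul_apply, hT, derivative_mul, derivative_mul]
      have h1 : derivative (((X : (ZMod p)[X]) ^ p) ^ ei.2.val) = 0 := by
        rw [derivative_pow, derivative_X_pow]
        simp
      rw [h1]
      linear_combination ((T ei.1 ^ s) (c ei : (ZMod p)[X])) * (X ^ p) ^ ei.2.val * hQe ei.1
  have hmult : ∀ a ∈ S, M ≤ rootMultiplicity a G := by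
    intro a ha
    have hne : ∀ m, a + b m ≠ 0 := by
      intro m h0
      have := hS a ha m
      rw [h0, zero_pow hk0] at this
      exact zero_ne_one this
    refine order_ge W G hG0 a ?_ M hM ?_
    · simp only [W, eval_prod, eval_add, eval_X, eval_C]
      exact Finset.prod_ne_zero_iff.2 fun m _ => hne m
    · intro s hs
      rw [hθ]
      have h1 := congrArg (eval a) (hΨ0 s hs)
      rw [hΨ, eval_finsetSum, eval_zero] at h1
      rw [eval_finsetSum, ← h1]
      refine Finset.sum_congr rfl fun ei _ => ?_
      have hf1 : (f ei.1).eval a = 1 := by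
        simp only [f, eval_prod, eval_pow, eval_add, eval_X, eval_C]
        exact Finset.prod_eq_one fun m _ => by rw [hS a ha m, one_pow]
      simp only [eval_mul, eval_pow, eval_X, hf1, ZMod.pow_card]
      ring
  have hGdeg : G.natDegree ≤ B + p * A + h * p := by
    refine natDegree_sum_le_of_forall_le _ _ ?_
    intro ei _
    refine natDegree_mul_le.trans ?_
    have h1 := hcdeg ei
    have h2 : ((X ^ p) ^ ei.2.val * f ei.1).natDegree ≤ p * A + h * p := by
      refine natDegree_mul_le.trans (Nat.add_le_add ?_ ?_)
      · rw [← pow_mul, natDegree_X_pow]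
        exact Nat.mul_le_mul_left _ ei.2.isLt.le
      · refine (natDegree_prod_le _ _).trans ?_
        calc _ ≤ ∑ m : ι, p := by
              refine Finset.sum_le_sum fun m _ => ?_
              rw [← pow_mul]
              refine natDegree_pow_le.trans ?_
              rw [natDegree_X_add_C, mul_one]
              have h3 : k * (ei.1 m).val ≤ k * l := Nat.mul_le_mul_left _ (ei.1 m).isLt.le
              have h4 : k * l = p - 1 := by rw [mul_comm, hlk]
              omega
          _ = _ := by simp [hh]
    omega
  rcases Nat.eq_zero_or_pos M with hM0 | hM0
  · rw [hM0, mul_zero]; exact Nat.zero_le _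
  classical
  have hsub : S ⊆ G.roots.toFinset := by
    intro a ha
    rw [Multiset.mem_toFinset, ← Multiset.count_pos, count_roots]
    exact lt_of_lt_of_le hM0 (hmult a ha)
  calc S.card * M = ∑ a ∈ S, M := by simp
    _ ≤ ∑ a ∈ S, G.roots.count a := Finset.sum_le_sum fun a ha => by
        rw [count_roots]; exact hmult a ha
    _ ≤ ∑ a ∈ G.roots.toFinset, G.roots.count a := Finset.sum_le_sum_of_subset hsub
    _ = G.roots.card := Multiset.toFinset_sum_count_eq _
    _ ≤ G.natDegree := card_roots' G
    _ ≤ _ := hGdeg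


theorem char_power (p : ℕ) [Fact p.Prime] (χ : DirichletCharacter ℂ p) (hχ : χ ≠ 1) :
    ∃ l k : ℕ, l.Prime ∧ l * k = p - 1 ∧ ∀ x : ZMod p, χ x = 1 → x ^ k = 1 := by
  obtain ⟨g, hg⟩ := IsCyclic.exists_generator (α := (ZMod p)ˣ)
  have hord : orderOf g = p - 1 := by
    rw [orderOf_eq_card_of_forall_mem_zpowers hg, Nat.card_eq_fintype_card, ZMod.card_units]
  have hg1 : χ (g : ZMod p) ≠ 1 := by
    intro h1
    apply hχ
    refine MulChar.ext fun a => ?_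
    obtain ⟨n, hn⟩ := (mem_powers_iff_mem_zpowers.2 (hg a) : a ∈ Submonoid.powers g)
    rw [MulChar.one_apply_coe, ← hn]
    simp [h1]
  have hgpow : (χ (g : ZMod p)) ^ (p - 1) = 1 := by
    rw [← map_pow, ← Units.val_pow_eq_pow_val, ← hord, pow_orderOf_eq_one]
    simp
  have hdvd : orderOf (χ (g : ZMod p)) ∣ p - 1 := orderOf_dvd_of_pow_eq_one hgpow
  have hne : orderOf (χ (g : ZMod p)) ≠ 1 := by
    rwa [Ne, orderOf_eq_one_iff]
  obtain ⟨l, hl, hld⟩ := Nat.exists_prime_and_dvd hne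
  obtain ⟨k, hk⟩ := hld.trans hdvd
  refine ⟨l, k, hl, hk.symm, fun x hx => ?_⟩
  have hxu : IsUnit x := by
    by_contra h
    rw [χ.map_nonunit h] at hx
    exact zero_ne_one hx
  obtain ⟨y, rfl⟩ := hxu
  obtain ⟨n, hn⟩ := (mem_powers_iff_mem_zpowers.2 (hg y) : y ∈ Submonoid.powers g)
  have hn' : g ^ n = y := hn
  rw [← hn', Units.val_pow_eq_pow_val, map_pow] at hx
  obtain ⟨c, hc⟩ := hld.trans (orderOf_dvd_of_pow_eq_one hx)
  rw [← Units.val_pow_eq_pow_val, ← hn', ← pow_mul, hc, show l * c * k = (p - 1) * c by rw [hk]; ring,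
    pow_mul, ← hord, pow_orderOf_eq_one, one_pow, Units.val_one]

theorem count_shift (R u c : ℕ) (hu : 0 < u) :
    ((Finset.Ioc 0 R).filter (fun r => u ∣ r + c)).card ≤ R / u + 1 := by
  have h1 : (Finset.Ioc (c / u) (c / u + (R / u + 1))).card = R / u + 1 := by simp
  rw [← h1]
  apply Finset.card_le_card_of_injOn (fun r => (r + c) / u)
  · intro r hr
    simp only [Finset.coe_filter, Finset.mem_Ioc, Set.mem_ofPred_eq] at hr
    obtain ⟨⟨h0, hR⟩, t, ht⟩ := hr
    simp only [Finset.coe_Ioc, Set.mem_Ioc]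
    rw [ht, Nat.mul_div_cancel_left _ hu]
    constructor
    · rw [Nat.div_lt_iff_lt_mul hu, mul_comm]; omega
    · have h2 := Nat.div_add_mod c u
      have h3 := Nat.div_add_mod R u
      have h4 := Nat.mod_lt c hu
      have h5 := Nat.mod_lt R hu
      have h6 : u * t < u * (c / u + (R / u + 1) + 1) := by
        rw [← ht]
        have : u * (c / u + (R / u + 1) + 1) = u * (c / u) + u * (R / u) + u + u := by ring
        omega
      have := Nat.lt_of_mul_lt_mul_left h6
      omega
  · intro r hr r' hr' h
    simp only [Finset.coe_filter, Finset.mem_Ioc, Set.mem_ofPred_eq] at hr hr'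
    obtain ⟨-, t, ht⟩ := hr
    obtain ⟨-, t', ht'⟩ := hr'
    simp only [ht, ht', Nat.mul_div_cancel_left _ hu] at h
    rw [h, ← ht'] at ht
    omega

def goodPairs (R Q h u : ℕ) : Finset (ℕ × ℕ) :=
  ((Finset.Ioc 0 R) ×ˢ (Finset.Ioc 0 Q)).filter
    (fun x => Nat.Coprime x.1 x.2 ∧ ¬ u ∣ x.2 ∧ ∀ m < h, ¬ u ∣ x.1 + m * x.2)

theorem sum_odd (n : ℕ) : ∑ j ∈ Finset.Ioc 0 n, (1 : ℝ) / ((2 * j + 1 : ℕ) : ℝ) ^ 2 ≤ 1 / 4 - 1 / (4 * (n + 1)) := by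
  induction n with
  | zero => simp
  | succ n ih =>
    rw [← Finset.insert_Ioc_right_eq_Ioc_add_one (by omega), Finset.sum_insert (by simp)]
    have h1 : (1 : ℝ) / ((2 * (n + 1) + 1 : ℕ) : ℝ) ^ 2 ≤ 1 / (4 * (n + 1)) - 1 / (4 * ((n + 1 : ℕ) + 1)) := by
      push_cast
      have hn : (0 : ℝ) ≤ n := Nat.cast_nonneg n
      rw [div_sub_div _ _ (by positivity) (by positivity), div_le_div_iff₀ (by positivity) (by positivity)]
      nlinarith
    linarith

theorem goodPairs_card (R Q h u : ℕ) (hu : 0 < u) :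
    (R * Q / 2 - R * Q / u - Q * h * (R / u + 1) : ℝ) ≤ (goodPairs R Q h u).card := by
  classical
  let U := (Finset.Ioc 0 R) ×ˢ (Finset.Ioc 0 Q)
  let D : ℕ → Finset (ℕ × ℕ) := fun d => ((Finset.Ioc 0 R).filter (d ∣ ·)) ×ˢ ((Finset.Ioc 0 Q).filter (d ∣ ·))
  let E1 := (Finset.Ioc 0 R) ×ˢ ((Finset.Ioc 0 Q).filter (u ∣ ·))
  let E2 := (Finset.Ioc 0 Q ×ˢ Finset.range h).biUnion
    (fun y => ((Finset.Ioc 0 R).filter (fun r => u ∣ r + y.2 * y.1)).image (fun r => (r, y.1)))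
  have hsub : U ⊆ goodPairs R Q h u ∪ (D 2 ∪ (Finset.Ioc 0 R).biUnion (fun j => D (2 * j + 1)) ∪ E1 ∪ E2) := by
    intro x hx
    have hx' := hx
    simp only [U, Finset.mem_product, Finset.mem_Ioc] at hx'
    obtain ⟨⟨hr0, hrR⟩, hq0, hqQ⟩ := hx'
    by_cases hg : x ∈ goodPairs R Q h u
    · exact Finset.mem_union_left _ hg
    · apply Finset.mem_union_right
      by_cases hq : u ∣ x.2
      · apply Finset.mem_union_left
        apply Finset.mem_union_right
        simp only [E1, Finset.mem_product, Finset.mem_Ioc, Finset.mem_filter]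
        exact ⟨⟨hr0, hrR⟩, ⟨hq0, hqQ⟩, hq⟩
      · by_cases hm : ∃ m < h, u ∣ x.1 + m * x.2
        · apply Finset.mem_union_right
          obtain ⟨m, hmh, hmu⟩ := hm
          simp only [E2, Finset.mem_biUnion, Finset.mem_product, Finset.mem_Ioc, Finset.mem_range,
            Finset.mem_image, Finset.mem_filter]
          exact ⟨(x.2, m), ⟨⟨hq0, hqQ⟩, hmh⟩, x.1, ⟨⟨hr0, hrR⟩, hmu⟩, rfl⟩
        · apply Finset.mem_union_left
          apply Finset.mem_union_left
          have hcop : ¬ Nat.Coprime x.1 x.2 := by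
            intro hc
            apply hg
            simp only [goodPairs, Finset.mem_filter]
            push Not at hm
            exact ⟨hx, hc, hq, hm⟩
          obtain ⟨d, hd, hd1, hd2⟩ := Nat.Prime.not_coprime_iff_dvd.1 hcop
          rcases hd.eq_two_or_odd' with rfl | ⟨j, hj⟩
          · apply Finset.mem_union_left
            simp only [D, Finset.mem_product, Finset.mem_Ioc, Finset.mem_filter]
            exact ⟨⟨⟨hr0, hrR⟩, hd1⟩, ⟨hq0, hqQ⟩, hd2⟩
          · apply Finset.mem_union_right
            simp only [D, Finset.mem_biUnion, Finset.mem_product, Finset.mem_Ioc, Finset.mem_filter]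
            have := Nat.le_of_dvd hr0 hd1
            have := hd.two_le
            exact ⟨j, ⟨by omega, by omega⟩, by
              rw [← hj]
              exact ⟨⟨⟨hr0, hrR⟩, hd1⟩, ⟨hq0, hqQ⟩, hd2⟩⟩
  have hD : ∀ d, ((D d).card : ℝ) ≤ R * Q * (1 / (d : ℝ) ^ 2) := by
    intro d
    simp only [D, Finset.card_product, Nat.Ioc_filter_dvd_card_eq_div, Nat.cast_mul]
    calc ((R / d : ℕ) : ℝ) * ((Q / d : ℕ) : ℝ) ≤ (R / d) * (Q / d) :=
          mul_le_mul Nat.cast_div_le Nat.cast_div_le (Nat.cast_nonneg _) (by positivity)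
      _ = _ := by rw [div_mul_div_comm, mul_one_div, pow_two]
  have hE1 : (E1.card : ℝ) ≤ R * Q / u := by
    simp only [E1, Finset.card_product, Nat.Ioc_filter_dvd_card_eq_div, Nat.cast_mul, Nat.card_Ioc,
      Nat.sub_zero]
    rw [mul_div_assoc]
    exact mul_le_mul_of_nonneg_left Nat.cast_div_le (Nat.cast_nonneg _)
  have hE2 : (E2.card : ℝ) ≤ Q * h * (R / u + 1) := by
    have h1 : E2.card ≤ (Finset.Ioc 0 Q ×ˢ Finset.range h).card * (R / u + 1) := by
      apply Finset.card_biUnion_le_card_mul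
      intro y _
      exact Finset.card_image_le.trans (count_shift R u _ hu)
    rw [Finset.card_product, Nat.card_Ioc, Finset.card_range, Nat.sub_zero] at h1
    have h2 : (E2.card : ℝ) ≤ Q * h * ((R / u : ℕ) + 1) := by exact_mod_cast h1
    refine h2.trans ?_
    have : ((R / u : ℕ) : ℝ) ≤ R / u := Nat.cast_div_le
    gcongr
  have hodd : (((Finset.Ioc 0 R).biUnion (fun j => D (2 * j + 1))).card : ℝ) ≤ R * Q * (1 / 4) := by
    have h1 : (((Finset.Ioc 0 R).biUnion (fun j => D (2 * j + 1))).card : ℝ)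
        ≤ ∑ j ∈ Finset.Ioc 0 R, ((D (2 * j + 1)).card : ℝ) := by
      exact_mod_cast Finset.card_biUnion_le
    refine h1.trans ((Finset.sum_le_sum fun j _ => hD (2 * j + 1)).trans ?_)
    rw [← Finset.mul_sum]
    have h2 := sum_odd R
    have h3 : (0 : ℝ) ≤ 1 / (4 * (R + 1)) := by positivity
    gcongr
    linarith
  have hcard := Finset.card_le_card hsub
  have hU : U.card = R * Q := by simp [U]
  have h5 := (Finset.card_union_le (goodPairs R Q h u) (D 2 ∪ (Finset.Ioc 0 R).biUnion (fun j => D (2 * j + 1)) ∪ E1 ∪ E2))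
  have h6 := Finset.card_union_le (D 2 ∪ (Finset.Ioc 0 R).biUnion (fun j => D (2 * j + 1)) ∪ E1) E2
  have h7 := Finset.card_union_le (D 2 ∪ (Finset.Ioc 0 R).biUnion (fun j => D (2 * j + 1))) E1
  have h8 := Finset.card_union_le (D 2) ((Finset.Ioc 0 R).biUnion (fun j => D (2 * j + 1)))
  have h9 : R * Q ≤ (goodPairs R Q h u).card + ((D 2).card + ((Finset.Ioc 0 R).biUnion (fun j => D (2 * j + 1))).card + E1.card + E2.card) := by
    omega
  have h10 : (R * Q : ℝ) ≤ (goodPairs R Q h u).card + ((D 2).card + ((Finset.Ioc 0 R).biUnion (fun j => D (2 * j + 1))).card + E1.card + E2.card) := by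
    exact_mod_cast h9
  have h11 := hD 2
  norm_num at h11
  linarith

theorem runs (p : ℕ) [Fact p.Prime] (χ : DirichletCharacter ℂ p) (R Q h u : ℕ)
    (hRQ : R * Q < p) (hu : u.Prime) (X : ℝ) (hh : 1 ≤ h) (hR : 1 ≤ R)
    (hX : (R : ℝ) + (h - 1) * Q < X) (hX2 : (Q : ℝ) < X)
    (hall : ∀ n : ℕ, 0 < n → Nat.gcd n u = 1 → (n : ℝ) < X → χ (n : ZMod p) = 1) :
    ∃ S : Finset (ZMod p), S.card = (goodPairs R Q h u).card ∧
      ∀ a ∈ S, ∀ m < h, χ (a + (m : ℕ)) = 1 := by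
  classical
  have hpp : p.Prime := Fact.out
  have hmem : ∀ x ∈ goodPairs R Q h u, (0 < x.1 ∧ x.1 ≤ R) ∧ (0 < x.2 ∧ x.2 ≤ Q) ∧
      Nat.Coprime x.1 x.2 ∧ ¬ u ∣ x.2 ∧ ∀ m < h, ¬ u ∣ x.1 + m * x.2 := by
    intro x hx
    simp only [goodPairs, Finset.mem_filter, Finset.mem_product, Finset.mem_Ioc] at hx
    exact ⟨hx.1.1, hx.1.2, hx.2⟩
  have hQp : Q < p := lt_of_le_of_lt (Nat.le_mul_of_pos_left _ hR) hRQ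
  have hq0 : ∀ x ∈ goodPairs R Q h u, (x.2 : ZMod p) ≠ 0 := by
    intro x hx h0
    obtain ⟨-, ⟨h1, h2⟩, -⟩ := hmem x hx
    rw [ZMod.natCast_eq_zero_iff] at h0
    have := Nat.le_of_dvd h1 h0
    omega
  refine ⟨(goodPairs R Q h u).image (fun x => (x.1 : ZMod p) / (x.2 : ZMod p)), ?_, ?_⟩
  · apply Finset.card_image_of_injOn
    intro x hx y hy hxy
    have hx' := hmem x hx
    have hy' := hmem y hy
    simp only at hxy
    rw [div_eq_div_iff (hq0 x hx) (hq0 y hy)] at hxy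
    have h1 : ((x.1 * y.2 : ℕ) : ZMod p) = ((y.1 * x.2 : ℕ) : ZMod p) := by exact_mod_cast hxy
    rw [ZMod.natCast_eq_natCast_iff] at h1
    have h2 : x.1 * y.2 = y.1 * x.2 := by
      apply Nat.ModEq.eq_of_lt_of_lt h1
      · exact lt_of_le_of_lt (Nat.mul_le_mul hx'.1.2 hy'.2.1.2) hRQ
      · exact lt_of_le_of_lt (Nat.mul_le_mul hy'.1.2 hx'.2.1.2) hRQ
    have h3 : x.1 ∣ y.1 := hx'.2.2.1.dvd_of_dvd_mul_right ⟨y.2, h2.symm⟩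
    have h4 : y.1 ∣ x.1 := hy'.2.2.1.dvd_of_dvd_mul_right ⟨x.2, h2⟩
    have h5 := Nat.dvd_antisymm h3 h4
    rw [h5] at h2
    have h6 := Nat.eq_of_mul_eq_mul_left hy'.1.1 h2
    exact Prod.ext h5 h6.symm
  · intro a ha m hm
    obtain ⟨x, hx, rfl⟩ := Finset.mem_image.1 ha
    obtain ⟨⟨hr0, hrR⟩, ⟨hq1, hqQ⟩, hc, huq, hum⟩ := hmem x hx
    have hcop : ∀ n, ¬ u ∣ n → Nat.gcd n u = 1 := fun n hn =>
      Nat.Coprime.symm ((Nat.Prime.coprime_iff_not_dvd hu).2 hn)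
    have h1 : χ ((x.2 : ℕ) : ZMod p) = 1 := by
      refine hall _ hq1 (hcop _ huq) (lt_of_le_of_lt ?_ hX2)
      exact_mod_cast hqQ
    have h2 : χ ((x.1 + m * x.2 : ℕ) : ZMod p) = 1 := by
      refine hall _ (by omega) (hcop _ (hum m hm)) (lt_of_le_of_lt ?_ hX)
      push_cast
      have h3 : (x.1 : ℝ) ≤ R := by exact_mod_cast hrR
      have h4 : (x.2 : ℝ) ≤ Q := by exact_mod_cast hqQ
      have h5 : (m : ℝ) ≤ h - 1 := by
        have : (m : ℝ) + 1 ≤ h := by exact_mod_cast hm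
        linarith
      have h6 : (m : ℝ) * x.2 ≤ (h - 1) * Q :=
        mul_le_mul h5 h4 (Nat.cast_nonneg _) (by have : (1 : ℝ) ≤ h := by exact_mod_cast hh
                                                 linarith)
      linarith
    have h7 : ((x.1 : ZMod p) / (x.2 : ZMod p) + (m : ℕ)) * (x.2 : ZMod p) = ((x.1 + m * x.2 : ℕ) : ZMod p) := by
      rw [add_mul, div_mul_cancel₀ _ (hq0 x hx)]
      push_cast
      ring
    have h8 := congrArg χ h7
    rw [map_mul, h1, h2, mul_one] at h8
    exact h8


theorem lower (p : ℕ) [Fact p.Prime] (χ : DirichletCharacter ℂ p) (u h : ℕ) (hu : u.Prime)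
    (y L : ℝ) (hy : 100000 ≤ y) (hyp : y ^ 4 = p) (hL : 45.7 ≤ L) (hLy : L ≤ 0.0005 * y)
    (huL : 7.38 * L ≤ u) (hh : 1 ≤ h) (hhL : (h : ℝ) ≤ 0.75 * L)
    (hall : ∀ n : ℕ, 0 < n → Nat.gcd n u = 1 → (n : ℝ) < 6.1374 * y * L → χ (n : ZMod p) = 1) :
    ∃ S : Finset (ZMod p), 3.5 * y ^ 2 * L ^ 2 ≤ S.card * h ∧
      ∀ a ∈ S, ∀ m < h, χ (a + (m : ℕ)) = 1 := by
  set X : ℝ := 6.1374 * y * L with hX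
  have hh1 : (1 : ℝ) ≤ h := by exact_mod_cast hh
  have hh0 : (0 : ℝ) < h := by linarith
  have hyL : 100000 * 45.7 ≤ y * L := mul_le_mul hy hL (by norm_num) (by linarith)
  have hXbig : 28000000 ≤ X := by rw [hX]; nlinarith
  set Y : ℝ := X / (2 * h) with hY
  have hYh : Y * h = X / 2 := by rw [hY]; field_simp
  have hYbig : 400000 ≤ Y := by
    by_contra hlt
    push Not at hlt
    have h1 : Y * h ≤ 400000 * (0.75 * L) :=
      mul_le_mul hlt.le hhL hh0.le (by norm_num)
    rw [hYh, hX] at h1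
    have h2 : 100000 * L ≤ y * L := mul_le_mul_of_nonneg_right hy (by linarith)
    nlinarith
  set R := ⌊X / 2⌋₊ with hR
  set Q := ⌊Y⌋₊ with hQ
  have hR1 : (R : ℝ) ≤ X / 2 := Nat.floor_le (by linarith)
  have hR2 : X / 2 < R + 1 := Nat.lt_floor_add_one _
  have hQ1 : (Q : ℝ) ≤ Y := Nat.floor_le (by linarith)
  have hQ2 : Y < Q + 1 := Nat.lt_floor_add_one _
  have hYX : Y ≤ X / 2 := by
    rw [← hYh]
    nlinarith
  have hRpos : (0 : ℝ) ≤ R := Nat.cast_nonneg _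
  have hQpos : (0 : ℝ) ≤ Q := Nat.cast_nonneg _
  have hRQ : R * Q < p := by
    have h1 : (R : ℝ) * Q ≤ X / 2 * (X / 2) := mul_le_mul hR1 (hQ1.trans hYX) hQpos (by linarith)
    have h2 : X / 2 * (X / 2) = 9.41691969 * (y ^ 2 * L ^ 2) := by rw [hX]; ring
    have h3 : L ^ 2 ≤ (0.0005 * y) ^ 2 := pow_le_pow_left₀ (by linarith) hLy 2
    have h4 : y ^ 2 * L ^ 2 ≤ y ^ 2 * (0.0005 * y) ^ 2 := mul_le_mul_of_nonneg_left h3 (by positivity)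
    have h5 : y ^ 2 * (0.0005 * y) ^ 2 = 0.00000025 * y ^ 4 := by ring
    have h6 : 0 < y ^ 4 := by positivity
    have h7 : (R : ℝ) * Q < p := by
      rw [← hyp]
      linarith
    exact_mod_cast h7
  have hupos : (0 : ℝ) < u := by linarith
  obtain ⟨S, hS, hSr⟩ := runs p χ R Q h u hRQ hu X hh
    (by
      have : (1 : ℝ) ≤ R := by linarith
      exact_mod_cast this)
    (by
      have h1 : (Q : ℝ) * h ≤ X / 2 := by
        rw [← hYh]; exact mul_le_mul_of_nonneg_right hQ1 hh0.le
      have h2 : (1 : ℝ) ≤ Q := by linarith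
      nlinarith)
    (by linarith) hall
  refine ⟨S, ?_, hSr⟩
  rw [hS]
  have hcard := goodPairs_card R Q h u hu.pos
  have hu1 : (1 : ℝ) / u ≤ 0.003 := by
    rw [div_le_iff₀ hupos]
    linarith
  have hu2 : (h : ℝ) / u ≤ 0.1017 := by
    rw [div_le_iff₀ hupos]
    linarith
  have hRQ0 : (0 : ℝ) ≤ R * Q := mul_nonneg hRpos hQpos
  have e1 : (R * Q / 2 - R * Q / u - Q * h * (R / u + 1) : ℝ)
      = R * Q * (1 / 2 - 1 / u - h / u) - Q * h := by
    field_simp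
    ring
  rw [e1] at hcard
  have e2 : (R * Q : ℝ) * 0.3953 ≤ R * Q * (1 / 2 - 1 / u - h / u) :=
    mul_le_mul_of_nonneg_left (by linarith) hRQ0
  have e3 : (Q : ℝ) * h ≤ X / 2 := by
    rw [← hYh]; exact mul_le_mul_of_nonneg_right hQ1 hh0.le
  have e4 : 0.9999 * (X / 2) * (0.9999 * Y) ≤ (R : ℝ) * Q :=
    mul_le_mul (by linarith) (by linarith) (by linarith) hRpos
  have e5 : X / 2 * 400000 ≤ X / 2 * Y := mul_le_mul_of_nonneg_left hYbig (by linarith)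
  have e6 : 0.39 * (X / 2 * Y) ≤ (goodPairs R Q h u).card := by
    linarith
  calc 3.5 * y ^ 2 * L ^ 2 ≤ 0.39 * (X / 2 * Y) * h := by
        have : 0.39 * (X / 2 * Y) * h = 0.39 * (X / 2 * (X / 2)) := by rw [← hYh]; ring
        rw [this, hX]
        have : 0 ≤ y ^ 2 * L ^ 2 := by positivity
        linarith
    _ ≤ _ := mul_le_mul_of_nonneg_right e6 hh0.le

theorem upper (p : ℕ) [Fact p.Prime] (l k h : ℕ) (hl : l.Prime) (hlk : l * k = p - 1)
    (y : ℝ) (hy : 100000 ≤ y) (hyp : y ^ 4 = p) (hh2 : 2 ≤ h)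
    (hhy : 100 * ((h : ℝ) + 1) ≤ y)
    (hlow : y ^ 2 ≤ (l : ℝ) ^ h) (hup : 100 * ((h : ℝ) + 1) * (l : ℝ) ^ h ≤ p)
    (S : Finset (ZMod p)) (hS : ∀ a ∈ S, ∀ m < h, (a + (m : ℕ)) ^ k = 1) :
    (S.card : ℝ) ≤ 4.1 * h * y ^ 2 := by
  have hpp : p.Prime := Fact.out
  have hh2' : (2 : ℝ) ≤ h := by exact_mod_cast hh2
  have hy2 : 10000000000 ≤ y ^ 2 := by nlinarith
  have hp0 : (0 : ℝ) < p := by rw [← hyp]; positivity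
  have hD0 : (0 : ℝ) < (l : ℝ) ^ h := lt_of_lt_of_le (by linarith) hlow
  set Z : ℝ := p / (l : ℝ) ^ h with hZ
  have hZD : Z * (l : ℝ) ^ h = p := by rw [hZ]; field_simp
  have hZbig : 100 * ((h : ℝ) + 1) ≤ Z := by
    rw [hZ, le_div_iff₀ hD0]; exact hup
  have hZy : Z ≤ y ^ 2 := by
    rw [hZ, div_le_iff₀ hD0, ← hyp]
    nlinarith
  set B := ⌊Z⌋₊ - h with hB
  have hfl1 : (⌊Z⌋₊ : ℝ) ≤ Z := Nat.floor_le (by linarith)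
  have hfl2 : Z < ⌊Z⌋₊ + 1 := Nat.lt_floor_add_one _
  have hhfl : h + 1 ≤ ⌊Z⌋₊ := by
    have : (h : ℝ) + 1 ≤ (⌊Z⌋₊ : ℝ) := by linarith
    exact_mod_cast this
  have hBh : B + h = ⌊Z⌋₊ := by omega
  have hBr : (B : ℝ) + h = (⌊Z⌋₊ : ℝ) := by exact_mod_cast hBh
  have hB1 : 1 ≤ B := by omega
  have hBlow : 0.99 * Z ≤ B := by linarith
  have hBup : (B : ℝ) ≤ y ^ 2 := by linarith
  set M := ⌊y ^ 2 / 2⌋₊ with hM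
  have hM1 : (M : ℝ) ≤ y ^ 2 / 2 := Nat.floor_le (by linarith)
  have hM2 : y ^ 2 / 2 < M + 1 := Nat.lt_floor_add_one _
  have hM0 : (0 : ℝ) ≤ M := Nat.cast_nonneg _
  have hhp : (h : ℝ) < p := by
    have : y ≤ p := by rw [← hyp]; nlinarith
    linarith
  have hhp' : h < p := by exact_mod_cast hhp
  have hinj : Function.Injective (fun m : Fin h => ((m.val : ℕ) : ZMod p)) := by
    intro m m' hmm
    simp only at hmm
    rw [ZMod.natCast_eq_natCast_iff] at hmm
    exact Fin.ext (Nat.ModEq.eq_of_lt_of_lt hmm (by have := m.isLt; omega) (by have := m'.isLt; omega))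
  have hstep := stepanov p l k hl hlk (fun m : Fin h => ((m.val : ℕ) : ZMod p)) hinj h B M
    (by
      rw [Fintype.card_fin, hBh]
      have : (l : ℝ) ^ h * (⌊Z⌋₊ : ℝ) ≤ p := by
        rw [← hZD, mul_comm Z]
        exact mul_le_mul_of_nonneg_left hfl1 hD0.le
      exact_mod_cast this)
    (by
      have : (M : ℝ) ≤ p := by rw [← hyp]; nlinarith
      exact_mod_cast this)
    hB1
    (by
      rw [Fintype.card_fin]
      have h1 : (M : ℝ) * (h + B + M * h) ≤ y ^ 2 / 2 * (h + y ^ 2 + y ^ 2 / 2 * h) := by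
        have : (M : ℝ) * h ≤ y ^ 2 / 2 * h := mul_le_mul_of_nonneg_right hM1 (by linarith)
        refine mul_le_mul hM1 (by linarith) ?_ (by linarith)
        have : (0 : ℝ) ≤ B := Nat.cast_nonneg _
        positivity
      have h2 : 0.99 * (p : ℝ) * h ≤ (l : ℝ) ^ h * h * B := by
        have : (l : ℝ) ^ h * (0.99 * Z) ≤ (l : ℝ) ^ h * B := mul_le_mul_of_nonneg_left hBlow hD0.le
        have h3 : (l : ℝ) ^ h * (0.99 * Z) = 0.99 * p := by rw [← hZD]; ring
        rw [h3] at this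
        nlinarith
      have h3 : y ^ 2 / 2 * (h + y ^ 2 + y ^ 2 / 2 * h) < 0.99 * (p : ℝ) * h := by
        rw [← hyp, show y ^ 4 = y ^ 2 * y ^ 2 by ring]
        have h4 : y ^ 2 / 2 * (h + y ^ 2 + y ^ 2 / 2 * h) = y ^ 2 * (h / 2 + y ^ 2 / 2 + y ^ 2 * h / 4) := by ring
        have h5 : 0.99 * (y ^ 2 * y ^ 2) * h = y ^ 2 * (0.99 * (y ^ 2 * h)) := by ring
        rw [h4, h5]
        refine mul_lt_mul_of_pos_left ?_ (by linarith)
        have h6 : y ^ 2 * 2 ≤ y ^ 2 * h := mul_le_mul_of_nonneg_left hh2' (by linarith)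
        have h7 : 10000000000 * (h : ℝ) ≤ y ^ 2 * h := mul_le_mul_of_nonneg_right hy2 (by linarith)
        linarith
      have h4 : (M : ℝ) * (h + B + M * h) < (l : ℝ) ^ h * h * B := by linarith
      exact_mod_cast h4)
    S (fun a ha m => hS a ha m.val m.isLt)
  rw [Fintype.card_fin] at hstep
  have hstep' : (S.card : ℝ) * M ≤ B + p * h + h * p := by exact_mod_cast hstep
  have hpy : (p : ℝ) = y ^ 2 * y ^ 2 := by rw [← hyp]; ring
  by_contra hlt
  push Not at hlt
  have h1 : 4.1 * h * y ^ 2 * (0.4999 * y ^ 2) ≤ S.card * M :=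
    mul_le_mul hlt.le (by linarith) (by positivity) (Nat.cast_nonneg _)
  have h2 : 4.1 * h * y ^ 2 * (0.4999 * y ^ 2) = 2.04959 * (h * (y ^ 2 * y ^ 2)) := by ring
  have h3 : (B : ℝ) + p * h + h * p ≤ y ^ 2 + 2 * (h * (y ^ 2 * y ^ 2)) := by
    rw [hpy]; linarith
  have h4 : y ^ 2 * 10000000000 ≤ y ^ 2 * y ^ 2 := mul_le_mul_of_nonneg_left hy2 (by linarith)
  have h5 : 1 * (y ^ 2 * y ^ 2) ≤ h * (y ^ 2 * y ^ 2) :=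
    mul_le_mul_of_nonneg_right (by linarith) (by positivity)
  linarith

theorem main (p : ℕ) [Fact p.Prime] (hp : (10:ℕ)^20 ≤ p)
    (χ : DirichletCharacter ℂ p) (hχ : χ ≠ 1)
    (u : ℕ) (hu : u.Prime) (hu2 : Real.exp 2 * Real.log p ≤ u) :
    ∃ n : ℕ, 0 < n ∧ Nat.gcd n u = 1 ∧ χ (n : ZMod p) ≠ 1 ∧
      (n : ℝ) < 6.1374 * (p : ℝ) ^ ((1:ℝ)/4) * Real.log p := by
  by_contra hcon
  push Not at hcon
  have hpp : p.Prime := Fact.out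
  have hpR : (10 : ℝ) ^ 20 ≤ p := by exact_mod_cast hp
  have hp0 : (0 : ℝ) < p := lt_of_lt_of_le (by norm_num) hpR
  set y : ℝ := (p : ℝ) ^ ((1:ℝ)/4) with hy_def
  set L := Real.log p with hL_def
  have hy0 : 0 < y := Real.rpow_pos_of_pos hp0 _
  have hyp : y ^ 4 = p := by
    rw [hy_def, ← Real.rpow_natCast, ← Real.rpow_mul hp0.le]
    norm_num
  have hy : 100000 ≤ y := by
    by_contra hlt
    push Not at hlt
    have : y ^ 4 < 100000 ^ 4 := pow_lt_pow_left₀ hlt hy0.le (by norm_num)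
    rw [hyp] at this
    norm_num at this hpR
    linarith
  have hlog2 := Real.log_two_gt_d9
  have hlog2' := Real.log_two_lt_d9
  have hL : 45.7 ≤ L := by
    have h1 : Real.log ((2 : ℝ) ^ 66) ≤ L :=
      Real.log_le_log (by positivity) (le_trans (by norm_num) hpR)
    rw [Real.log_pow] at h1
    push_cast at h1
    linarith
  have hLy4 : L = 4 * Real.log y := by
    rw [hL_def, ← hyp, Real.log_pow]
    norm_num
  have hLy : L ≤ 0.0005 * y := by
    have h1 : Real.log (y / 100000) ≤ y / 100000 - 1 := Real.log_le_sub_one_of_pos (by positivity)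
    rw [Real.log_div hy0.ne' (by norm_num)] at h1
    have h2 : Real.log 100000 ≤ Real.log ((2 : ℝ) ^ 17) :=
      Real.log_le_log (by norm_num) (by norm_num)
    rw [Real.log_pow] at h2
    push_cast at h2
    rw [hLy4]
    linarith
  have huL : 7.38 * L ≤ u := by
    refine le_trans ?_ hu2
    have h1 := Real.exp_one_gt_d9
    have h2 : Real.exp 2 = Real.exp 1 * Real.exp 1 := by rw [← Real.exp_add]; norm_num
    have h3 : 7.38 ≤ Real.exp 2 := by rw [h2]; nlinarith
    exact mul_le_mul_of_nonneg_right h3 (by linarith)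
  have hall : ∀ n : ℕ, 0 < n → Nat.gcd n u = 1 → (n : ℝ) < 6.1374 * y * L → χ (n : ZMod p) = 1 := by
    intro n hn hg hlt
    by_contra hne
    exact absurd hlt (not_lt.2 (hcon n hn hg hne))
  obtain ⟨l, k, hl, hlk, hpow⟩ := char_power p χ hχ
  have hl0 : (0 : ℝ) < l := by exact_mod_cast hl.pos
  have hL2 : 2000 ≤ L ^ 2 := by nlinarith
  have hy2 : 0 < y ^ 2 := by positivity
  by_cases hbig : y ^ 2 ≤ 1000 * (l : ℝ)
  · obtain ⟨S, hS1, hS2⟩ := lower p χ u 1 hu y L hy hyp hL hLy huL le_rfl (by push_cast; linarith) hall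
    have hk0 : 0 < k := by
      rcases Nat.eq_zero_or_pos k with h0 | h0
      · rw [h0, mul_zero] at hlk
        have := hpp.two_le
        omega
      · exact h0
    have hScard : S.card ≤ k := by
      have hsub : S ⊆ nthRootsFinset k (1 : ZMod p) := by
        intro a ha
        rw [mem_nthRootsFinset hk0]
        apply hpow
        simpa using hS2 a ha 0 (by norm_num)
      refine (Finset.card_le_card hsub).trans ?_
      classical
      rw [nthRootsFinset_def]
      exact (Multiset.toFinset_card_le _).trans (card_nthRoots k 1)
    have hkl : (l : ℝ) * k ≤ p := by
      have : l * k ≤ p := by omega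
      exact_mod_cast this
    have hS' : (S.card : ℝ) ≤ k := by exact_mod_cast hScard
    push_cast at hS1
    have h1 : y ^ 2 * k ≤ y ^ 2 * (1000 * y ^ 2) := by
      calc y ^ 2 * k ≤ 1000 * l * k := mul_le_mul_of_nonneg_right hbig (Nat.cast_nonneg _)
        _ = 1000 * (l * k) := by ring
        _ ≤ 1000 * p := by linarith
        _ = _ := by rw [← hyp]; ring
    have h2 := le_of_mul_le_mul_left h1 hy2
    nlinarith
  · push Not at hbig
    have hl2 : (2 : ℝ) ≤ l := by exact_mod_cast hl.two_le
    have hex : ∃ h : ℕ, y ^ 2 ≤ (l : ℝ) ^ h := by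
      obtain ⟨n, hn⟩ := pow_unbounded_of_one_lt (y ^ 2) (by linarith : (1 : ℝ) < l)
      exact ⟨n, hn.le⟩
    classical
    obtain ⟨h, hhlow, hhmin⟩ : ∃ h : ℕ, y ^ 2 ≤ (l : ℝ) ^ h ∧ ∀ m < h, (l : ℝ) ^ m < y ^ 2 :=
      ⟨Nat.find hex, Nat.find_spec hex, fun m hm => not_le.1 (Nat.find_min hex hm)⟩
    have hh2 : 2 ≤ h := by
      by_contra hlt
      have h3 : (l : ℝ) ^ h ≤ (l : ℝ) ^ 1 := pow_le_pow_right₀ (by linarith) (by omega)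
      rw [pow_one] at h3
      linarith
    have hprev := hhmin (h - 1) (by omega)
    have hhL : (h : ℝ) ≤ 0.75 * L := by
      have h1 : (2 : ℝ) ^ (h - 1) ≤ y ^ 2 :=
        (pow_le_pow_left₀ (by norm_num) hl2 _).trans hprev.le
      have h2 := Real.log_le_log (by positivity) h1
      rw [Real.log_pow, Real.log_pow, Nat.cast_sub (by omega)] at h2
      push_cast at h2
      have h3 : (1 : ℝ) ≤ h := by exact_mod_cast (by omega : 1 ≤ h)
      have h4 : ((h : ℝ) - 1) * 0.6931 ≤ (h - 1) * Real.log 2 :=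
        mul_le_mul_of_nonneg_left (by linarith) (by linarith)
      linarith
    have hhy : 100 * ((h : ℝ) + 1) ≤ y := by linarith
    have hup : 100 * ((h : ℝ) + 1) * (l : ℝ) ^ h ≤ p := by
      rcases Nat.lt_or_ge h 3 with h3 | h3
      · have : h = 2 := by omega
        subst this
        rw [← hyp]
        push_cast
        have h4 : (1000 * (l : ℝ)) ^ 2 ≤ (y ^ 2) ^ 2 := pow_le_pow_left₀ (by linarith) hbig.le 2
        have h5 : (0 : ℝ) ≤ (l : ℝ) ^ 2 := by positivity
        nlinarith
      · have h4 : (l : ℝ) ^ h ≤ y ^ 3 := by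
          have h5 : ((l : ℝ) ^ h) ^ 4 ≤ (y ^ 3) ^ 4 := by
            calc ((l : ℝ) ^ h) ^ 4 = (l : ℝ) ^ (h * 4) := by rw [pow_mul]
              _ ≤ (l : ℝ) ^ ((h - 1) * 6) := pow_le_pow_right₀ (by linarith) (by omega)
              _ = ((l : ℝ) ^ (h - 1)) ^ 6 := by rw [pow_mul]
              _ ≤ (y ^ 2) ^ 6 := pow_le_pow_left₀ (by positivity) hprev.le 6
              _ = _ := by ring
          exact le_of_pow_le_pow_left₀ (by norm_num) (by positivity) h5
        calc 100 * ((h : ℝ) + 1) * (l : ℝ) ^ h ≤ y * y ^ 3 :=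
              mul_le_mul hhy h4 (by positivity) hy0.le
          _ = p := by rw [← hyp]; ring
    obtain ⟨S, hS1, hS2⟩ := lower p χ u h hu y L hy hyp hL hLy huL (by omega) hhL hall
    have hS3 := upper p l k h hl hlk y hy hyp hh2 hhy hhlow hup S
      (fun a ha m hm => hpow _ (hS2 a ha m hm))
    have hh0 : (0 : ℝ) ≤ h := Nat.cast_nonneg _
    have h1 : (S.card : ℝ) * h ≤ 4.1 * h * y ^ 2 * h := mul_le_mul_of_nonneg_right hS3 hh0
    have h2 : (h : ℝ) ^ 2 ≤ (0.75 * L) ^ 2 := pow_le_pow_left₀ hh0 hhL 2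
    have h3 : y ^ 2 * (3.5 * L ^ 2) ≤ y ^ 2 * (4.1 * h ^ 2) := by linarith
    have h4 := le_of_mul_le_mul_left h3 hy2
    nlinarith

end Step

theorem second_smallest_nonresidue_10_20 (p : ℕ) [Fact p.Prime] (hp : (10:ℕ)^20 ≤ p)
    (χ : DirichletCharacter ℂ p) (hχ : χ ≠ 1)
    (u : ℕ) (hu : u.Prime) (hu2 : Real.exp 2 * Real.log p ≤ u) :
    ∃ n : ℕ, 0 < n ∧ Nat.gcd n u = 1 ∧ χ (n : ZMod p) ≠ 1 ∧
      (n : ℝ) < 6.1374 * (p : ℝ) ^ ((1:ℝ)/4) * Real.log p :=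
  Step.main p hp χ hχ u hu hu2
end

section
/- Let χ be a non-principal Dirichlet character modulo a prime p ≥ 10^7, and let q_1 < q_2 be the two smallest prime non-residues of χ. If q_1 > e²·log p, then q_2 < 11.0421·p^{1/4}·log p. -/
open Polynomial

theorem st_logderiv {K ι : Type*} [Field K] [DecidableEq ι] (b : ι → K) (n : ι → ℕ) (s : Finset ι) :
    ∃ Q : K[X], Q.natDegree ≤ s.card ∧
      (∏ m ∈ s, (X - C (b m))) * derivative (∏ m ∈ s, (X - C (b m)) ^ n m)
        = (∏ m ∈ s, (X - C (b m)) ^ n m) * Q := by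
  induction s using Finset.induction_on with
  | empty => exact ⟨0, by simp, by simp⟩
  | insert a s ha ih =>
    obtain ⟨Q, hQ, h⟩ := ih
    refine ⟨C (n a : K) * (∏ m ∈ s, (X - C (b m))) + (X - C (b a)) * Q, ?_, ?_⟩
    · rw [Finset.card_insert_of_notMem ha]
      refine (natDegree_add_le _ _).trans (max_le ?_ ?_)
      · refine (natDegree_C_mul_le _ _).trans ?_
        rw [natDegree_prod_of_monic _ _ (fun i _ => monic_X_sub_C _)]
        simp
      · refine natDegree_mul_le.trans ?_
        rw [natDegree_X_sub_C]; omega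
    · rw [Finset.prod_insert ha, Finset.prod_insert ha, derivative_mul]
      have h1 : (X - C (b a)) * derivative ((X - C (b a)) ^ n a)
          = C (n a : K) * (X - C (b a)) ^ n a := by
        rcases Nat.eq_zero_or_pos (n a) with h0 | h0
        · simp [h0]
        · rw [derivative_X_sub_C_pow]
          obtain ⟨r, hr⟩ : ∃ r, n a = r + 1 := ⟨n a - 1, by omega⟩
          rw [hr]; simp only [Nat.add_sub_cancel]; ring
      generalize (X - C (b a)) ^ n a = y at *
      generalize derivative y = y' at *
      generalize derivative (∏ m ∈ s, (X - C (b m)) ^ n m) = gd at *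
      generalize (∏ m ∈ s, (X - C (b m)) ^ n m) = g at *
      generalize (∏ m ∈ s, (X - C (b m))) = P at *
      linear_combination (P * g) * h1 + (X - C (b a)) * y * h

/-- The differentiated coefficient. -/
noncomputable def stA {K : Type*} [Field K] (P Q : K[X]) : ℕ → K[X] →ₗ[K] K[X]
  | 0 => LinearMap.id
  | i + 1 => (LinearMap.mulLeft K P ∘ₗ derivative + LinearMap.mulLeft K (Q - C (i : K) * derivative P)) ∘ₗ stA P Q i

theorem stA_degree {K : Type*} [Field K] (P Q : K[X]) (k : ℕ) (hP : P.natDegree ≤ k)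
    (hQ : Q.natDegree ≤ k) (i : ℕ) (a : K[X]) :
    (stA P Q i a).natDegree ≤ a.natDegree + i * k := by
  induction i with
  | zero => simp [stA]
  | succ i ih =>
    have : stA P Q (i+1) a = P * derivative (stA P Q i a) + (Q - C (i : K) * derivative P) * stA P Q i a := by
      simp [stA]
    rw [this]
    have h1 := natDegree_derivative_le (stA P Q i a)
    have h2 : (C (i : K) * derivative P).natDegree ≤ k :=
      (natDegree_C_mul_le _ _).trans ((natDegree_derivative_le P).trans (by omega))
    have h3 : (Q - C (i : K) * derivative P).natDegree ≤ k :=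
      (natDegree_sub_le _ _).trans (max_le hQ h2)
    have e : (i+1) * k = i * k + k := by ring
    refine (natDegree_add_le _ _).trans (max_le ?_ ?_)
    · refine natDegree_mul_le.trans ?_
      omega
    · refine natDegree_mul_le.trans ?_
      omega

theorem stA_deriv {K : Type*} [Field K] (P Q g u : K[X]) (hg : P * derivative g = g * Q)
    (hu : derivative u = 0) (i : ℕ) (a : K[X]) :
    P ^ i * derivative^[i] (a * g * u) = stA P Q i a * g * u := by
  induction i with
  | zero => simp [stA]
  | succ i ih =>
    have e : stA P Q (i+1) a = P * derivative (stA P Q i a) + (Q - C (i : K) * derivative P) * stA P Q i a := by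
      simp [stA]
    rw [e, Function.iterate_succ_apply']
    have h := congrArg derivative ih
    rw [derivative_mul, derivative_mul, derivative_mul, hu] at h
    generalize derivative^[i] (a * g * u) = D at *
    have h1 : P * derivative (P ^ i) = C (i : K) * derivative P * P ^ i := by
      cases i with
      | zero => simp
      | succ r => rw [derivative_pow]; simp only [Nat.add_sub_cancel]; ring
    linear_combination P * h - D * h1 - (C (i:K) * derivative P) * ih + stA P Q i a * u * hg

theorem st_indep {K : Type*} [Field K] (ℓ p w k J : ℕ) [Fact ℓ.Prime] (hw : 0 < w) (hwp : w * ℓ ≤ p)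
    (b : Fin k → K) (hb : Function.Injective b) (e : Fin k → ZMod ℓ) (m0 : Fin k) (he : e m0 ≠ 0)
    (a : ZMod ℓ × Fin J → K[X]) (ha : ∀ x, (a x).degree < w)
    (h0 : ∑ x, a x * (∏ m, (X - C (b m)) ^ (w * (x.1 * e m).val)) * ((X - C (b m0)) ^ p) ^ (x.2 : ℕ) = 0) :
    ∀ x, a x = 0 := by
  classical
  by_contra hne
  push Not at hne
  obtain ⟨x0, hx0⟩ := hne
  set N : ZMod ℓ × Fin J → ℕ := fun x => w * (x.1 * e m0).val + p * x.2 with hN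
  obtain ⟨x, hx, hmin⟩ := Finset.exists_min_image (Finset.univ.filter fun x => a x ≠ 0) N ⟨x0, by simpa using hx0⟩
  simp only [Finset.mem_filter, Finset.mem_univ, true_and] at hx hmin
  set y : K[X] := X - C (b m0) with hy
  have hterm : ∀ x : ZMod ℓ × Fin J, a x * (∏ m, (X - C (b m)) ^ (w * (x.1 * e m).val)) * (y ^ p) ^ (x.2 : ℕ)
      = y ^ N x * (a x * ∏ m ∈ Finset.univ.erase m0, (X - C (b m)) ^ (w * (x.1 * e m).val)) := by
    intro x
    rw [← Finset.mul_prod_erase Finset.univ _ (Finset.mem_univ m0), ← pow_mul, hN]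
    simp only [pow_add]
    ring
  have hgap : ∀ x', x' ≠ x → N x ≤ N x' → N x + w ≤ N x' := by
    rintro ⟨c', j'⟩ hxx hle
    obtain ⟨c, j⟩ := x
    simp only [hN] at hle ⊢
    have v1 := ZMod.val_lt (c * e m0)
    have v2 := ZMod.val_lt (c' * e m0)
    rcases lt_trichotomy (j : ℕ) j' with hj | hj | hj
    · have : w * ((c * e m0).val + 1) ≤ w * ℓ := Nat.mul_le_mul_left _ v1
      have : p * ((j:ℕ) + 1) ≤ p * j' := Nat.mul_le_mul_left _ hj
      nlinarith
    · have hc : (c * e m0).val ≠ (c' * e m0).val := by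
        intro h
        have := mul_right_cancel₀ he (ZMod.val_injective ℓ h)
        apply hxx
        rw [this, Fin.ext hj]
      rw [hj] at hle ⊢
      have hle' : (c * e m0).val ≤ (c' * e m0).val := by
        have : w * (c * e m0).val ≤ w * (c' * e m0).val := by omega
        exact Nat.le_of_mul_le_mul_left this hw
      have : w * ((c * e m0).val + 1) ≤ w * (c' * e m0).val := Nat.mul_le_mul_left _ (by omega)
      nlinarith
    · exfalso
      have : w * ((c' * e m0).val + 1) ≤ w * ℓ := Nat.mul_le_mul_left _ v2
      have : p * ((j':ℕ) + 1) ≤ p * j := Nat.mul_le_mul_left _ hj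
      nlinarith
  have hdvd : y ^ (N x + w) ∣ y ^ N x * (a x * ∏ m ∈ Finset.univ.erase m0, (X - C (b m)) ^ (w * (x.1 * e m).val)) := by
    rw [← hterm]
    rw [← Finset.add_sum_erase Finset.univ _ (Finset.mem_univ x)] at h0
    rw [eq_neg_of_add_eq_zero_left h0, dvd_neg]
    refine Finset.dvd_sum fun x' hx' => ?_
    rw [hterm]
    by_cases hax : a x' = 0
    · simp [hax]
    · exact Dvd.dvd.mul_right (pow_dvd_pow _ (hgap x' (Finset.ne_of_mem_erase hx') (hmin x' hax))) _
  rw [pow_add] at hdvd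
  have hy0 : y ^ N x ≠ 0 := pow_ne_zero _ (X_sub_C_ne_zero _)
  have hd2 := (mul_dvd_mul_iff_left hy0).1 hdvd
  have hcop : IsCoprime (y ^ w) (∏ m ∈ Finset.univ.erase m0, (X - C (b m)) ^ (w * (x.1 * e m).val)) := by
    refine IsCoprime.prod_right fun m hm => IsCoprime.pow ?_
    exact pairwise_coprime_X_sub_C hb (Finset.ne_of_mem_erase hm).symm
  have hd3 := hcop.dvd_of_dvd_mul_right hd2
  have := degree_le_of_dvd hd3 hx
  rw [hy, degree_pow, degree_X_sub_C] at this
  have h2 := ha x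
  simp at this
  exact absurd (lt_of_lt_of_le h2 this) (lt_irrefl _)

theorem st_aux_exists {K : Type*} [Field K] (ℓ w k J M B : ℕ) [Fact ℓ.Prime]
    (L : ZMod ℓ → ℕ → K[X] →ₗ[K] K[X])
    (hL : ∀ c i a, (L c i a).natDegree ≤ a.natDegree + i * k) (y : K[X]) (hy : y.natDegree ≤ 1)
    (hw : 0 < w) (hB : w + J + M * k ≤ B) (hcount : M * B < w * J * ℓ) :
    ∃ a : ZMod ℓ × Fin J → K[X], (∀ x, (a x).degree < w) ∧ (∃ x, a x ≠ 0) ∧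
      ∀ i < M, ∑ x, L x.1 i (a x) * y ^ (x.2 : ℕ) = 0 := by
  classical
  let Φ : (ZMod ℓ × Fin J → degreeLT K w) →ₗ[K] (Fin M × Fin B → K) :=
    LinearMap.pi fun t => lcoeff K (t.2 : ℕ) ∘ₗ
      ∑ x : ZMod ℓ × Fin J, LinearMap.mulRight K (y ^ (x.2 : ℕ)) ∘ₗ L x.1 t.1 ∘ₗ
        (degreeLT K w).subtype ∘ₗ LinearMap.proj x
  have hfin : Module.finrank K (degreeLT K w) = w := by
    rw [LinearEquiv.finrank_eq (degreeLTEquiv K w)]; simp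
  have : FiniteDimensional K (degreeLT K w) := (degreeLTEquiv K w).symm.finiteDimensional
  have hker : LinearMap.ker Φ ≠ ⊥ := by
    apply LinearMap.ker_ne_bot_of_finrank_lt
    rw [Module.finrank_pi, Module.finrank_pi_fintype]
    simp only [hfin, Finset.sum_const, Finset.card_univ, Fintype.card_prod, Fintype.card_fin, ZMod.card, smul_eq_mul]
    calc M * B < w * J * ℓ := hcount
      _ = _ := by ring
  obtain ⟨v, hv, hv0⟩ := Submodule.exists_mem_ne_zero_of_ne_bot hker
  refine ⟨fun x => (v x : K[X]), fun x => mem_degreeLT.1 (v x).2, ?_, ?_⟩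
  · by_contra h
    push Not at h
    exact hv0 (funext fun x => Subtype.ext (h x))
  · intro i hi
    have hdeg : (∑ x, L x.1 i (v x : K[X]) * y ^ (x.2 : ℕ)).natDegree < B := by
      refine lt_of_le_of_lt (natDegree_sum_le_of_forall_le (n := w - 1 + M * k + J) _ _ ?_) (by omega)
      intro x _
      refine natDegree_mul_le.trans ?_
      have h1 := hL x.1 i (v x : K[X])
      have h2 : (v x : K[X]).natDegree ≤ w - 1 := by
        have := mem_degreeLT.1 (v x).2
        by_cases h0 : (v x : K[X]) = 0
        · simp [h0]
        · have := (natDegree_lt_iff_degree_lt h0).2 this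
          omega
      have h3 : (y ^ (x.2 : ℕ)).natDegree ≤ J :=
        natDegree_pow_le.trans (by nlinarith [x.2.2])
      have h4 : i * k ≤ M * k := Nat.mul_le_mul_right _ hi.le
      omega
    ext n
    rw [coeff_zero]
    by_cases hn : n < B
    · have := congrFun (LinearMap.mem_ker.1 hv) (⟨i, hi⟩, ⟨n, hn⟩)
      simpa [Φ] using this
    · exact coeff_eq_zero_of_natDegree_lt (lt_of_lt_of_le hdeg (by omega))

theorem stepanov_s2 (p ℓ w k J M : ℕ) [Fact p.Prime] [Fact ℓ.Prime] (hw : w * ℓ = p - 1)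
    (b : Fin k → ZMod p) (hb : Function.Injective b) (e : Fin k → ZMod ℓ) (he : e ≠ 0)
    (hM : M ≤ p) (hcount : M * (w + J + M * k) < w * J * ℓ) (S : Finset (ZMod p))
    (hS : ∀ z ∈ S, (∀ m, z - b m ≠ 0) ∧ ∏ m, (z - b m) ^ (w * (e m).val) = 1) :
    S.card * M ≤ p * (J + k) := by
  classical
  have hp1 : 1 < p := (Fact.out : p.Prime).one_lt
  obtain ⟨m0, hm0⟩ : ∃ m0, e m0 ≠ 0 := by
    by_contra h; push Not at h; exact he (funext h)
  rcases Nat.eq_zero_or_pos M with hM0 | hMpos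
  · simp [hM0]
  have hwpos : 0 < w := by
    rcases Nat.eq_zero_or_pos w with h | h
    · subst h; simp at hcount
    · exact h
  set P : (ZMod p)[X] := ∏ m, (X - C (b m)) with hP
  set g : ZMod ℓ → (ZMod p)[X] := fun c => ∏ m, (X - C (b m)) ^ (w * (c * e m).val) with hg
  have hQ : ∀ c, ∃ Q : (ZMod p)[X], Q.natDegree ≤ k ∧ P * derivative (g c) = g c * Q := by
    intro c
    obtain ⟨Q, h1, h2⟩ := st_logderiv b (fun m => w * (c * e m).val) Finset.univ
    exact ⟨Q, by simpa using h1, h2⟩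
  choose Q hQ1 hQ2 using hQ
  have hPdeg : P.natDegree ≤ k := by
    rw [hP, natDegree_prod_of_monic _ _ (fun i _ => monic_X_sub_C _)]; simp
  obtain ⟨a, ha1, ⟨x1, hx1⟩, ha3⟩ := st_aux_exists ℓ w k J M (w + J + M * k)
    (fun c => stA P (Q c)) (fun c i a => stA_degree P (Q c) k hPdeg (hQ1 c) i a) (X - C (b m0))
    (by rw [natDegree_X_sub_C]) hwpos le_rfl hcount
  set F : (ZMod p)[X] := ∑ x, a x * g x.1 * ((X - C (b m0)) ^ p) ^ (x.2 : ℕ) with hF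
  have hF0 : F ≠ 0 := by
    intro h
    exact hx1 (st_indep ℓ p w k J hwpos (by omega) b hb e m0 hm0 a ha1 h x1)
  have hmult : ∀ z ∈ S, (X - C z) ^ M ∣ F := by
    intro z hz
    obtain ⟨hz1, hz2⟩ := hS z hz
    rw [← le_rootMultiplicity_iff hF0]
    obtain ⟨r, rfl⟩ : ∃ r, M = r + 1 := ⟨M - 1, by omega⟩
    refine lt_rootMultiplicity_of_isRoot_iterate_derivative_of_mem_nonZeroDivisors hF0 ?_ ?_
    · intro i hi
      have hPz : P.eval z ≠ 0 := by
        rw [hP, eval_prod, Finset.prod_ne_zero_iff]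
        intro m _; simpa using hz1 m
      have hgz : ∀ c, (g c).eval z = 1 := by
        intro c
        rw [hg, eval_prod]
        calc ∏ m, ((X - C (b m)) ^ (w * (c * e m).val)).eval z
            = ∏ m, ((z - b m) ^ (w * (e m).val)) ^ c.val := by
              refine Finset.prod_congr rfl fun m _ => ?_
              have h1 : ((z - b m) ^ w) ^ ℓ = 1 := by
                rw [← pow_mul, hw]; exact ZMod.pow_card_sub_one_eq_one (hz1 m)
              have h2 : c.val * (e m).val = (c * e m).val + ℓ * (c.val * (e m).val / ℓ) := by
                rw [ZMod.val_mul]; exact (Nat.mod_add_div _ _).symm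
              simp only [eval_pow, eval_sub, eval_X, eval_C]
              rw [← pow_mul, mul_assoc, mul_comm (e m).val, h2, pow_mul, pow_mul, pow_add, pow_mul _ ℓ, h1]
              simp
          _ = 1 := by rw [Finset.prod_pow, hz2, one_pow]
      have hsum : P ^ i * derivative^[i] F
          = ∑ x, stA P (Q x.1) i (a x) * g x.1 * ((X - C (b m0)) ^ p) ^ (x.2 : ℕ) := by
        rw [hF, iterate_derivative_sum, Finset.mul_sum]
        refine Finset.sum_congr rfl fun x _ => ?_
        apply stA_deriv _ _ _ _ (hQ2 x.1)
        rw [derivative_pow, derivative_pow]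
        simp
      have h3 := congrArg (eval z) hsum
      have h4 := congrArg (eval z) (ha3 i (by omega))
      rw [eval_mul, eval_pow] at h3
      rw [eval_finsetSum] at h3 h4
      have h5 : ∑ x, eval z (stA P (Q x.1) i (a x) * g x.1 * ((X - C (b m0)) ^ p) ^ (x.2 : ℕ)) = 0 := by
        rw [← eval_zero (x := z), ← h4]
        refine Finset.sum_congr rfl fun x _ => ?_
        simp only [eval_mul, hgz, eval_pow, eval_sub, eval_X, eval_C, ZMod.pow_card, mul_one]
      rw [h5] at h3
      exact (mul_eq_zero.1 h3).resolve_left (pow_ne_zero _ hPz)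
    · rw [mem_nonZeroDivisors_iff_ne_zero]
      intro h
      rw [ZMod.natCast_eq_zero_iff, (Fact.out : p.Prime).dvd_factorial] at h
      omega
  have hprod : ∏ z ∈ S, (X - C z) ^ M ∣ F := by
    refine Finset.prod_dvd_of_coprime ?_ hmult
    intro z _ z' _ hzz
    exact (pairwise_coprime_X_sub_C Function.injective_id hzz).pow
  have hdeg := natDegree_le_of_dvd hprod hF0
  rw [natDegree_prod_of_monic _ _ (fun i _ => (monic_X_sub_C _).pow _)] at hdeg
  simp only [natDegree_pow, natDegree_X_sub_C, mul_one, Finset.sum_const, smul_eq_mul] at hdeg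
  refine hdeg.trans ?_
  rw [hF]
  refine natDegree_sum_le_of_forall_le _ _ ?_
  intro x _
  have h1 : (a x).natDegree ≤ w := by
    by_cases h0 : a x = 0
    · simp [h0]
    · exact ((natDegree_lt_iff_degree_lt h0).2 (ha1 x)).le
  have h2 : (g x.1).natDegree ≤ k * (p - 1) := by
    simp only [hg]
    rw [natDegree_prod_of_monic _ _ (fun i _ => (monic_X_sub_C _).pow _)]
    refine (Finset.sum_le_card_nsmul _ _ (p - 1) ?_).trans (by simp)
    intro m _
    rw [natDegree_pow, natDegree_X_sub_C, mul_one, ← hw]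
    exact Nat.mul_le_mul_left _ (ZMod.val_lt _).le
  have h3 : (((X - C (b m0)) ^ p) ^ (x.2 : ℕ)).natDegree = p * x.2 := by
    rw [natDegree_pow, natDegree_pow, natDegree_X_sub_C]; ring
  have h4 : p * ((x.2 : ℕ) + 1) ≤ p * J := Nat.mul_le_mul_left _ x.2.2
  have h5 : w ≤ p := by
    have : w * 1 ≤ w * ℓ := Nat.mul_le_mul_left _ (Fact.out : ℓ.Prime).one_lt.le
    omega
  have h6 : k * (p - 1) ≤ k * p := Nat.mul_le_mul_left _ (by omega)
  refine natDegree_mul_le.trans ?_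
  refine (Nat.add_le_add_right natDegree_mul_le _).trans ?_
  rw [h3]
  nlinarith

theorem st_fiber (p ℓ s : ℕ) [Fact p.Prime] [Fact ℓ.Prime] (v : Fin (s + 1) → ZMod p)
    (hv : ∀ m, v m ^ ℓ = 1) :
    (ℓ ^ s ≤ (Finset.univ.filter fun e : Fin s → ZMod ℓ =>
      ∏ m, v m ^ ((Fin.cons (-∑ i, e i) e : Fin (s + 1) → ZMod ℓ) m).val = 1).card * ℓ) ∧
    ((∀ m, v m = v 0) → ℓ ^ s = (Finset.univ.filter fun e : Fin s → ZMod ℓ =>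
      ∏ m, v m ^ ((Fin.cons (-∑ i, e i) e : Fin (s + 1) → ZMod ℓ) m).val = 1).card) := by
  classical
  have hℓ : 0 < ℓ := (Fact.out : ℓ.Prime).pos
  set G : (Fin s → ZMod ℓ) → ZMod p := fun e =>
    ∏ m, v m ^ ((Fin.cons (-∑ i, e i) e : Fin (s + 1) → ZMod ℓ) m).val with hG
  have hpow : ∀ m, ∀ x y : ZMod ℓ, v m ^ (x + y).val = v m ^ x.val * v m ^ y.val := by
    intro m x y
    rw [ZMod.val_add, ← pow_add, ← pow_eq_pow_mod _ (hv m)]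
  have hadd : ∀ e f, G (e + f) = G e * G f := by
    intro e f
    simp only [hG]
    rw [← Finset.prod_mul_distrib]
    refine Finset.prod_congr rfl fun m _ => ?_
    rw [← hpow]
    congr 2
    refine Fin.cases ?_ (fun i => ?_) m
    · simp [Finset.sum_add_distrib]; ring
    · simp
  have hroot : ∀ e, G e ^ ℓ = 1 := by
    intro e
    simp only [hG]
    rw [← Finset.prod_pow]
    refine Finset.prod_eq_one fun m _ => ?_
    rw [← pow_mul, mul_comm, pow_mul, hv, one_pow]
  have hcard : (Finset.univ : Finset (Fin s → ZMod ℓ)).card = ℓ ^ s := by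
    simp [ZMod.card]
  constructor
  · rw [← hcard]
    refine (Finset.card_le_mul_card_image (f := G) Finset.univ
      (Finset.univ.filter fun e : Fin s → ZMod ℓ => G e = 1).card ?_).trans ?_
    · intro x hx
      obtain ⟨e0, -, rfl⟩ := Finset.mem_image.1 hx
      refine Finset.card_le_card_of_injOn (fun e => e - e0) ?_ ?_
      · intro e he
        simp only [Finset.coe_filter, Finset.mem_univ, true_and, Set.mem_ofPred_eq] at he ⊢
        have h0 : G e0 ≠ 0 := by
          intro h
          have := hroot e0
          rw [h, zero_pow hℓ.ne'] at this
          exact zero_ne_one this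
        have := hadd e0 (e - e0)
        rw [add_sub_cancel, he] at this
        exact mul_left_cancel₀ h0 (by rw [← this, mul_one])
      · intro x _ y _ h
        simpa using h
    · refine Nat.mul_le_mul_left _ ?_
      calc (Finset.univ.image G).card ≤ (nthRoots ℓ (1 : ZMod p)).toFinset.card := by
            refine Finset.card_le_card fun x hx => ?_
            obtain ⟨e0, -, rfl⟩ := Finset.mem_image.1 hx
            rw [Multiset.mem_toFinset, mem_nthRoots hℓ]
            exact hroot e0
        _ ≤ (nthRoots ℓ (1 : ZMod p)).card := Multiset.toFinset_card_le _
        _ ≤ ℓ := card_nthRoots _ _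
  · intro hc
    rw [← hcard]
    congr 1
    symm
    rw [Finset.filter_eq_self]
    intro e _
    have h1 : ∀ m, v m ^ ((Fin.cons (-∑ i, e i) e : Fin (s + 1) → ZMod ℓ) m).val
        = v 0 ^ ((Fin.cons (-∑ i, e i) e : Fin (s + 1) → ZMod ℓ) m).val := fun m => by rw [hc m]
    rw [Finset.prod_congr rfl fun m _ => h1 m, Finset.prod_pow_eq_pow_sum,
      pow_eq_pow_mod _ (hv 0)]
    have h2 : (∑ m, ((Fin.cons (-∑ i, e i) e : Fin (s + 1) → ZMod ℓ) m).val) % ℓ = 0 := by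
      rw [← Nat.dvd_iff_mod_eq_zero, ← ZMod.natCast_eq_zero_iff]
      push_cast
      simp [Fin.sum_univ_succ]
    rw [h2, pow_zero]

theorem st_average (p ℓ w s : ℕ) [Fact p.Prime] [Fact ℓ.Prime] (hw : w * ℓ = p - 1)
    (b : Fin (s + 1) → ZMod p) (B : ℝ) (hB0 : 0 ≤ B)
    (hB : ∀ e : Fin (s + 1) → ZMod ℓ, e ≠ 0 → ∀ S : Finset (ZMod p),
      (∀ z ∈ S, (∀ m, z - b m ≠ 0) ∧ ∏ m, (z - b m) ^ (w * (e m).val) = 1) → (S.card : ℝ) ≤ B)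
    (Z : Finset (ZMod p)) (hZ : ∀ z ∈ Z, ∀ m, z - b m ≠ 0 ∧ (z - b m) ^ w = (z - b 0) ^ w) :
    (Z.card : ℝ) * ℓ ^ s * ℓ + ((p : ℝ) - (s + 1) - Z.card) * ℓ ^ s ≤ (p + ℓ ^ s * B) * ℓ := by
  classical
  have hℓ : 0 < ℓ := (Fact.out : ℓ.Prime).pos
  set U : Finset (ZMod p) := Finset.univ.filter fun z => ∀ m, z - b m ≠ 0 with hU
  have hUcard : p ≤ U.card + (s + 1) := by
    have h1 : Uᶜ ⊆ Finset.univ.image b := by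
      intro z hz
      simp only [hU, Finset.mem_compl, Finset.mem_filter, Finset.mem_univ, true_and, not_forall, not_not] at hz
      obtain ⟨m, hm⟩ := hz
      exact Finset.mem_image.2 ⟨m, Finset.mem_univ _, (sub_eq_zero.1 hm).symm⟩
    have h2 := (Finset.card_le_card h1).trans Finset.card_image_le
    have h3 := Finset.card_add_card_compl U
    rw [ZMod.card] at h3
    simp at h2
    omega
  have hZU : Z ⊆ U := fun z hz => by
    simp only [hU, Finset.mem_filter, Finset.mem_univ, true_and]
    exact fun m => (hZ z hz m).1
  let E : (Fin s → ZMod ℓ) → Fin (s + 1) → ZMod ℓ := fun e => Fin.cons (-∑ i, e i) e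
  let R : ZMod p → (Fin s → ZMod ℓ) → Prop := fun z e => ∏ m, (z - b m) ^ (w * (E e m).val) = 1
  let n : ZMod p → ℕ := fun z => (Finset.univ.filter fun e => R z e).card
  have hdouble : ∑ e, (U.filter fun z => R z e).card = ∑ z ∈ U, n z := by
    simp only [n, Finset.card_filter]
    rw [Finset.sum_comm]
  have hroot : ∀ z ∈ U, ∀ m, ((z - b m) ^ w) ^ ℓ = 1 := by
    intro z hz m
    rw [← pow_mul, hw]
    exact ZMod.pow_card_sub_one_eq_one ((Finset.mem_filter.1 hz).2 m)
  have hn1 : ∀ z ∈ U, ℓ ^ s ≤ n z * ℓ := by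
    intro z hz
    have := (st_fiber p ℓ s (fun m => (z - b m) ^ w) (hroot z hz)).1
    simpa only [← pow_mul] using this
  have hn2 : ∀ z ∈ Z, ℓ ^ s = n z := by
    intro z hz
    have := (st_fiber p ℓ s (fun m => (z - b m) ^ w) (hroot z (hZU hz))).2 (fun m => (hZ z hz m).2)
    simpa only [← pow_mul] using this
  have hlow : (Z.card : ℝ) * ℓ ^ s * ℓ + ((U.card : ℝ) - Z.card) * ℓ ^ s ≤ (∑ z ∈ U, (n z : ℝ)) * ℓ := by
    rw [← Finset.sum_sdiff hZU, add_mul, add_comm]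
    refine add_le_add ?_ ?_
    · have : ((U.card : ℝ) - Z.card) = ((U \ Z).card : ℝ) := by
        rw [Finset.card_sdiff_of_subset hZU, Nat.cast_sub (Finset.card_le_card hZU)]
      rw [this, Finset.sum_mul, ← nsmul_eq_mul]
      refine Finset.card_nsmul_le_sum _ _ _ fun z hz => ?_
      exact_mod_cast hn1 z (Finset.sdiff_subset hz)
    · refine mul_le_mul_of_nonneg_right ?_ (by positivity)
      rw [← nsmul_eq_mul]
      refine Finset.card_nsmul_le_sum _ _ _ fun z hz => ?_
      exact_mod_cast (hn2 z hz).le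
  have hup : (∑ e, ((U.filter fun z => R z e).card : ℝ)) ≤ p + ℓ ^ s * B := by
    rw [← Finset.add_sum_erase Finset.univ _ (Finset.mem_univ (0 : Fin s → ZMod ℓ))]
    refine add_le_add ?_ ?_
    · have := Finset.card_le_univ (U.filter fun z => R z 0)
      rw [ZMod.card] at this
      exact_mod_cast this
    · refine (Finset.sum_le_card_nsmul _ _ B ?_).trans ?_
      · intro e he
        refine hB (E e) ?_ _ ?_
        · intro h
          apply Finset.ne_of_mem_erase he
          funext i
          have := congrFun h i.succ
          simpa [E] using this
        · intro z hz
          obtain ⟨h1, h2⟩ := Finset.mem_filter.1 hz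
          exact ⟨(Finset.mem_filter.1 h1).2, h2⟩
      · rw [nsmul_eq_mul]
        refine mul_le_mul_of_nonneg_right ?_ hB0
        have : ((Finset.univ.erase (0 : Fin s → ZMod ℓ)).card) ≤ ℓ ^ s :=
          (Finset.card_le_univ _).trans (by simp [ZMod.card])
        exact_mod_cast this
  have hcast : (∑ e, ((U.filter fun z => R z e).card : ℝ)) = ∑ z ∈ U, (n z : ℝ) := by
    exact_mod_cast hdouble
  rw [hcast] at hup
  have h1 : (p : ℝ) ≤ U.card + (s + 1) := by exact_mod_cast hUcard
  have h2 : (0 : ℝ) ≤ (ℓ : ℝ) ^ s := by positivity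
  have h3 : ((p : ℝ) - (s + 1) - Z.card) * ℓ ^ s ≤ ((U.card : ℝ) - Z.card) * ℓ ^ s :=
    mul_le_mul_of_nonneg_right (by linarith) h2
  have h4 : (∑ z ∈ U, (n z : ℝ)) * ℓ ≤ (p + ℓ ^ s * B) * ℓ :=
    mul_le_mul_of_nonneg_right hup (by positivity)
  linarith

theorem st_trivial (p w : ℕ) [Fact p.Prime] (hw : 0 < w) (Z : Finset (ZMod p))
    (hZ : ∀ z ∈ Z, (z + 1) ^ w = z ^ w) : Z.card ≤ w := by
  classical
  set f : (ZMod p)[X] := (X + C 1) ^ w - X ^ w with hf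
  have hf0 : f ≠ 0 := by
    intro h
    have := congrArg (eval 0) h
    simp [hf, hw.ne'] at this
  have hsub : Z ⊆ f.roots.toFinset := by
    intro z hz
    rw [Multiset.mem_toFinset, mem_roots hf0]
    simp [hf, IsRoot, hZ z hz]
  refine (Finset.card_le_card hsub).trans ((Multiset.toFinset_card_le _).trans ((card_roots' f).trans ?_))
  refine (natDegree_sub_le _ _).trans (max_le ?_ ?_)
  · exact natDegree_pow_le.trans (by rw [natDegree_X_add_C, mul_one])
  · simp

theorem st_count (ℓ w J k M T : ℕ) (hℓ : 0 < ℓ) (hT : T = ℓ * J) (hM : M + (1 + ℓ * k) = T)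
    (hTp : T * T ≤ w * ℓ) : M * (w + J + M * k) < w * J * ℓ := by
  have hlt : M < T := by omega
  refine lt_of_mul_lt_mul_left (a := ℓ) ?_ (Nat.zero_le _)
  have e1 : ℓ * (M * (w + J + M * k)) = M * (w * ℓ) + M * (T + M * (ℓ * k)) := by rw [hT]; ring
  have e2 : ℓ * (w * J * ℓ) = (w * ℓ) * M + (w * ℓ) * (1 + ℓ * k) := by
    rw [← mul_add, hM, hT]; ring
  rw [e1, e2]
  have h1 : M * (T + M * (ℓ * k)) ≤ M * (T * (1 + ℓ * k)) := by
    refine Nat.mul_le_mul_left _ ?_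
    have : M * (ℓ * k) ≤ T * (ℓ * k) := Nat.mul_le_mul_right _ hlt.le
    nlinarith
  have h2 : M * (T * (1 + ℓ * k)) < T * (T * (1 + ℓ * k)) := by
    refine Nat.mul_lt_mul_of_pos_right hlt ?_
    have : 0 < T := by omega
    positivity
  have h3 : T * (T * (1 + ℓ * k)) ≤ (w * ℓ) * (1 + ℓ * k) := by
    rw [← mul_assoc]; exact Nat.mul_le_mul_right _ hTp
  nlinarith

theorem st_fin3 (R k l M : ℝ) (hRpos : 0 < R) (hkk : 13 ≤ k) (hRk : 100 * k ≤ R) (h3R : 3 ≤ l)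
    (hM2 : 0.78 * R ≤ M) :
    R * l + k + (R * R) * (2 * l * k + 1) / M ≤ 5 * k * R * (l - 1) := by
  have hMpos : 0 < M := by linarith
  have hd : (R * R) * (2 * l * k + 1) / M ≤ R * (2 * l * k + 1) * 1.2821 := by
    rw [div_le_iff₀ hMpos]
    have h0 : 0 ≤ R * (2 * l * k + 1) := by positivity
    have := mul_le_mul_of_nonneg_left hM2 h0
    nlinarith [mul_nonneg h0 hRpos.le]
  refine (add_le_add_right hd _).trans ?_
  have hbr : l + 0.01 + (2 * l * k + 1) * 1.2821 ≤ 5 * k * (l - 1) := by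
    have : 0 ≤ (l - 3 : ℝ) * (k - 13) := mul_nonneg (by linarith) (by linarith)
    linarith
  have := mul_le_mul_of_nonneg_left hbr hRpos.le
  have e : R * (l + 0.01 + (2 * l * k + 1) * 1.2821) = R * l + 0.01 * R + R * (2 * l * k + 1) * 1.2821 := by
    ring
  linarith

theorem st_fin2 (R k M : ℝ) (hRpos : 0 < R) (hkk : 13 ≤ k) (hRk : 100 * k ≤ R)
    (hM2 : 0.97 * R ≤ M) :
    R * 2 + k + (R * R) * (2 * 2 * k + 1) / M ≤ 5 * k * R * (2 - 1) := by
  have hMpos : 0 < M := by linarith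
  have hd : (R * R) * (2 * 2 * k + 1) / M ≤ R * (2 * 2 * k + 1) * 1.031 := by
    rw [div_le_iff₀ hMpos]
    have h0 : 0 ≤ R * (2 * 2 * k + 1) := by positivity
    have := mul_le_mul_of_nonneg_left hM2 h0
    nlinarith [mul_nonneg h0 hRpos.le]
  refine (add_le_add_right hd _).trans ?_
  have : 0 ≤ R * (k - 13) := mul_nonneg hRpos.le (by linarith)
  linarith

theorem st_Zbound (p ℓ w s : ℕ) [Fact p.Prime] [Fact ℓ.Prime] (hw : w * ℓ = p - 1)
    (hs : 12 ≤ s) (hsp : (p : ℝ) ≤ 4 ^ s) (hks : 100 * ((s : ℝ) + 1) ≤ √p)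
    (Z : Finset (ZMod p))
    (hZ : ∀ z ∈ Z, ∀ m : ℕ, m ≤ s → z + m ≠ 0 ∧ (z + m) ^ w = z ^ w) :
    (Z.card : ℝ) ≤ 5 * (s + 1) * √p := by
  have hpp : p.Prime := Fact.out
  have hℓ2 : 2 ≤ ℓ := (Fact.out : ℓ.Prime).two_le
  have hp2 := hpp.two_le
  have hℓR : (2 : ℝ) ≤ ℓ := by exact_mod_cast hℓ2
  set R : ℝ := √p with hR
  have hRR : R * R = p := Real.mul_self_sqrt (Nat.cast_nonneg p)
  have hsR : (12 : ℝ) ≤ s := by exact_mod_cast hs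
  have hRpos : 0 < R := by nlinarith
  have hwpos : 0 < w := by
    rcases Nat.eq_zero_or_pos w with h | h
    · subst h; omega
    · exact h
  have hwR : (w : ℝ) * ℓ ≤ R * R := by
    rw [hRR]; exact_mod_cast (by omega : w * ℓ ≤ p)
  by_cases hcase : R ≤ 5 * (s + 1) * ℓ
  · have h1 := st_trivial p w hwpos Z (fun z hz => by simpa using (hZ z hz 1 (by omega)).2)
    have h2 : (Z.card : ℝ) ≤ w := by exact_mod_cast h1
    refine h2.trans ?_
    have : (w : ℝ) * ℓ ≤ (5 * (s + 1) * R) * ℓ := by nlinarith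
    exact le_of_mul_le_mul_right this (by linarith)
  push Not at hcase
  set k : ℝ := (s : ℝ) + 1 with hk
  set J := Nat.sqrt p / ℓ with hJ
  set T := ℓ * J with hT
  have hTsq : T ≤ Nat.sqrt p := Nat.mul_div_le _ _
  have hTT : T * T ≤ p := (Nat.mul_self_le_mul_self hTsq).trans (Nat.sqrt_le p)
  have hTne : T * T ≠ p := by
    intro h
    rw [← h] at hpp
    exact Nat.not_prime_mul (by rintro h1; rw [h1] at h; omega) (by rintro h1; rw [h1] at h; omega) hpp
  have hTl : Nat.sqrt p < T + ℓ := by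
    have := Nat.lt_mul_div_succ (Nat.sqrt p) (by omega : 0 < ℓ)
    rw [hT, hJ]; nlinarith
  have hTR : R < T + ℓ := by
    have h1 : R < Nat.sqrt p + 1 := by
      rw [hR, Real.sqrt_lt' (by positivity)]
      have := Nat.lt_succ_sqrt p
      have h2 : p < (Nat.sqrt p + 1) ^ 2 := by rw [pow_two]; exact this
      exact_mod_cast h2
    have h2 : ((Nat.sqrt p : ℕ) : ℝ) + 1 ≤ T + ℓ := by exact_mod_cast hTl
    linarith
  have hMR : (1 : ℝ) + ℓ * k < T := by nlinarith
  have hMn : 1 + ℓ * (s + 1) < T := by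
    have : ((1 + ℓ * (s + 1) : ℕ) : ℝ) < T := by push_cast; exact hMR
    exact_mod_cast this
  obtain ⟨M, hM⟩ : ∃ M, M + (1 + ℓ * (s + 1)) = T := ⟨T - (1 + ℓ * (s + 1)), by omega⟩
  have hMcast : (M : ℝ) = T - 1 - ℓ * k := by
    have : (M : ℝ) + (1 + ℓ * (s + 1)) = T := by exact_mod_cast hM
    rw [hk]; linarith
  have hMpos : (0 : ℝ) < M := by rw [hMcast]; linarith
  have hcount := st_count ℓ w J (s + 1) M T (by omega) hT hM (by rw [hw]; omega)
  have hTle : T ≤ p := hTsq.trans (Nat.sqrt_le_self p)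
  have hsp' : s + 1 ≤ p := by nlinarith
  have hb : Function.Injective (fun m : Fin (s + 1) => -((m : ℕ) : ZMod p)) := by
    intro a c h
    have h1 : ((a : ℕ) : ZMod p) = (c : ℕ) := neg_injective h
    rw [ZMod.natCast_eq_natCast_iff'] at h1
    rw [Nat.mod_eq_of_lt (by omega), Nat.mod_eq_of_lt (by omega)] at h1
    exact Fin.ext h1
  have havg := st_average p ℓ w s hw (fun m : Fin (s + 1) => -((m : ℕ) : ZMod p))
    ((p : ℝ) * (J + k) / M) (by positivity) ?_ Z ?_
  rotate_left
  · intro e he S hS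
    have := stepanov_s2 p ℓ w (s + 1) J M hw _ hb e he (by omega) hcount S hS
    rw [le_div_iff₀ hMpos, hk]
    exact_mod_cast this
  · intro z hz m
    have := hZ z hz m (by omega)
    simpa using this
  have hℓs : R ≤ (ℓ : ℝ) ^ s := by
    refine le_trans ?_ (pow_le_pow_left₀ (by norm_num) hℓR s)
    rw [hR]
    apply Real.sqrt_le_iff.2
    refine ⟨by positivity, hsp.trans ?_⟩
    rw [← pow_mul, mul_comm, pow_mul]; norm_num
  set q : ℝ := (ℓ : ℝ) ^ s with hq
  have hqpos : 0 < q := by linarith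
  have h1 : (Z.card : ℝ) * (ℓ - 1) ≤ R * ℓ + k + (R * R) * (2 * ℓ * k + 1) / M := by
    have h2 : (p : ℝ) * (J + k) / M * ℓ = p + (R * R) * (2 * ℓ * k + 1) / M := by
      have : (T : ℝ) = ℓ * J := by rw [hT]; push_cast; ring
      rw [hRR]
      field_simp
      rw [hMcast, this]; ring
    have h3 : (p : ℝ) * ℓ ≤ q * (R * ℓ) := by
      rw [← hRR, mul_assoc]
      exact mul_le_mul_of_nonneg_right hℓs (by positivity)
    have h4 : q * ((Z.card : ℝ) * (ℓ - 1)) ≤ q * (R * ℓ + k + (R * R) * (2 * ℓ * k + 1) / M) := by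
      have : (p + q * (p * (J + k) / M)) * ℓ = p * ℓ + q * (p * (J + k) / M * ℓ) := by ring
      rw [this, h2] at havg
      linarith
    exact le_of_mul_le_mul_left h4 hqpos
  have hkk : (13 : ℝ) ≤ k := by rw [hk]; linarith
  have hRk : 100 * k ≤ R := hks
  have hfin : R * ℓ + k + (R * R) * (2 * ℓ * k + 1) / M ≤ 5 * k * R * (ℓ - 1) := by
    rcases Nat.lt_or_ge 2 ℓ with h3 | h3
    · have h3R : (3 : ℝ) ≤ ℓ := by exact_mod_cast h3
      have h13 : 13 * (ℓ : ℝ) ≤ ℓ * k := by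
        rw [mul_comm]; exact mul_le_mul_of_nonneg_left hkk (by linarith)
      have hM2 : 0.78 * R ≤ M := by
        rw [hMcast]
        have : 5 * (ℓ * k) < R := by rw [mul_comm (ℓ : ℝ), ← mul_assoc]; exact hcase
        linarith
      exact st_fin3 R k ℓ M hRpos hkk hRk h3R hM2
    · have h2 : ℓ = 2 := by omega
      have h2R : (ℓ : ℝ) = 2 := by exact_mod_cast h2
      rw [h2R] at hMcast hTR ⊢
      have hM2 : 0.97 * R ≤ M := by rw [hMcast]; linarith
      exact st_fin2 R k M hRpos hkk hRk hM2
  have hpos : (0 : ℝ) < ℓ - 1 := by linarith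
  have : (Z.card : ℝ) * (ℓ - 1) ≤ 5 * k * R * (ℓ - 1) := h1.trans hfin
  exact le_of_mul_le_mul_right this hpos

theorem q2_sum_sq (n : ℕ) : ∑ d ∈ Finset.Ico 2 (n + 2), (1 : ℝ) / (d : ℝ) ^ 2 ≤ 2 / 3 - 1 / (n + 3 / 2) := by
  induction n with
  | zero => norm_num
  | succ n ih =>
    rw [Finset.sum_Ico_succ_top (by omega)]
    have h : (1 : ℝ) / ((n + 2 : ℕ) : ℝ) ^ 2 ≤ 1 / (n + 3 / 2) - 1 / ((n + 1 : ℕ) + 3 / 2) := by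
      push_cast
      rw [div_sub_div _ _ (by positivity) (by positivity), div_le_div_iff₀ (by positivity) (by positivity)]
      nlinarith
    linarith

theorem q2_bad_count (r a Y : ℕ) (hr : 0 < r) :
    (((Finset.Ioc 0 Y).filter fun n => r ∣ n + a).card : ℝ) ≤ Y / r + 1 := by
  have h1 : ((Finset.Ioc 0 Y).filter fun n => r ∣ n + a).card + a / r ≤ (Y + a) / r := by
    rw [← Nat.Ioc_filter_dvd_card_eq_div (Y + a) r, ← Nat.Ioc_filter_dvd_card_eq_div a r]
    rw [← Finset.card_image_of_injective ((Finset.Ioc 0 Y).filter fun n => r ∣ n + a) (add_left_injective a)]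
    rw [← Finset.card_union_of_disjoint]
    · refine Finset.card_le_card ?_
      intro x hx
      simp only [Finset.mem_union, Finset.mem_image, Finset.mem_filter, Finset.mem_Ioc] at hx ⊢
      rcases hx with ⟨y, ⟨h1, h2⟩, rfl⟩ | ⟨h1, h2⟩
      · exact ⟨by omega, h2⟩
      · exact ⟨by omega, h2⟩
    · rw [Finset.disjoint_left]
      intro x hx hx2
      simp only [Finset.mem_image, Finset.mem_filter, Finset.mem_Ioc] at hx hx2
      obtain ⟨y, ⟨h1, h2⟩, h3⟩ := hx
      omega
  have h2 : (((Y + a) / r : ℕ) : ℝ) ≤ ((Y + a : ℕ) : ℝ) / r := Nat.cast_div_le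
  have h3 : (a : ℝ) / r < (a / r : ℕ) + 1 := by
    rw [div_lt_iff₀ (by positivity)]
    have := Nat.lt_mul_div_succ a hr
    rw [mul_comm] at this
    exact_mod_cast this
  have h4 : ((((Finset.Ioc 0 Y).filter fun n => r ∣ n + a).card : ℝ)) + (a / r : ℕ) ≤ ((Y + a) / r : ℕ) := by
    exact_mod_cast h1
  push_cast at h2 
  rw [add_div] at h2
  linarith

theorem q2_count_lower (X k r : ℕ) (hr : 0 < r) (hX : 1 ≤ X) :
    (k : ℝ) * X ^ 2 / 3 - k ^ 2 * X ^ 2 / r - k * X ≤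
    (((Finset.Ioc 0 X ×ˢ Finset.Ioc 0 (k * X)).filter fun t : ℕ × ℕ =>
      Nat.Coprime t.1 t.2 ∧ ∀ m < k, ¬ r ∣ t.2 + m * t.1).card : ℝ) := by
  classical
  set A := Finset.Ioc 0 X ×ˢ Finset.Ioc 0 (k * X) with hA
  set G := A.filter fun t : ℕ × ℕ => Nat.Coprime t.1 t.2 ∧ ∀ m < k, ¬ r ∣ t.2 + m * t.1 with hG
  let D : ℕ → Finset (ℕ × ℕ) := fun d =>
    ((Finset.Ioc 0 X).filter fun x => d ∣ x) ×ˢ ((Finset.Ioc 0 (k * X)).filter fun x => d ∣ x)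
  let E : ℕ × ℕ → Finset (ℕ × ℕ) := fun u =>
    {u.1} ×ˢ ((Finset.Ioc 0 (k * X)).filter fun n => r ∣ n + u.2 * u.1)
  have hsub : A ⊆ G ∪ ((Finset.Ico 2 (X - 1 + 2)).biUnion D ∪ (Finset.Ioc 0 X ×ˢ Finset.range k).biUnion E) := by
    rintro ⟨q, n⟩ ht
    have ht' := ht
    simp only [hA, Finset.mem_product, Finset.mem_Ioc] at ht'
    simp only [Finset.mem_union]
    by_cases hc : Nat.Coprime q n
    · by_cases hm : ∀ m < k, ¬ r ∣ n + m * q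
      · left; exact Finset.mem_filter.2 ⟨ht, hc, hm⟩
      · right; right
        push Not at hm
        obtain ⟨m, hmk, hd⟩ := hm
        rw [Finset.mem_biUnion]
        refine ⟨(q, m), by simp; omega, ?_⟩
        simp only [E, Finset.mem_product, Finset.mem_singleton, Finset.mem_filter, Finset.mem_Ioc]
        exact ⟨trivial, ht'.2, hd⟩
    · right; left
      rw [Finset.mem_biUnion]
      have hpos : 0 < Nat.gcd q n := Nat.gcd_pos_of_pos_left _ ht'.1.1
      have hle := Nat.gcd_le_left n ht'.1.1
      have hne : Nat.gcd q n ≠ 1 := hc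
      refine ⟨Nat.gcd q n, by rw [Finset.mem_Ico]; omega, ?_⟩
      simp only [D, Finset.mem_product, Finset.mem_filter, Finset.mem_Ioc]
      exact ⟨⟨ht'.1, Nat.gcd_dvd_left _ _⟩, ht'.2, Nat.gcd_dvd_right _ _⟩
  have hcard := (Finset.card_le_card hsub).trans
    ((Finset.card_union_le _ _).trans (Nat.add_le_add_left (Finset.card_union_le _ _) _))
  have hcardR : (A.card : ℝ) ≤ G.card + (((Finset.Ico 2 (X - 1 + 2)).biUnion D).card
    + ((Finset.Ioc 0 X ×ˢ Finset.range k).biUnion E).card) := by exact_mod_cast hcard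
  have hAc : (A.card : ℝ) = k * X ^ 2 := by
    rw [hA, Finset.card_product]; simp; ring
  have hDc : (((Finset.Ico 2 (X - 1 + 2)).biUnion D).card : ℝ) ≤ k * X ^ 2 * (2 / 3) := by
    calc (((Finset.Ico 2 (X - 1 + 2)).biUnion D).card : ℝ)
        ≤ ∑ d ∈ Finset.Ico 2 (X - 1 + 2), ((D d).card : ℝ) := by exact_mod_cast Finset.card_biUnion_le
      _ ≤ ∑ d ∈ Finset.Ico 2 (X - 1 + 2), (k * X ^ 2) * ((1 : ℝ) / (d : ℝ) ^ 2) := by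
          refine Finset.sum_le_sum fun d _ => ?_
          simp only [D, Finset.card_product, Nat.Ioc_filter_dvd_card_eq_div, Nat.cast_mul]
          have h1 : ((X / d : ℕ) : ℝ) ≤ (X : ℝ) / d := Nat.cast_div_le
          have h2 : ((k * X / d : ℕ) : ℝ) ≤ ((k * X : ℕ) : ℝ) / d := Nat.cast_div_le
          refine (mul_le_mul h1 h2 (by positivity) (by positivity)).trans (le_of_eq ?_)
          push_cast
          rw [div_mul_div_comm]; ring
      _ = (k * X ^ 2) * ∑ d ∈ Finset.Ico 2 (X - 1 + 2), ((1 : ℝ) / (d : ℝ) ^ 2) := by rw [Finset.mul_sum]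
      _ ≤ _ := by
          refine mul_le_mul_of_nonneg_left ?_ (by positivity)
          refine (q2_sum_sq (X - 1)).trans ?_
          have : (0 : ℝ) ≤ 1 / (((X - 1 : ℕ) : ℝ) + 3 / 2) := by positivity
          linarith
  have hEc : (((Finset.Ioc 0 X ×ˢ Finset.range k).biUnion E).card : ℝ) ≤ X * k * ((k * X) / r + 1) := by
    calc (((Finset.Ioc 0 X ×ˢ Finset.range k).biUnion E).card : ℝ)
        ≤ ∑ u ∈ Finset.Ioc 0 X ×ˢ Finset.range k, ((E u).card : ℝ) := by exact_mod_cast Finset.card_biUnion_le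
      _ ≤ ∑ u ∈ Finset.Ioc 0 X ×ˢ Finset.range k, (((k : ℝ) * X) / r + 1) := by
          refine Finset.sum_le_sum fun u _ => ?_
          simp only [E, Finset.card_product, Finset.card_singleton, one_mul]
          have := q2_bad_count r (u.2 * u.1) (k * X) hr
          push_cast at this
          exact this
      _ = _ := by
          rw [Finset.sum_const, Finset.card_product]; simp; ring
  have e : (X : ℝ) * k * ((k * X) / r + 1) = k ^ 2 * X ^ 2 / r + k * X := by ring
  rw [e] at hEc
  linarith

theorem q2_chi_one (p : ℕ) [Fact p.Prime] (χ : DirichletCharacter ℂ p) (q₁ q₂ : ℕ)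
    (hmin₂ : ∀ q : ℕ, q.Prime → χ (q : ZMod p) ∉ ({0, 1} : Set ℂ) → q ≠ q₁ → q₂ ≤ q) (N : ℕ) :
    0 < N → N < q₂ → N < p → ¬ q₁ ∣ N → χ (N : ZMod p) = 1 := by
  induction N using Nat.strong_induction_on with
  | _ N ih =>
    intro h0 h1 h2 h3
    rcases Nat.lt_or_ge 1 N with hN | hN
    · have hr := Nat.minFac_prime (by omega : N ≠ 1)
      obtain ⟨N', hN'⟩ := Nat.minFac_dvd N
      set r := N.minFac with hr_def
      have hN'0 : 0 < N' := by
        rcases Nat.eq_zero_or_pos N' with h | h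
        · rw [h] at hN'; omega
        · exact h
      have hrle : r ≤ N := Nat.minFac_le h0
      have hlt : N' < N := by have := hr.two_le; nlinarith
      have hχN' := ih N' hlt hN'0 (by omega) (by omega) (fun h => h3 (hN' ▸ Dvd.dvd.mul_left h r))
      have hrne : r ≠ q₁ := fun h => h3 (h ▸ Nat.minFac_dvd N)
      have hχr : χ (r : ZMod p) ∈ ({0, 1} : Set ℂ) := by
        by_contra h
        have := hmin₂ r hr h hrne
        omega
      have hχr0 : χ (r : ZMod p) ≠ 0 := by
        have hu : (r : ZMod p) ≠ 0 := by
          intro h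
          rw [ZMod.natCast_eq_zero_iff] at h
          have := Nat.le_of_dvd hr.pos h
          omega
        exact (IsUnit.mk0 _ hu).map χ |>.ne_zero
      have hχr1 : χ (r : ZMod p) = 1 := by
        rcases hχr with h | h
        · exact absurd h hχr0
        · exact h
      rw [hN', Nat.cast_mul, map_mul, hχr1, hχN', one_mul]
    · have : N = 1 := by omega
      subst this; simp

theorem q2_kernel (p : ℕ) [Fact p.Prime] (χ : DirichletCharacter ℂ p) (hχ : χ ≠ 1) :
    ∃ ℓ w : ℕ, ℓ.Prime ∧ w * ℓ = p - 1 ∧ ∀ u : ZMod p, χ u = 1 → u ^ w = 1 := by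
  set K := χ.toUnitHom.ker with hK
  have hidx : K.index ≠ 1 := by
    intro h
    rw [Subgroup.index_eq_one] at h
    apply hχ
    ext u
    have hu : u ∈ K := h ▸ Subgroup.mem_top u
    rw [hK, MonoidHom.mem_ker] at hu
    rw [← MulChar.coe_toUnitHom, hu, MulChar.one_apply_coe]; rfl
  have hcard := K.card_mul_index
  rw [Nat.card_eq_fintype_card (α := (ZMod p)ˣ), ZMod.card_units] at hcard
  obtain ⟨c, hc⟩ := Nat.minFac_dvd K.index
  refine ⟨K.index.minFac, Nat.card K * c, Nat.minFac_prime hidx, ?_, ?_⟩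
  · rw [← hcard]; nth_rewrite 2 [hc]; ring
  · intro u hu
    have hu0 : u ≠ 0 := by
      rintro rfl
      rw [MulChar.map_zero] at hu
      exact zero_ne_one hu
    have hmem : Units.mk0 u hu0 ∈ K := by
      rw [hK, MonoidHom.mem_ker]
      ext
      rw [MulChar.coe_toUnitHom]
      simpa using hu
    have h1 : (⟨Units.mk0 u hu0, hmem⟩ : K) ^ Nat.card K = 1 := pow_card_eq_one'
    have h2 : (Units.mk0 u hu0) ^ Nat.card K = 1 := congrArg Subtype.val h1
    have h3 := congrArg Units.val h2
    rw [Units.val_pow_eq_pow_val, Units.val_mk0, Units.val_one] at h3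
    rw [pow_mul, h3, one_pow]

/-- The numerical parameters used in the argument. -/
theorem q2_params (p : ℕ) (hp : (10:ℕ)^7 ≤ p) :
    ∃ s X : ℕ, 12 ≤ s ∧ (p : ℝ) ≤ 4 ^ s ∧ 100 * ((s : ℝ) + 1) ≤ √p ∧
      (s : ℝ) + 1 ≤ 0.847 * Real.log p ∧ 0 < Real.log p ∧
      2 * ((s : ℝ) + 1) * X ≤ 11.0421 * (p : ℝ) ^ ((1:ℝ)/4) * Real.log p ∧
      360 ≤ X ∧ 41.9 * √p ≤ (X : ℝ) ^ 2 ∧ (X : ℝ) ^ 2 ≤ 42.4 * √p := by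
  have hpR : (10 : ℝ) ^ 7 ≤ p := by exact_mod_cast hp
  have hp0 : (0 : ℝ) < p := lt_of_lt_of_le (by norm_num) hpR
  set L := Real.log p with hL
  set P := (p : ℝ) ^ ((1:ℝ)/4) with hP
  have hPpos : 0 < P := Real.rpow_pos_of_pos hp0 _
  have hPP : P * P = √p := by
    rw [hP, ← Real.rpow_add hp0, Real.sqrt_eq_rpow]; norm_num
  have hP4 : P ^ 4 = p := by
    rw [hP, ← Real.rpow_natCast, ← Real.rpow_mul hp0.le]; norm_num
  have hP56 : 56 ≤ P := by
    by_contra h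
    push Not at h
    have : P ^ 4 < 56 ^ 4 := pow_lt_pow_left₀ h hPpos.le (by norm_num)
    rw [hP4] at this
    norm_num at this
    linarith
  have hl2 := Real.log_two_gt_d9
  have hl2' := Real.log_two_lt_d9
  have hL16 : 15.94 ≤ L := by
    have h1 : Real.log ((2 : ℝ) ^ 23) ≤ L := Real.log_le_log (by norm_num) (by linarith)
    rw [Real.log_pow] at h1
    push_cast at h1
    linarith
  have hLP : L ≤ 4 * (P / 56 + 3.16) := by
    have h1 : L = 4 * Real.log P := by rw [hL, ← hP4, Real.log_pow]; norm_num
    have h2 : Real.log P = Real.log (P / 56) + Real.log 56 := by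
      rw [← Real.log_mul (by positivity) (by norm_num)]
      congr 1; field_simp
    have h3 := Real.log_le_sub_one_of_pos (show 0 < P / 56 by positivity)
    have h4 : Real.log 56 ≤ Real.log ((2 : ℝ) ^ 6) := Real.log_le_log (by norm_num) (by norm_num)
    rw [Real.log_pow] at h4
    push_cast at h4
    linarith
  set s := Nat.clog 4 p with hs
  have hs1 : p ≤ 4 ^ s := Nat.le_pow_clog (by norm_num) p
  have hs12 : 12 ≤ s := by
    by_contra h
    push Not at h
    have : 4 ^ s ≤ 4 ^ 11 := Nat.pow_le_pow_right (by norm_num) (by omega)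
    norm_num at this hp
    omega
  have hs2 : 4 ^ (s - 1) < p := Nat.pow_pred_clog_lt_self (by norm_num) (by norm_num at hp; omega)
  have hsL : ((s : ℝ) - 1) * 1.38629 ≤ L := by
    have h1 : (4 : ℝ) ^ (s - 1) ≤ p := by exact_mod_cast hs2.le
    have h2 := Real.log_le_log (by positivity) h1
    rw [Real.log_pow, Nat.cast_sub (by omega), show (4 : ℝ) = 2 ^ 2 by norm_num, Real.log_pow] at h2
    push_cast at h2
    have h3 : (0 : ℝ) ≤ (s : ℝ) - 1 := by
      have : (12 : ℝ) ≤ s := by exact_mod_cast hs12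
      linarith
    have h4 : ((s : ℝ) - 1) * 1.38629 ≤ (s - 1) * (2 * Real.log 2) :=
      mul_le_mul_of_nonneg_left (by linarith) h3
    linarith
  have hk : (s : ℝ) + 1 ≤ 0.847 * L := by linarith
  refine ⟨s, ⌈6.48 * P⌉₊, hs12, by exact_mod_cast hs1, ?_, hk, by linarith, ?_, ?_, ?_, ?_⟩
  · rw [← hPP]
    nlinarith
  · have h1 := Nat.ceil_lt_add_one (show 0 ≤ 6.48 * P by positivity)
    have h2 : (⌈6.48 * P⌉₊ : ℝ) ≤ 6.5 * P := by linarith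
    have h3 : ((s : ℝ) + 1) * ⌈6.48 * P⌉₊ ≤ (0.847 * L) * (6.5 * P) :=
      mul_le_mul hk h2 (by positivity) (by linarith)
    have h4 : 0 ≤ P * L := mul_nonneg hPpos.le (by linarith)
    linarith
  · have h1 := Nat.le_ceil (6.48 * P)
    have : (360 : ℝ) ≤ ⌈6.48 * P⌉₊ := by linarith
    exact_mod_cast this
  · have h1 := Nat.le_ceil (6.48 * P)
    rw [← hPP]
    have := mul_le_mul h1 h1 (by positivity) (by positivity)
    nlinarith
  · have h1 := Nat.ceil_lt_add_one (show 0 ≤ 6.48 * P by positivity)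
    have h2 : (⌈6.48 * P⌉₊ : ℝ) ≤ 6.5 * P := by linarith
    rw [← hPP]
    have := mul_le_mul h2 h2 (by positivity) (by positivity)
    nlinarith

theorem q2_bound_when_q1_large (p : ℕ) [Fact p.Prime] (hp : (10:ℕ)^7 ≤ p)
    (χ : DirichletCharacter ℂ p) (hχ : χ ≠ 1)
    (q₁ q₂ : ℕ) (hq₁ : q₁.Prime) (hq₂ : q₂.Prime) (hlt : q₁ < q₂)
    (hnr₁ : χ (q₁ : ZMod p) ∉ ({0, 1} : Set ℂ))
    (hnr₂ : χ (q₂ : ZMod p) ∉ ({0, 1} : Set ℂ))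
    (hmin₁ : ∀ q : ℕ, q.Prime → χ (q : ZMod p) ∉ ({0, 1} : Set ℂ) → q₁ ≤ q)
    (hmin₂ : ∀ q : ℕ, q.Prime → χ (q : ZMod p) ∉ ({0, 1} : Set ℂ) → q ≠ q₁ → q₂ ≤ q)
    (hbig : Real.exp 2 * Real.log p < q₁) :
    (q₂ : ℝ) < 11.0421 * (p : ℝ) ^ ((1:ℝ)/4) * Real.log p := by
  classical
  by_contra hcon
  push Not at hcon
  obtain ⟨s, X, hs, hsp, hks, hkL, hL0, hH, hX, hX1, hX2⟩ := q2_params p hp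
  obtain ⟨ℓ, w, hℓ, hw, hker⟩ := q2_kernel p χ hχ
  have hfact : Fact ℓ.Prime := ⟨hℓ⟩
  set R : ℝ := √p with hR
  have hRR : R * R = p := Real.mul_self_sqrt (Nat.cast_nonneg p)
  have hsR : (12 : ℝ) ≤ s := by exact_mod_cast hs
  have hRpos : 0 < R := by linarith
  set k : ℕ := s + 1 with hk
  have hkR : (k : ℝ) = s + 1 := by rw [hk]; push_cast; ring
  have hXR : (360 : ℝ) ≤ X := by exact_mod_cast hX
  -- size constraints
  have hkX : 2 * k * X ≤ q₂ := by
    have : ((2 * k * X : ℕ) : ℝ) ≤ q₂ := by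
      push_cast; rw [hkR]; exact hH.trans hcon
    exact_mod_cast this
  have hkXX : X * (k * X) < p := by
    have : ((X * (k * X) : ℕ) : ℝ) < p := by
      push_cast
      rw [← hRR, hkR]
      have h1 : ((s : ℝ) + 1) * X ^ 2 ≤ (s + 1) * (42.4 * R) :=
        mul_le_mul_of_nonneg_left hX2 (by linarith)
      have h2 : 100 * ((s : ℝ) + 1) * R ≤ R * R := mul_le_mul_of_nonneg_right hks hRpos.le
      nlinarith
    exact_mod_cast this
  have hkXp : 2 * k * X < p := by nlinarith
  set G := (Finset.Ioc 0 X ×ˢ Finset.Ioc 0 (k * X)).filter fun t : ℕ × ℕ =>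
      Nat.Coprime t.1 t.2 ∧ ∀ m < k, ¬ q₁ ∣ t.2 + m * t.1 with hG
  have hlow := q2_count_lower X k q₁ hq₁.pos (by omega)
  rw [← hG] at hlow
  have hne : ∀ n : ℕ, 0 < n → n < p → (n : ZMod p) ≠ 0 := by
    intro n h0 h1 h
    rw [ZMod.natCast_eq_zero_iff] at h
    have := Nat.le_of_dvd h0 h
    omega
  have hGm : ∀ t ∈ G, (0 < t.1 ∧ t.1 ≤ X) ∧ (0 < t.2 ∧ t.2 ≤ k * X) ∧ Nat.Coprime t.1 t.2 ∧
      ∀ m < k, ¬ q₁ ∣ t.2 + m * t.1 := by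
    intro t ht
    simp only [hG, Finset.mem_filter, Finset.mem_product, Finset.mem_Ioc] at ht
    tauto
  have hXp : X < p := by nlinarith
  let f : ℕ × ℕ → ZMod p := fun t => (t.2 : ZMod p) / (t.1 : ZMod p)
  have hinj : Set.InjOn f G := by
    rintro ⟨q, n⟩ ht ⟨q', n'⟩ ht' h
    obtain ⟨⟨a1, a2⟩, ⟨a3, a4⟩, a5, -⟩ := hGm _ ht
    obtain ⟨⟨b1, b2⟩, ⟨b3, b4⟩, b5, -⟩ := hGm _ ht'
    dsimp only at a1 a2 a3 a4 a5 b1 b2 b3 b4 b5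
    simp only [f] at h
    rw [div_eq_div_iff (hne q a1 (by omega)) (hne q' b1 (by omega))] at h
    have h1 : ((n * q' : ℕ) : ZMod p) = ((n' * q : ℕ) : ZMod p) := by push_cast; exact h
    rw [ZMod.natCast_eq_natCast_iff'] at h1
    have c1 : n * q' < p := lt_of_le_of_lt ((Nat.mul_le_mul a4 b2).trans (by rw [mul_comm])) hkXX
    have c2 : n' * q < p := lt_of_le_of_lt ((Nat.mul_le_mul b4 a2).trans (by rw [mul_comm])) hkXX
    rw [Nat.mod_eq_of_lt c1, Nat.mod_eq_of_lt c2] at h1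
    have d1 : q ∣ q' := a5.dvd_of_dvd_mul_left (Dvd.intro_left n' h1.symm)
    have d2 : q' ∣ q := b5.dvd_of_dvd_mul_left (Dvd.intro_left n h1)
    have d3 : q = q' := Nat.dvd_antisymm d1 d2
    subst d3
    rw [Nat.eq_of_mul_eq_mul_right a1 h1]
  have hup := st_Zbound p ℓ w s hw hs hsp hks (G.image f) ?_
  swap
  · intro z hz m hm
    obtain ⟨⟨q, n⟩, ht, rfl⟩ := Finset.mem_image.1 hz
    obtain ⟨⟨a1, a2⟩, ⟨a3, a4⟩, a5, a6⟩ := hGm _ ht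
    dsimp only at a1 a2 a3 a4 a5 a6
    have hq0 := hne q a1 (by omega)
    have hval : ∀ m ≤ s, n + m * q < 2 * k * X := by
      intro m hm
      have h1 : m * q ≤ s * X := Nat.mul_le_mul hm a2
      have h2 : 2 * k * X = k * X + s * X + X := by rw [hk]; ring
      omega
    have hone : ∀ m ≤ s, ((n + m * q : ℕ) : ZMod p) ^ w = 1 := by
      intro m hm
      have := hval m hm
      exact hker _ (q2_chi_one p χ q₁ q₂ hmin₂ _ (by omega) (by omega) (by omega) (a6 m (by omega)))
    have hadd : ∀ m : ℕ, f (q, n) + m = ((n + m * q : ℕ) : ZMod p) / q := by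
      intro m
      simp only [f]
      rw [eq_div_iff hq0, add_mul, div_mul_cancel₀ _ hq0]
      push_cast; ring
    constructor
    · rw [hadd]
      exact div_ne_zero (hne _ (by omega) (by have := hval m hm; omega)) hq0
    · have h0 := hone 0 (by omega)
      rw [hadd, div_pow, hone m hm]
      simp only [f, div_pow]
      rw [zero_mul, add_zero] at h0
      rw [h0]
  rw [Finset.card_image_of_injOn hinj, ← hkR] at hup
  -- numerical contradiction
  have hkpos : (0 : ℝ) < k := by rw [hkR]; linarith
  have hq1pos : (0 : ℝ) < q₁ := by exact_mod_cast hq₁.pos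
  have hexp : (7.38 : ℝ) ≤ Real.exp 2 := by
    have h1 := Real.exp_one_gt_d9
    have h2 : Real.exp 2 = Real.exp 1 * Real.exp 1 := by rw [← Real.exp_add]; norm_num
    rw [h2]; nlinarith
  have hkq : (k : ℝ) / q₁ ≤ 0.115 := by
    rw [div_le_iff₀ hq1pos, hkR]
    have := mul_le_mul_of_nonneg_right hexp hL0.le
    linarith
  have h1 : (k : ℝ) ^ 2 * X ^ 2 / q₁ ≤ 0.115 * (k * X ^ 2) := by
    have : (k : ℝ) ^ 2 * X ^ 2 / q₁ = (k / q₁) * (k * X ^ 2) := by ring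
    rw [this]
    exact mul_le_mul_of_nonneg_right hkq (by positivity)
  have h2 : (k : ℝ) * X ≤ (1 / 360) * (k * X ^ 2) := by
    have : (k : ℝ) * X * 360 ≤ k * X * X := mul_le_mul_of_nonneg_left hXR (by positivity)
    nlinarith
  have h3 : (k : ℝ) * (41.9 * R) ≤ k * X ^ 2 := mul_le_mul_of_nonneg_left hX1 hkpos.le
  have h4 : 0 < (k : ℝ) * R := mul_pos hkpos hRpos
  linarith
end
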